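/- arXiv:2108.13569 — 2 statements merged into one kernel-verified Lean document; each statement's English description precedes it below -/
import Mathlib

section
/- Let P ⊆ ℝ^d be a polytope with nonempty interior, d ≥ 2, whose facets are colored with colors {1,…,m} where 2 ≤ m ≤ d. Suppose that for every nonempty proper subset I ⊊ {1,…,m} of colors, the set of facets whose color lies in I is either visible or covisible. Then the set of rainbow points of the boundary of P is homeomorphic to the sphere S^{d−m}. -/
open scoped InnerProductSpace

/-- `F` is a facet of the polytope `P ⊆ ℝ^d`: a nonempty intersection of `P` with a
supporting hyperplane whose affine span has dimension `d - 1`. -/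
def IsFacet {d : ℕ} (P F : Set (EuclideanSpace ℝ (Fin d))) : Prop :=
  F.Nonempty ∧ ∃ (u : EuclideanSpace ℝ (Fin d)) (α : ℝ), u ≠ 0 ∧
    (∀ x ∈ P, ⟪u, x⟫_ℝ ≤ α) ∧ F = P ∩ {x | ⟪u, x⟫_ℝ = α} ∧
    Module.finrank ℝ (vectorSpan ℝ F) = d - 1

/-- `q ∈ P` is visible from `p` if the segment from `q` to `p` meets `P` only at `q`. -/
def VisiblePoint {d : ℕ} (P : Set (EuclideanSpace ℝ (Fin d)))
    (q p : EuclideanSpace ℝ (Fin d)) : Prop :=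
  P ∩ segment ℝ q p = {q}

/-- A facet `F` is visible from `p` if every point of its relative interior is visible. -/
def FacetVisibleFrom {d : ℕ} (P F : Set (EuclideanSpace ℝ (Fin d)))
    (p : EuclideanSpace ℝ (Fin d)) : Prop :=
  ∀ q ∈ intrinsicInterior ℝ F, VisiblePoint P q p

/-- A nonempty set `𝔉` of facets of `P` is visible if some point `p ∉ P` sees exactly the
facets belonging to `𝔉`. -/
def VisibleFacetSet {d : ℕ} (P : Set (EuclideanSpace ℝ (Fin d)))
    (𝔉 : Set (Set (EuclideanSpace ℝ (Fin d)))) : Prop :=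
  𝔉.Nonempty ∧ ∃ p, p ∉ P ∧ ∀ F, IsFacet P F → (FacetVisibleFrom P F p ↔ F ∈ 𝔉)

/-- A set of facets is covisible if the complementary set of facets is visible. -/
def CovisibleFacetSet {d : ℕ} (P : Set (EuclideanSpace ℝ (Fin d)))
    (𝔉 : Set (Set (EuclideanSpace ℝ (Fin d)))) : Prop :=
  VisibleFacetSet P {F | IsFacet P F ∧ F ∉ 𝔉}

/-!
Homogenize each facet inequality `⟪u, x⟫ ≤ α` to the linear functional `⟪u, x⟫ - α s` on `E × ℝ`.
For every color take the maximum of its functionals: the rainbow points are the slice at height `1`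
of the cone on which these `m` support functions all vanish.

A point from which exactly the facets with color in `I` are visible gives a vector on which the
functionals of the colors in `I` are positive and all others nonpositive; covisibility gives the
same for the complement of `I`. Applied to the sign pattern of a linear relation, this shows that
functionals chosen one from the convex hull of each color are always linearly independent, so the
support functions behave like independent linear functionals although they are only piecewise
linear.

This transversality yields a bi-Lipschitz map, commuting with positive scalings, from the common
zero cone of the support functions to a linear subspace of codimension `m`. The support functions
are straightened one at a time: each is joined by a homothety to a single functional of its family,
and the level sets along this path are carried to each other by flows that raise one function inside
the zero set of the others. Such a flow is only needed locally, where all but the active functionals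
can be dropped; then everything is invariant under translation in the direction of the base point,
which reduces the dimension. Central projection of the subspace gives the sphere.
-/

section ConicLipschitz

open Set Function Filter Topology NNReal

variable {E F G : Type*} [NormedAddCommGroup E] [NormedSpace ℝ E] [NormedAddCommGroup F]
  [NormedSpace ℝ F] [NormedAddCommGroup G] [NormedSpace ℝ G]

/-- A set closed under multiplication by positive reals; unlike for `ConvexCone`, convexity is not
required. -/
def IsConic (M : Set E) : Prop :=
  ∀ ⦃r : ℝ⦄, 0 < r → ∀ ⦃x⦄, x ∈ M → r • x ∈ M

theorem IsConic.smul_mem_iff {M : Set E} (hM : IsConic M) {r : ℝ} (hr : 0 < r) {x : E} :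
    r • x ∈ M ↔ x ∈ M :=
  ⟨fun h => by simpa [smul_smul, hr.ne'] using hM (inv_pos.2 hr) h, fun h => hM hr h⟩

/-- Positively homogeneous Lipschitz maps from `M` to `N`. -/
structure IsConicLip (χ : E → F) (M : Set E) (N : Set F) : Prop where
  mapsTo : MapsTo χ M N
  lipschitz : ∃ K : ℝ≥0, LipschitzOnWith K χ M
  map_smul : ∀ ⦃r : ℝ⦄, 0 < r → ∀ x ∈ M, χ (r • x) = r • χ x

/-- Mutually inverse positively homogeneous Lipschitz bijections between `M` and `N`. -/
structure IsConicEquiv (χ : E → F) (ψ : F → E) (M : Set E) (N : Set F) : Prop where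
  toFun : IsConicLip χ M N
  inv : IsConicLip ψ N M
  invOn : InvOn ψ χ M N

theorem IsConicLip.id (M : Set E) : IsConicLip id M M :=
  ⟨mapsTo_id M, ⟨1, LipschitzWith.id.lipschitzOnWith⟩, fun _ _ _ _ => rfl⟩

theorem IsConicLip.comp {χ' : F → G} {χ : E → F} {M : Set E} {N : Set F} {Q : Set G}
    (h' : IsConicLip χ' N Q) (h : IsConicLip χ M N) : IsConicLip (χ' ∘ χ) M Q where
  mapsTo := h'.mapsTo.comp h.mapsTo
  lipschitz :=
    let ⟨K', hK'⟩ := h'.lipschitz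
    let ⟨K, hK⟩ := h.lipschitz
    ⟨K' * K, hK'.comp hK h.mapsTo⟩
  map_smul r hr x hx := by simp [h.map_smul hr x hx, h'.map_smul hr _ (h.mapsTo hx)]

theorem IsConicLip.mono {χ : E → F} {M M' : Set E} {N N' : Set F} (h : IsConicLip χ M N)
    (hM : M' ⊆ M) (hN : MapsTo χ M' N') : IsConicLip χ M' N' :=
  ⟨hN, h.lipschitz.imp fun _ hK => hK.mono hM, fun _ hr x hx => h.map_smul hr x (hM hx)⟩

theorem isConicLip_continuousLinearMap (f : E →L[ℝ] F) {M : Set E} {N : Set F}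
    (hf : MapsTo f M N) : IsConicLip f M N :=
  ⟨hf, ⟨_, f.lipschitz.lipschitzOnWith⟩, fun r _ x _ => f.map_smul r x⟩

namespace IsConicEquiv

variable {χ : E → F} {ψ : F → E} {M : Set E} {N : Set F}

theorem symm (h : IsConicEquiv χ ψ M N) : IsConicEquiv ψ χ N M :=
  ⟨h.inv, h.toFun, h.invOn.symm⟩

theorem trans {χ' : F → G} {ψ' : G → F} {Q : Set G} (h : IsConicEquiv χ ψ M N)
    (h' : IsConicEquiv χ' ψ' N Q) : IsConicEquiv (χ' ∘ χ) (ψ ∘ ψ') M Q :=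
  ⟨h'.toFun.comp h.toFun, h.inv.comp h'.inv, h.invOn.comp h'.invOn h.toFun.mapsTo h'.inv.mapsTo⟩

theorem restrict (h : IsConicEquiv χ ψ M N) {M' : Set E} {N' : Set F} (hM : M' ⊆ M) (hN : N' ⊆ N)
    (hχ : MapsTo χ M' N') (hψ : MapsTo ψ N' M') : IsConicEquiv χ ψ M' N' :=
  ⟨h.toFun.mono hM hχ, h.inv.mono hN hψ, h.invOn.mono hM hN⟩

end IsConicEquiv

namespace IsConicLip

variable {f g : E → ℝ} {M : Set E}

theorem add (hf : IsConicLip f M univ) (hg : IsConicLip g M univ) :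
    IsConicLip (fun x => f x + g x) M univ where
  mapsTo _ _ := trivial
  lipschitz :=
    let ⟨K, hK⟩ := hf.lipschitz
    let ⟨K', hK'⟩ := hg.lipschitz
    ⟨K + K', hK.add hK'⟩
  map_smul r hr x hx := by simp [hf.map_smul hr x hx, hg.map_smul hr x hx, mul_add]

theorem const_mul (c : ℝ) (hf : IsConicLip f M univ) : IsConicLip (fun x => c * f x) M univ where
  mapsTo _ _ := trivial
  lipschitz := by
    obtain ⟨K, hK⟩ := hf.lipschitz
    exact ⟨‖c‖₊ * K, (lipschitzWith_smul c).comp_lipschitzOnWith hK⟩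
  map_smul r hr x hx := by simp [hf.map_smul hr x hx]; ring

theorem inf (hf : IsConicLip f M univ) (hg : IsConicLip g M univ) :
    IsConicLip (fun x => min (f x) (g x)) M univ where
  mapsTo _ _ := trivial
  lipschitz := by
    obtain ⟨K, hK⟩ := hf.lipschitz
    obtain ⟨K', hK'⟩ := hg.lipschitz
    exact ⟨_, lipschitzWith_min.comp_lipschitzOnWith (hK.prodMk hK')⟩
  map_smul r hr x hx := by
    simp [hf.map_smul hr x hx, hg.map_smul hr x hx, mul_min_of_nonneg _ _ hr.le]

theorem sum {ι : Type*} {T : Finset ι} {b : ι → E → ℝ} (hb : ∀ i ∈ T, IsConicLip (b i) M univ) :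
    IsConicLip (fun x => ∑ i ∈ T, b i x) M univ := by
  classical
  induction T using Finset.induction_on with
  | empty =>
    exact ⟨fun _ _ => trivial, ⟨0, by simp [LipschitzOnWith]⟩, by simp⟩
  | insert i T hi ih =>
    simp only [Finset.sum_insert hi]
    exact (hb i (T.mem_insert_self i)).add (ih fun j hj => hb j (Finset.mem_insert_of_mem hj))

end IsConicLip

theorem IsConicLip.norm_le {f : E → F} (hf : IsConicLip f univ univ) :
    ∃ K : ℝ≥0, ∀ x, ‖f x‖ ≤ K * ‖x‖ := by
  obtain ⟨K, hK⟩ := hf.lipschitz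
  have h0 : f 0 = 0 := by
    have := hf.map_smul two_pos 0 trivial
    rw [smul_zero, two_smul] at this
    exact left_eq_add.1 this
  exact ⟨K, fun x => by simpa [h0] using hK.norm_sub_le (x := x) (y := 0) trivial trivial⟩

end ConicLipschitz

section ShearTime

open Set Function NNReal

variable {X : Type*} [PseudoMetricSpace X] {M : Set X} {γ : ℝ → X → X} {g : X → ℝ} {L ε : ℝ≥0}

theorem lipschitzOnWith_shearTime (hL : LipschitzOnWith L (uncurry γ) (univ ×ˢ M))
    (hM : ∀ s, MapsTo (γ s) M M) (hg : LipschitzOnWith ε g M) (hεL : ε * L < 1)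
    {T : X → ℝ} (hT : ∀ y ∈ M, g (γ (-T y) y) = T y) : LipschitzOnWith 1 T M := by
  refine LipschitzOnWith.of_dist_le_mul fun y hy z hz => ?_
  have hdist : dist (T y) (T z) ≤ ↑(ε * L) * max (dist (T y) (T z)) (dist y z) := by
    calc dist (T y) (T z) = dist (g (γ (-T y) y)) (g (γ (-T z) z)) := by rw [hT y hy, hT z hz]
      _ ≤ ε * (L * dist (-T y, y) (-T z, z)) := (hg.dist_le_mul _ (hM _ hy) _ (hM _ hz)).trans
          (by gcongr; exact hL.dist_le_mul (-T y, y) ⟨trivial, hy⟩ (-T z, z) ⟨trivial, hz⟩)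
      _ = ↑(ε * L) * max (dist (T y) (T z)) (dist y z) := by
          rw [Prod.dist_eq, dist_neg_neg, NNReal.coe_mul, mul_assoc]
  have hεL' : ((ε * L : ℝ≥0) : ℝ) < 1 := by exact_mod_cast hεL
  rcases le_total (dist (T y) (T z)) (dist y z) with hle | hle
  · simpa using hle
  · rw [max_eq_left hle] at hdist
    have : dist (T y) (T z) = 0 := by nlinarith [dist_nonneg (x := T y) (y := T z)]
    simp [this]

theorem existsUnique_shearTime (hL : LipschitzOnWith L (uncurry γ) (univ ×ˢ M))
    (hM : ∀ s, MapsTo (γ s) M M) (hg : LipschitzOnWith ε g M) (hεL : ε * L < 1) {y : X}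
    (hy : y ∈ M) : ∃! t, g (γ (-t) y) = t := by
  have hcontr : ContractingWith (ε * L) fun t => g (γ (-t) y) := by
    refine ⟨hεL, LipschitzWith.of_dist_le_mul fun s t => ?_⟩
    refine (hg.dist_le_mul _ (hM _ hy) _ (hM _ hy)).trans ?_
    rw [NNReal.coe_mul, mul_assoc]
    gcongr
    simpa [Prod.dist_eq] using hL.dist_le_mul (-s, y) ⟨trivial, hy⟩ (-t, y) ⟨trivial, hy⟩
  exact ⟨_, hcontr.fixedPoint_isFixedPt, fun t ht => hcontr.fixedPoint_unique ht⟩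

end ShearTime

section ConicFlows

open Set Function Filter Topology NNReal

variable {E F : Type*} [NormedAddCommGroup E] [NormedSpace ℝ E] [NormedAddCommGroup F]
  [NormedSpace ℝ F]

/-- `f` and `f'` differ on `M` by a conic bi-Lipschitz self-bijection of `M` that moves points only
in directions of `V`. -/
def ConicConjugate (V : Submodule ℝ E) (M : Set E) (f f' : E → ℝ) : Prop :=
  ∃ χ ψ, IsConicEquiv χ ψ M M ∧ (∀ x ∈ M, f' (χ x) = f x) ∧ ∀ x ∈ M, χ x - x ∈ V

namespace ConicConjugate

variable {V : Submodule ℝ E} {M : Set E} {f f' f'' : E → ℝ}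

theorem refl (V : Submodule ℝ E) (M : Set E) (f : E → ℝ) : ConicConjugate V M f f :=
  ⟨id, id, ⟨.id M, .id M, fun _ _ => rfl, fun _ _ => rfl⟩, by simp⟩

theorem symm (h : ConicConjugate V M f f') : ConicConjugate V M f' f := by
  obtain ⟨χ, ψ, hχ, hf, hV⟩ := h
  refine ⟨ψ, χ, hχ.symm, fun x hx => ?_, fun x hx => ?_⟩
  · rw [← hf _ (hχ.inv.mapsTo hx), hχ.invOn.2 hx]
  · simpa [hχ.invOn.2 hx] using V.neg_mem (hV _ (hχ.inv.mapsTo hx))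

theorem trans (h : ConicConjugate V M f f') (h' : ConicConjugate V M f' f'') :
    ConicConjugate V M f f'' := by
  obtain ⟨χ, ψ, hχ, hf, hV⟩ := h
  obtain ⟨χ', ψ', hχ', hf', hV'⟩ := h'
  refine ⟨_, _, hχ.trans hχ', fun x hx => ?_, fun x hx => ?_⟩
  · rw [comp_apply, hf' _ (hχ.toFun.mapsTo hx), hf x hx]
  · simpa using V.add_mem (hV' _ (hχ.toFun.mapsTo hx)) (hV x hx)

theorem congr {g g' : E → ℝ} (h : ConicConjugate V M f f') (hf : EqOn f g M) (hf' : EqOn f' g' M) :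
    ConicConjugate V M g g' := by
  obtain ⟨χ, ψ, hχ, hχf, hV⟩ := h
  exact ⟨χ, ψ, hχ, fun x hx => by rw [← hf' (hχ.toFun.mapsTo hx), hχf x hx, hf hx], hV⟩

end ConicConjugate

/-- A Lipschitz flow on the conic set `M` which raises the function `h` at unit speed, moves points
only in directions of `V`, and commutes with positive scaling of space and time. -/
structure IsConicFlow (V : Submodule ℝ E) (M : Set E) (h : E → ℝ) (γ : ℝ → E → E) : Prop where
  conic : IsConic M
  mapsTo : ∀ s, MapsTo (γ s) M M
  map_zero : ∀ x ∈ M, γ 0 x = x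
  map_add : ∀ s t, ∀ x ∈ M, γ (s + t) x = γ s (γ t x)
  height : ∀ s, ∀ x ∈ M, h (γ s x) = h x + s
  sub_mem : ∀ s, ∀ x ∈ M, γ s x - x ∈ V
  lipschitz : ∃ L : ℝ≥0, LipschitzOnWith L (uncurry γ) (univ ×ˢ M)
  map_smul : ∀ ⦃r : ℝ⦄, 0 < r → ∀ s, ∀ x ∈ M, γ (r * s) (r • x) = r • γ s x

namespace IsConicFlow

variable {V : Submodule ℝ E} {M : Set E} {h : E → ℝ} {γ : ℝ → E → E}

theorem mono {V' : Submodule ℝ E} (hγ : IsConicFlow V M h γ) (hV : V ≤ V') :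
    IsConicFlow V' M h γ :=
  { hγ with sub_mem := fun s x hx => hV (hγ.sub_mem s x hx) }

theorem neg_cancel (hγ : IsConicFlow V M h γ) {x : E} (hx : x ∈ M) (s : ℝ) :
    γ (-s) (γ s x) = x := by
  rw [← hγ.map_add _ _ x hx, neg_add_cancel, hγ.map_zero x hx]

theorem transport (hγ : IsConicFlow V M h γ) {N : Set F} {χ : E → F} {ψ : F → E}
    (hχ : IsConicEquiv χ ψ M N) {k : F → ℝ} (hk : ∀ x ∈ M, k (χ x) = h x) {W : Submodule ℝ F}
    (hW : ∀ x ∈ M, ∀ y ∈ M, x - y ∈ V → χ x - χ y ∈ W) :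
    IsConicFlow W N k fun s y => χ (γ s (ψ y)) where
  conic r hr y hy := by
    have hψ := hχ.inv.mapsTo hy
    have := hχ.toFun.mapsTo (hγ.conic hr hψ)
    rwa [hχ.toFun.map_smul hr _ hψ, hχ.invOn.2 hy] at this
  mapsTo s y hy := hχ.toFun.mapsTo (hγ.mapsTo s (hχ.inv.mapsTo hy))
  map_zero y hy := by rw [hγ.map_zero _ (hχ.inv.mapsTo hy), hχ.invOn.2 hy]
  map_add s t y hy := by
    have hψ := hχ.inv.mapsTo hy
    rw [hχ.invOn.1 (hγ.mapsTo t hψ), hγ.map_add _ _ _ hψ]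
  height s y hy := by
    have hψ := hχ.inv.mapsTo hy
    rw [hk _ (hγ.mapsTo s hψ), hγ.height s _ hψ, ← hk _ hψ, hχ.invOn.2 hy]
  sub_mem s y hy := by
    have hψ := hχ.inv.mapsTo hy
    simpa [hχ.invOn.2 hy] using hW _ (hγ.mapsTo s hψ) _ hψ (hγ.sub_mem s _ hψ)
  lipschitz := by
    obtain ⟨L, hL⟩ := hγ.lipschitz
    obtain ⟨K, hK⟩ := hχ.toFun.lipschitz
    obtain ⟨K', hK'⟩ := hχ.inv.lipschitz
    have hpair := (LipschitzWith.prod_fst (α := ℝ) (β := F)).lipschitzOnWith (s := univ ×ˢ N)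
      |>.prodMk (hK'.comp LipschitzWith.prod_snd.lipschitzOnWith fun z hz => hz.2)
    exact ⟨_, hK.comp (hL.comp hpair fun z hz => ⟨trivial, hχ.inv.mapsTo hz.2⟩)
      fun z hz => hγ.mapsTo _ (hχ.inv.mapsTo hz.2)⟩
  map_smul r hr s y hy := by
    have hψ := hχ.inv.mapsTo hy
    rw [hχ.inv.map_smul hr y hy, hγ.map_smul hr s _ hψ, hχ.toFun.map_smul hr _ (hγ.mapsTo s hψ)]

theorem of_conjugate {V' : Submodule ℝ E} {k : E → ℝ} (hγ : IsConicFlow V M h γ)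
    (hk : ConicConjugate V' M h k) (hV : V' ≤ V) : ∃ γ', IsConicFlow V M k γ' := by
  obtain ⟨χ, ψ, hχ, hχk, hχV⟩ := hk
  refine ⟨_, hγ.transport hχ hχk fun x hx y hy hxy => ?_⟩
  have := V.sub_mem (V.add_mem (hV (hχV x hx)) hxy) (hV (hχV y hy))
  rwa [show χ x - x + (x - y) - (χ y - y) = χ x - χ y by abel] at this

/-- Flowing for time `g x` is invertible when `g` varies slowly along the flow: the inverse flows
back for the time `t` solving the contracting equation `t = g (γ (-t) y)`. -/
theorem exists_isConicEquiv_shear {L ε : ℝ≥0} {g : E → ℝ} (hγ : IsConicFlow V M h γ)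
    (hL : LipschitzOnWith L (uncurry γ) (univ ×ˢ M)) (hg : LipschitzOnWith ε g M)
    (hgsmul : ∀ ⦃r : ℝ⦄, 0 < r → ∀ x ∈ M, g (r • x) = r * g x) (hεL : ε * L < 1) :
    ∃ ψ, IsConicEquiv (fun x => γ (g x) x) ψ M M := by
  have hex := fun y hy => existsUnique_shearTime hL hγ.mapsTo hg hεL (y := y) hy
  choose! T hT hTuniq using hex
  have flow_lip : ∀ {τ : E → ℝ} {K : ℝ≥0}, LipschitzOnWith K τ M →
      ∃ K', LipschitzOnWith K' (fun x => γ (τ x) x) M := fun hτ =>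
    ⟨_, hL.comp (hτ.prodMk LipschitzWith.id.lipschitzOnWith) fun x hx => ⟨trivial, hx⟩⟩
  have hTlip := lipschitzOnWith_shearTime hL hγ.mapsTo hg hεL hT
  refine ⟨fun y => γ (-T y) y, ⟨fun x hx => hγ.mapsTo _ hx, flow_lip hg, fun r hr x hx => ?_⟩,
    ⟨fun x hx => hγ.mapsTo _ hx, flow_lip hTlip.neg, fun r hr y hy => ?_⟩,
    fun x hx => ?_, fun y hy => ?_⟩
  · simp only [hgsmul hr x hx, hγ.map_smul hr _ x hx]
  · have : r * T y = T (r • y) := hTuniq _ (hγ.conic hr hy) _ (by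
      simp only
      rw [← mul_neg, hγ.map_smul hr _ y hy, hgsmul hr _ (hγ.mapsTo _ hy), hT y hy])
    rw [← this, ← mul_neg, hγ.map_smul hr _ y hy]
  · have : g x = T (γ (g x) x) := hTuniq _ (hγ.mapsTo _ hx) _ (by
      simp only [hγ.neg_cancel hx])
    simp only
    rw [← this, hγ.neg_cancel hx]
  · simpa [hT y hy] using hγ.neg_cancel hy (-T y)

end IsConicFlow
end ConicFlows

section Glue

open Set Function Filter Topology NNReal

theorem mapsTo_of_dist_le {X : Type*} [MetricSpace X] {N U : Set X} {χ ψ : X → X} {φ : X → ℝ}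
    (hinv : LeftInvOn ψ χ N) (hχ : MapsTo χ N N) (hdisp : ∀ x ∈ N, dist (ψ x) x ≤ φ x)
    (hφU : ∀ x ∉ U, φ x = 0) : MapsTo χ (N ∩ U) U := by
  intro x hx
  by_contra hxU
  have : x = χ x := by
    simpa [hφU _ hxU, hinv hx.1] using hdisp _ (hχ hx.1)
  exact hxU (this ▸ hx.2)

/-- The bound `φ` on the displacement vanishes outside `U`, so there is no jump across the boundary
of `U`. -/
theorem lipschitzOnWith_piecewise_id {X : Type*} [PseudoMetricSpace X] {M N U : Set X}
    [DecidablePred (· ∈ U)] {χ : X → X} {φ : X → ℝ} {K C : ℝ≥0} (hMN : M ∩ U ⊆ N)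
    (hχ : LipschitzOnWith K χ N) (hφ : LipschitzOnWith C φ M) (hdisp : ∀ x ∈ N, dist (χ x) x ≤ φ x)
    (hφU : ∀ x ∉ U, φ x = 0) : LipschitzOnWith (max K (C + 1)) (U.piecewise χ id) M := by
  have mixed : ∀ x ∈ M, ∀ y ∈ M, x ∈ U → y ∉ U → dist (χ x) y ≤ (C + 1) * dist x y := by
    intro x hx y hy hxU hyU
    have h1 := hdisp x (hMN ⟨hx, hxU⟩)
    have h2 := (le_abs_self _).trans (hφ.dist_le_mul x hx y hy)
    have h3 := dist_triangle (χ x) x y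
    rw [hφU y hyU] at h2
    linarith
  have hK : (K : ℝ) ≤ ↑(max K (C + 1)) := by exact_mod_cast le_max_left _ _
  have hC : (C + 1 : ℝ) ≤ ↑(max K (C + 1)) := by exact_mod_cast le_max_right K (C + 1)
  refine LipschitzOnWith.of_dist_le_mul fun x hx y hy => ?_
  by_cases hxU : x ∈ U <;> by_cases hyU : y ∈ U <;> simp only [piecewise, hxU, hyU, if_true,
    if_false, id]
  · exact (hχ.dist_le_mul x (hMN ⟨hx, hxU⟩) y (hMN ⟨hy, hyU⟩)).trans (by gcongr)
  · exact (mixed x hx y hy hxU hyU).trans (by gcongr)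
  · rw [dist_comm, dist_comm x y]
    exact (mixed y hy x hx hyU hxU).trans (by gcongr)
  · nlinarith [C.coe_nonneg, dist_nonneg (x := x) (y := y)]

variable {E : Type*} [NormedAddCommGroup E] [NormedSpace ℝ E] {V : Submodule ℝ E} {M N U : Set E}

theorem isConicLip_piecewise_id [DecidablePred (· ∈ U)] {χ : E → E} {φ : E → ℝ} {C : ℝ≥0}
    (hU : IsConic U) (hMN : M ∩ U = N ∩ U) (hχ : IsConicLip χ N N) (hφ : LipschitzOnWith C φ M)
    (hdisp : ∀ x ∈ N, dist (χ x) x ≤ φ x) (hφU : ∀ x ∉ U, φ x = 0) (hχU : MapsTo χ (N ∩ U) U) :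
    IsConicLip (U.piecewise χ id) M M where
  mapsTo x hx := by
    by_cases hxU : x ∈ U
    · have hxN : x ∈ N ∩ U := hMN ▸ ⟨hx, hxU⟩
      have : χ x ∈ M ∩ U := hMN ▸ ⟨hχ.mapsTo hxN.1, hχU hxN⟩
      simpa [hxU] using this.1
    · simpa [hxU] using hx
  lipschitz :=
    let ⟨_, hK⟩ := hχ.lipschitz
    ⟨_, lipschitzOnWith_piecewise_id (hMN.trans_subset inter_subset_left) hK hφ hdisp hφU⟩
  map_smul r hr x hx := by
    by_cases hxU : x ∈ U
    · have hxN : x ∈ N ∩ U := hMN ▸ ⟨hx, hxU⟩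
      simp [hxU, hU hr hxU, hχ.map_smul hr x hxN.1]
    · simp [hxU, mt (hU.smul_mem_iff hr).1 hxU]

theorem isConicEquiv_piecewise_id [DecidablePred (· ∈ U)] {χ ψ : E → E} {φ : E → ℝ} {C : ℝ≥0}
    (hU : IsConic U) (hMN : M ∩ U = N ∩ U) (hχ : IsConicEquiv χ ψ N N)
    (hφ : LipschitzOnWith C φ M) (hχφ : ∀ x ∈ N, dist (χ x) x ≤ φ x)
    (hψφ : ∀ x ∈ N, dist (ψ x) x ≤ φ x) (hφU : ∀ x ∉ U, φ x = 0) :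
    IsConicEquiv (U.piecewise χ id) (U.piecewise ψ id) M M := by
  have hχU := mapsTo_of_dist_le hχ.invOn.1 hχ.toFun.mapsTo hψφ hφU
  have hψU := mapsTo_of_dist_le hχ.invOn.2 hχ.inv.mapsTo hχφ hφU
  refine ⟨isConicLip_piecewise_id hU hMN hχ.toFun hφ hχφ hφU hχU,
    isConicLip_piecewise_id hU hMN hχ.inv hφ hψφ hφU hψU, ?_⟩
  constructor <;> intro x hx <;> by_cases hxU : x ∈ U
  all_goals have hxN : x ∈ U → x ∈ N ∩ U := fun h => hMN ▸ ⟨hx, h⟩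
  · simp [hxU, hχU (hxN hxU), hχ.invOn.1 (hxN hxU).1]
  · simp [hxU]
  · simp [hxU, hψU (hxN hxU), hχ.invOn.2 (hxN hxU).1]
  · simp [hxU]

namespace IsConicFlow

variable {h : E → ℝ} {γ : ℝ → E → E} {g g' : E → ℝ}

theorem eventually_isConicEquiv_shear (hγ : IsConicFlow V N h γ) (hg : IsConicLip g N univ) :
    ∀ᶠ τ in 𝓝 (0 : ℝ), ∃ ψ, IsConicEquiv (fun x => γ (τ * g x) x) ψ N N := by
  obtain ⟨L, hL⟩ := hγ.lipschitz
  obtain ⟨K, hK⟩ := hg.lipschitz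
  have hsmall : ∀ᶠ τ in 𝓝 (0 : ℝ), ‖τ‖₊ * K * L < 1 := by
    have : Continuous fun τ : ℝ => ‖τ‖₊ * K * L := by fun_prop
    exact this.continuousAt.eventually_lt continuousAt_const (by simp)
  filter_upwards [hsmall] with τ hτ
  exact hγ.exists_isConicEquiv_shear hL ((lipschitzWith_smul τ).comp_lipschitzOnWith hK)
    ((hg.const_mul τ).map_smul) hτ

theorem exists_dist_shear_le (hγ : IsConicFlow V N h γ) {τ : ℝ} {ψ : E → E}
    (hψ : IsConicEquiv (fun x => γ (τ * g' x) x) ψ N N) :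
    ∃ C : ℝ≥0, ∀ x ∈ N, dist (ψ (γ (τ * g x) x)) x ≤ C * |g x - g' x| := by
  obtain ⟨L, hL⟩ := hγ.lipschitz
  obtain ⟨K, hK⟩ := hψ.inv.lipschitz
  refine ⟨K * (L * ‖τ‖₊), fun x hx => ?_⟩
  calc dist (ψ (γ (τ * g x) x)) x
      = dist (ψ (γ (τ * g x) x)) (ψ (γ (τ * g' x) x)) := by rw [hψ.invOn.1 hx]
    _ ≤ K * (L * dist (τ * g x, x) (τ * g' x, x)) :=
        (hK.dist_le_mul _ (hγ.mapsTo _ hx) _ (hγ.mapsTo _ hx)).trans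
          (by gcongr; exact hL.dist_le_mul (τ * g x, x) ⟨trivial, hx⟩ (τ * g' x, x) ⟨trivial, hx⟩)
    _ = ↑(K * (L * ‖τ‖₊)) * |g x - g' x| := by
        rw [Prod.dist_eq, dist_self, max_eq_left dist_nonneg, Real.dist_eq, ← mul_sub, abs_mul]
        push_cast
        rw [Real.norm_eq_abs]
        ring

/-- Shear by `τ g`, then undo the shear by `τ g'`. -/
theorem eventually_exists_conjugation (hγ : IsConicFlow V N h γ) (hg : IsConicLip g N univ)
    (hg' : IsConicLip g' N univ) :
    ∀ᶠ τ in 𝓝 (0 : ℝ), ∃ χ ψ, IsConicEquiv χ ψ N N ∧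
      (∀ x ∈ N, h (χ x) + τ * g' (χ x) = h x + τ * g x) ∧ (∀ x ∈ N, χ x - x ∈ V) ∧
      ∃ C : ℝ≥0, ∀ x ∈ N, dist (χ x) x ≤ C * |g x - g' x| ∧ dist (ψ x) x ≤ C * |g x - g' x| := by
  filter_upwards [hγ.eventually_isConicEquiv_shear hg, hγ.eventually_isConicEquiv_shear hg']
    with τ ⟨ψ₁, h₁⟩ ⟨ψ₂, h₂⟩
  obtain ⟨C₁, hC₁⟩ := hγ.exists_dist_shear_le (g := g') h₁
  obtain ⟨C₂, hC₂⟩ := hγ.exists_dist_shear_le (g := g) h₂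
  have hmem : ∀ x ∈ N, ψ₂ (γ (τ * g x) x) ∈ N := fun x hx => h₂.inv.mapsTo (hγ.mapsTo _ hx)
  have hcancel : ∀ x ∈ N, γ (τ * g' (ψ₂ (γ (τ * g x) x))) (ψ₂ (γ (τ * g x) x)) = γ (τ * g x) x :=
    fun x hx => h₂.invOn.2 (hγ.mapsTo _ hx)
  refine ⟨_, _, h₁.trans h₂.symm, fun x hx => ?_, fun x hx => ?_,
    max C₁ C₂, fun x hx => ⟨(hC₂ x hx).trans ?_, (hC₁ x hx).trans ?_⟩⟩
  · simp only [comp_apply]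
    rw [← hγ.height _ _ (hmem x hx), hcancel x hx, hγ.height _ x hx]
  · have := V.sub_mem (hγ.sub_mem (τ * g x) x hx)
      (hγ.sub_mem (τ * g' (ψ₂ (γ (τ * g x) x))) _ (hmem x hx))
    rw [hcancel x hx] at this
    simpa using this
  · gcongr
    exact le_max_right _ _
  · rw [abs_sub_comm]
    gcongr
    exact le_max_left _ _

theorem eventually_conicConjugate_of_eqOn (hγ : IsConicFlow V N h γ) (hU : IsConic U)
    (hMN : M ∩ U = N ∩ U) {f : E → ℝ} (hf : EqOn f h (N ∩ U)) (hg : IsConicLip g univ univ)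
    (hg' : IsConicLip g' univ univ) (hgg' : EqOn g g' Uᶜ) :
    ∀ᶠ τ in 𝓝 (0 : ℝ), ConicConjugate V M (fun x => f x + τ * g x) (fun x => f x + τ * g' x) := by
  classical
  filter_upwards [hγ.eventually_exists_conjugation (hg.mono (subset_univ N) (mapsTo_univ _ _))
    (hg'.mono (subset_univ N) (mapsTo_univ _ _))] with τ ⟨χ, ψ, hχ, hval, hV, C, hC⟩
  obtain ⟨K, hK⟩ := (hg.add (hg'.const_mul (-1))).lipschitz
  have hφ : LipschitzOnWith (‖(C : ℝ)‖₊ * (1 * K)) (fun x => (C : ℝ) * |g x - g' x|) M := by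
    have := (lipschitzWith_smul (C : ℝ)).comp_lipschitzOnWith
      ((lipschitzWith_one_norm (E := ℝ)).comp_lipschitzOnWith (hK.mono (subset_univ M)))
    simpa [comp_def, ← sub_eq_add_neg] using this
  have hequiv := isConicEquiv_piecewise_id hU hMN hχ hφ (fun x hx => (hC x hx).1)
    (fun x hx => (hC x hx).2) fun x hx => by simp [hgg' hx]
  have hχU : MapsTo χ (N ∩ U) U := mapsTo_of_dist_le hχ.invOn.1 hχ.toFun.mapsTo
    (fun x hx => (hC x hx).2) fun x hx => by simp [hgg' hx]
  refine ⟨_, _, hequiv, fun x hx => ?_, fun x hx => ?_⟩ <;> by_cases hxU : x ∈ U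
  all_goals have hxN : x ∈ U → x ∈ N ∩ U := fun h => hMN ▸ ⟨hx, h⟩
  · have hmem : χ x ∈ N ∩ U := ⟨hχ.toFun.mapsTo (hxN hxU).1, hχU (hxN hxU)⟩
    simp only [piecewise_eq_of_mem _ _ _ hxU, hf hmem, hf (hxN hxU), hval x (hxN hxU).1]
  · simp [hxU, hgg' hxU]
  · simpa [hxU] using hV x (hxN hxU).1
  · simp [hxU]

end IsConicFlow

end Glue

section Globalize

open Set Function Filter Topology NNReal

variable {E : Type*} [NormedAddCommGroup E] [NormedSpace ℝ E] {V : Submodule ℝ E} {M : Set E}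
  {f : E → ℝ} {x₀ : E}

/-- A conic bump function: positive exactly on the cone around the ray of the unit vector `x₀`
formed by the `x ≠ 0` whose direction `‖x‖⁻¹ • x` is within `r` of `x₀`. -/
noncomputable def coneBump (x₀ : E) (r : ℝ) (x : E) : ℝ :=
  max 0 (r * ‖x‖ - ‖x - ‖x‖ • x₀‖)

theorem coneBump_nonneg (x₀ : E) (r : ℝ) (x : E) : 0 ≤ coneBump x₀ r x :=
  le_max_left _ _

theorem coneBump_self (hx₀ : ‖x₀‖ = 1) {r : ℝ} (hr : 0 ≤ r) : coneBump x₀ r x₀ = r := by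
  simp [coneBump, hx₀, hr]

theorem isConicLip_norm : IsConicLip (fun x : E => ‖x‖) univ univ where
  mapsTo _ _ := trivial
  lipschitz := ⟨1, lipschitzWith_one_norm.lipschitzOnWith⟩
  map_smul r hr x _ := by simp [norm_smul, abs_of_pos hr]

theorem isConicLip_coneBump (x₀ : E) (r : ℝ) : IsConicLip (coneBump x₀ r) univ univ := by
  have hproj : IsConicLip (fun x : E => x - ‖x‖ • x₀) univ univ :=
    ⟨fun _ _ => trivial, ⟨_, LipschitzWith.id.lipschitzOnWith.sub
      (((ContinuousLinearMap.toSpanSingleton ℝ x₀).lipschitz.comp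
        lipschitzWith_one_norm).lipschitzOnWith (s := univ))⟩,
      fun s hs x _ => by simp [norm_smul, abs_of_pos hs, mul_smul, smul_sub]⟩
  have hpos : IsConicLip (fun t : ℝ => max 0 t) univ univ :=
    ⟨fun _ _ => trivial, ⟨1, (LipschitzWith.id.const_max 0).lipschitzOnWith⟩,
      fun s hs t _ => by simp [mul_max_of_nonneg _ _ hs.le]⟩
  change IsConicLip (fun x => max 0 (r * ‖x‖ - ‖x - ‖x‖ • x₀‖)) univ univ
  simpa [comp_def, Pi.sub_def, ← sub_eq_add_neg] using
    hpos.comp ((isConicLip_norm.const_mul r).add ((isConicLip_norm.comp hproj).const_mul (-1)))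

theorem dist_lt_of_coneBump_pos {r : ℝ} {x : E} (hx : 0 < coneBump x₀ r x) :
    0 < ‖x‖ ∧ dist (‖x‖⁻¹ • x) x₀ < r := by
  have hlt : ‖x - ‖x‖ • x₀‖ < r * ‖x‖ := by simpa [coneBump] using hx
  have hx0 : 0 < ‖x‖ := norm_pos_iff.2 fun h => by simp [h] at hlt
  refine ⟨hx0, ?_⟩
  have hdist : ‖x‖⁻¹ • x - x₀ = ‖x‖⁻¹ • (x - ‖x‖ • x₀) := by
    rw [smul_sub, inv_smul_smul₀ hx0.ne']
  rwa [dist_eq_norm, hdist, norm_smul, norm_inv, norm_norm, inv_mul_lt_iff₀ hx0, mul_comm]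

/-- Near `x₀`, the set `M` and the function `f` agree with a conic set and a homogeneous function
carrying a flow. -/
def HasLocalConicFlow (V : Submodule ℝ E) (M : Set E) (f : E → ℝ) (x₀ : E) : Prop :=
  ∃ N h γ, IsConicFlow V N h γ ∧ (∀ ⦃r : ℝ⦄, 0 < r → ∀ x ∈ N, h (r • x) = r * h x) ∧
    ∀ᶠ x in 𝓝 x₀, (x ∈ M ↔ x ∈ N) ∧ (x ∈ M → f x = h x)

theorem HasLocalConicFlow.exists_conicConjugate (hM : IsConic M)
    (hf : ∀ ⦃r : ℝ⦄, 0 < r → ∀ x ∈ M, f (r • x) = r * f x) (h : HasLocalConicFlow V M f x₀) :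
    ∃ r > 0, ∀ g g' : E → ℝ, IsConicLip g univ univ → IsConicLip g' univ univ →
      (∀ x, coneBump x₀ r x = 0 → g x = g' x) →
      ∀ᶠ τ in 𝓝 (0 : ℝ), ConicConjugate V M (fun x => f x + τ * g x) (fun x => f x + τ * g' x) := by
  obtain ⟨N, h, γ, hγ, hh, hloc⟩ := h
  obtain ⟨r, hr, hball⟩ := Metric.eventually_nhds_iff.1 hloc
  have hcone : ∀ x, 0 < coneBump x₀ r x → (x ∈ M ↔ x ∈ N) ∧ (x ∈ M → f x = h x) := by
    intro x hx
    obtain ⟨hx0, hdist⟩ := dist_lt_of_coneBump_pos hx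
    have hinv := inv_pos.2 hx0
    obtain ⟨hiff, heq⟩ := hball hdist
    have hiff' : x ∈ M ↔ x ∈ N := by
      rwa [hM.smul_mem_iff hinv, hγ.conic.smul_mem_iff hinv] at hiff
    refine ⟨hiff', fun hxM => mul_left_cancel₀ hinv.ne' ?_⟩
    rw [← hf hinv x hxM, ← hh hinv x (hiff'.1 hxM), heq (hM hinv hxM)]
  refine ⟨r, hr, fun g g' hg hg' hgg' => ?_⟩
  refine hγ.eventually_conicConjugate_of_eqOn (U := {x | 0 < coneBump x₀ r x}) ?_ ?_ ?_ hg hg' ?_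
  · intro s hs x hx
    rw [mem_ofPred_eq, (isConicLip_coneBump x₀ r).map_smul hs x trivial]
    exact mul_pos hs hx
  · ext x
    exact and_congr_left fun hx => (hcone x hx).1
  · exact fun x hx => (hcone x hx.2).2 ((hcone x hx.2).1.2 hx.1)
  · exact fun x hx => hgg' x (le_antisymm (not_lt.1 hx) (coneBump_nonneg _ _ _))

theorem exists_finset_le_sum_coneBump [FiniteDimensional ℝ E] (hM : IsConic M) (hMc : IsClosed M)
    {r : E → ℝ} (hr : ∀ x₀ ∈ M, ‖x₀‖ = 1 → 0 < r x₀) {K : ℝ} (hK : 0 ≤ K) :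
    ∃ T : Finset E, (∀ x₀ ∈ T, x₀ ∈ M ∧ ‖x₀‖ = 1) ∧
      ∀ x ∈ M, K * ‖x‖ ≤ ∑ x₀ ∈ T, (K + 1) / r x₀ * coneBump x₀ (r x₀) x := by
  let b : E → E → ℝ := fun x₀ x => (K + 1) / r x₀ * coneBump x₀ (r x₀) x
  have hb : ∀ x₀, IsConicLip (b x₀) univ univ := fun x₀ => (isConicLip_coneBump x₀ _).const_mul _
  have hcover : ∀ x₀ ∈ M ∩ Metric.sphere 0 1, {x | K * ‖x‖ < b x₀ x} ∈ 𝓝 x₀ := by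
    rintro x₀ ⟨hx₀, hnorm⟩
    rw [mem_sphere_zero_iff_norm] at hnorm
    obtain ⟨L, hL⟩ := (hb x₀).lipschitz
    refine (continuous_const.mul continuous_norm).continuousAt.eventually_lt
      (lipschitzOnWith_univ.1 hL).continuous.continuousAt ?_
    simp [b, hnorm, coneBump_self hnorm (hr x₀ hx₀ hnorm).le, (hr x₀ hx₀ hnorm).ne']
  obtain ⟨T, hTM, hT⟩ := ((isCompact_sphere 0 1).inter_left hMc).elim_nhds_subcover _ hcover
  have hTmem : ∀ x₀ ∈ T, x₀ ∈ M ∧ ‖x₀‖ = 1 := by simpa using hTM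
  have hb0 : ∀ x₀ ∈ T, ∀ x, 0 ≤ b x₀ x := fun x₀ hx₀ x =>
    mul_nonneg (div_nonneg (by positivity) (hr x₀ (hTmem x₀ hx₀).1 (hTmem x₀ hx₀).2).le)
      (coneBump_nonneg _ _ _)
  refine ⟨T, hTmem, fun x hx => ?_⟩
  rcases (norm_nonneg x).eq_or_lt with h0 | h0
  · rw [← h0, mul_zero]
    exact Finset.sum_nonneg fun x₀ hx₀ => hb0 x₀ hx₀ x
  have hmem : ‖x‖⁻¹ • x ∈ M ∩ Metric.sphere 0 1 :=
    ⟨hM (inv_pos.2 h0) hx, by simp [norm_smul, h0.ne']⟩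
  obtain ⟨x₀, hx₀, hlt⟩ := mem_iUnion₂.1 (hT hmem)
  rw [mem_ofPred_eq, (hb x₀).map_smul (inv_pos.2 h0) x trivial, norm_smul, smul_eq_mul,
    norm_inv, norm_norm, mul_left_comm] at hlt
  exact (lt_of_mul_lt_mul_left hlt (inv_nonneg.2 h0.le)).le.trans
    (Finset.single_le_sum (f := fun x₀ => b x₀ x) (fun y hy => hb0 y hy x) hx₀)

/-- Add `τ D` in finitely many steps, truncating `D` by partial sums of large bumps that cover the
unit sphere of `M`; each step changes the function only on one of the local cones. -/
theorem eventually_conicConjugate_add [FiniteDimensional ℝ E] (hM : IsConic M) (hMc : IsClosed M)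
    (hf : ∀ ⦃r : ℝ⦄, 0 < r → ∀ x ∈ M, f (r • x) = r * f x) {D : E → ℝ}
    (hD : IsConicLip D univ univ) (hD0 : ∀ x, 0 ≤ D x)
    (hloc : ∀ x₀ ∈ M, ‖x₀‖ = 1 → HasLocalConicFlow V M f x₀) :
    ∀ᶠ τ in 𝓝 (0 : ℝ), ConicConjugate V M f fun x => f x + τ * D x := by
  classical
  obtain ⟨K, hK⟩ := hD.norm_le
  have hex := fun x₀ hx₀ hx₀1 => (hloc x₀ hx₀ hx₀1).exists_conicConjugate hM hf
  choose! r hr hconj using hex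
  let b : E → E → ℝ := fun x₀ x => (K + 1) / r x₀ * coneBump x₀ (r x₀) x
  have hDb : ∀ S : Finset E, IsConicLip (fun x => min (D x) (∑ x₀ ∈ S, b x₀ x)) univ univ :=
    fun S => hD.inf (.sum fun x₀ _ => (isConicLip_coneBump x₀ _).const_mul _)
  have hpartial : ∀ S : Finset E, (∀ x₀ ∈ S, x₀ ∈ M ∧ ‖x₀‖ = 1) → ∀ᶠ τ in 𝓝 (0 : ℝ),
      ConicConjugate V M f fun x => f x + τ * min (D x) (∑ x₀ ∈ S, b x₀ x) := by
    intro S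
    induction S using Finset.induction_on with
    | empty =>
      intro _
      filter_upwards with τ
      exact (ConicConjugate.refl V M f).congr (fun _ _ => rfl) fun x _ => by simp [hD0 x]
    | insert x₀ S hx₀ ih =>
      intro hS
      obtain ⟨hx₀M, hx₀1⟩ := hS x₀ (S.mem_insert_self x₀)
      filter_upwards [ih fun y hy => hS y (Finset.mem_insert_of_mem hy),
        hconj x₀ hx₀M hx₀1 _ _ (hDb S) (hDb (insert x₀ S)) fun x hx => by
          simp [Finset.sum_insert hx₀, b, hx]] with τ hτ hτ'
      exact hτ.trans hτ'
  obtain ⟨T, hTM, hT⟩ := exists_finset_le_sum_coneBump hM hMc hr K.coe_nonneg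
  filter_upwards [hpartial T hTM] with τ hτ
  refine hτ.congr (fun _ _ => rfl) fun x hx => ?_
  have hmin : min (D x) (∑ x₀ ∈ T, b x₀ x) = D x :=
    min_eq_left ((le_abs_self _).trans ((hK x).trans (hT x hx)))
  simp only [hmin]

theorem conicConjugate_add_of_local [FiniteDimensional ℝ E] (hM : IsConic M) (hMc : IsClosed M)
    (hf : IsConicLip f univ univ) {D : E → ℝ} (hD : IsConicLip D univ univ) (hD0 : ∀ x, 0 ≤ D x)
    (hloc : ∀ t ∈ Icc (0 : ℝ) 1, ∀ x₀ ∈ M, ‖x₀‖ = 1 →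
      HasLocalConicFlow V M (fun x => f x + t * D x) x₀) :
    ConicConjugate V M f fun x => f x + D x := by
  have hpath : ∀ t ∈ Icc (0 : ℝ) 1, ∀ᶠ s in 𝓝 t,
      ConicConjugate V M (fun x => f x + t * D x) fun x => f x + s * D x := by
    intro t ht
    have hlocal := eventually_conicConjugate_add hM hMc
      (fun r hr x _ => (hf.add (hD.const_mul t)).map_smul hr x trivial) hD hD0 (hloc t ht)
    have hsub : Tendsto (fun s => s - t) (𝓝 t) (𝓝 0) := by
      simpa using (continuous_sub_right t).tendsto t
    filter_upwards [hsub.eventually hlocal] with s hs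
    exact hs.congr (fun _ _ => rfl) fun x _ => by ring
  have h01 : ConicConjugate V M (fun x => f x + (0 : ℝ) * D x) fun x => f x + (1 : ℝ) * D x :=
    isPreconnected_Icc.induction₂
      (fun t s => ConicConjugate V M (fun x => f x + t * D x) fun x => f x + s * D x)
      (fun t ht => (hpath t ht).filter_mono nhdsWithin_le_nhds) (fun _ _ _ _ _ _ => .trans)
      (fun _ _ _ _ => .symm) (left_mem_Icc.2 zero_le_one) (right_mem_Icc.2 zero_le_one)
  simpa using h01

end Globalize

section FlowConstructions

open Set Function NNReal

variable {E : Type*} [NormedAddCommGroup E] [NormedSpace ℝ E] {V : Submodule ℝ E} {M : Set E}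
  {h : E → ℝ} {x₀ : E}

theorem isConicFlow_translation (hM : IsConic M) (hx₀ : x₀ ∈ V) {c : ℝ} (hc : c ≠ 0)
    (hadd : ∀ (s : ℝ), ∀ x ∈ M, x + s • x₀ ∈ M)
    (hval : ∀ (s : ℝ), ∀ x ∈ M, h (x + s • x₀) = h x + s * c) :
    IsConicFlow V M h fun s x => x + (s / c) • x₀ where
  conic := hM
  mapsTo s x hx := hadd _ x hx
  map_zero x _ := by simp
  map_add s t x _ := by rw [add_div, add_smul, add_assoc, add_comm ((s / c) • x₀)]
  height s x hx := by rw [hval _ x hx, div_mul_cancel₀ s hc]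
  sub_mem s x _ := by simpa using V.smul_mem _ hx₀
  lipschitz := by
    let Φ : ℝ × E →L[ℝ] E := .snd ℝ ℝ E + (ContinuousLinearMap.toSpanSingleton ℝ (c⁻¹ • x₀)).comp
      (.fst ℝ ℝ E)
    have hΦ : uncurry (fun s x => x + (s / c) • x₀) = Φ := by
      ext z
      simp [uncurry, Φ, smul_smul, div_eq_mul_inv]
    exact ⟨_, hΦ ▸ Φ.lipschitz.lipschitzOnWith⟩
  map_smul r _ s x _ := by rw [smul_add, smul_smul, mul_div_assoc]

theorem IsConicFlow.extend {N : Set E} {γ : ℝ → E → E} (hγ : IsConicFlow V N h γ)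
    {ℓ : E →L[ℝ] ℝ} (hℓ : ℓ x₀ = 1) (hNℓ : ∀ x ∈ N, ℓ x = 0)
    (hM : ∀ x, x ∈ M ↔ x - ℓ x • x₀ ∈ N) {k : E → ℝ} {c : ℝ}
    (hk : ∀ x ∈ N, ∀ t : ℝ, k (x + t • x₀) = h x + t * c) :
    IsConicFlow V M k fun s x => γ s (x - ℓ x • x₀) + ℓ x • x₀ := by
  have hproj : ∀ x ∈ M, x - ℓ x • x₀ ∈ N := fun x => (hM x).1
  have hℓγ : ∀ s, ∀ x ∈ M, ℓ (γ s (x - ℓ x • x₀) + ℓ x • x₀) = ℓ x := fun s x hx => by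
    simp [hNℓ _ (hγ.mapsTo s (hproj x hx)), hℓ]
  have hsmul : ∀ (r : ℝ) x, r • x - ℓ (r • x) • x₀ = r • (x - ℓ x • x₀) := fun r x => by
    simp [smul_sub, mul_smul]
  have hmaps : ∀ s, MapsTo (fun x => γ s (x - ℓ x • x₀) + ℓ x • x₀) M M := fun s x hx => by
    rw [hM, hℓγ s x hx, add_sub_cancel_right]
    exact hγ.mapsTo s (hproj x hx)
  refine ⟨fun r hr x hx => ?_, hmaps, fun x hx => ?_, fun s t x hx => ?_, fun s x hx => ?_,
    fun s x hx => ?_, ?_, fun r hr s x hx => ?_⟩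
  · rw [hM, hsmul]
    exact hγ.conic hr (hproj x hx)
  · rw [hγ.map_zero _ (hproj x hx), sub_add_cancel]
  · simp only [hℓγ t x hx, add_sub_cancel_right, hγ.map_add s t _ (hproj x hx)]
  · rw [hk _ (hγ.mapsTo s (hproj x hx)), hγ.height s _ (hproj x hx), add_right_comm,
      ← hk _ (hproj x hx), sub_add_cancel]
  · rw [add_sub_assoc, ← neg_sub x, ← sub_eq_add_neg]
    exact hγ.sub_mem s _ (hproj x hx)
  · obtain ⟨L, hL⟩ := hγ.lipschitz
    have hline := (ContinuousLinearMap.toSpanSingleton ℝ x₀).lipschitz.comp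
      (ℓ.lipschitz.comp (LipschitzWith.prod_snd (α := ℝ) (β := E)))
    have hpair :=
      (LipschitzWith.prod_fst (α := ℝ) (β := E)).prodMk (LipschitzWith.prod_snd.sub hline)
    exact ⟨_, (hL.comp (hpair.lipschitzOnWith (s := univ ×ˢ M)) fun z hz =>
      ⟨trivial, hproj _ hz.2⟩).add hline.lipschitzOnWith⟩
  · rw [hsmul, hγ.map_smul hr s _ (hproj x hx), _root_.map_smul, smul_add, smul_eq_mul, mul_smul]

end FlowConstructions

section SupportFunctions

open Set Filter Topology NNReal

variable {E : Type*} [NormedAddCommGroup E] [NormedSpace ℝ E] {A : Finset (E →L[ℝ] ℝ)}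
  {a u : E →L[ℝ] ℝ} {x x₀ : E}

/-- The support function `x ↦ max {u x | u ∈ A}` of a finite set of functionals (with the junk
value `0` for empty `A`). -/
noncomputable def supportFun (A : Finset (E →L[ℝ] ℝ)) (x : E) : ℝ :=
  sSup ((fun u : E →L[ℝ] ℝ => u x) '' A)

theorem le_supportFun (hu : u ∈ A) (x : E) : u x ≤ supportFun A x :=
  le_csSup (A.finite_toSet.image _).bddAbove ⟨u, hu, rfl⟩

theorem exists_eq_supportFun (hA : A.Nonempty) (x : E) : ∃ u ∈ A, u x = supportFun A x :=
  (hA.to_set.image fun u : E →L[ℝ] ℝ => u x).csSup_mem (A.finite_toSet.image _)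

theorem supportFun_eq_iff (hA : A.Nonempty) {c : ℝ} :
    supportFun A x = c ↔ (∀ u ∈ A, u x ≤ c) ∧ ∃ u ∈ A, u x = c := by
  obtain ⟨v, hv, hvx⟩ := exists_eq_supportFun hA x
  refine ⟨?_, fun ⟨hle, u, hu, hux⟩ => le_antisymm (hvx ▸ hle v hv) (hux ▸ le_supportFun hu x)⟩
  rintro rfl
  exact ⟨fun u hu => le_supportFun hu x, v, hv, hvx⟩

@[simp]
theorem supportFun_singleton (a : E →L[ℝ] ℝ) : supportFun {a} = a := by
  ext x
  simp [supportFun]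

theorem isConicLip_supportFun (hA : A.Nonempty) : IsConicLip (supportFun A) univ univ where
  mapsTo _ _ := trivial
  lipschitz := by
    refine ⟨A.sup fun u => ‖u‖₊, (LipschitzWith.of_le_add_mul _ fun x y => ?_).lipschitzOnWith⟩
    obtain ⟨u, hu, hux⟩ := exists_eq_supportFun hA x
    have hlip := (le_abs_self _).trans (u.lipschitz.dist_le_mul x y)
    have hnorm : ‖u‖₊ ≤ A.sup fun u => ‖u‖₊ := Finset.le_sup (f := fun u => ‖u‖₊) hu
    have := mul_le_mul_of_nonneg_right (NNReal.coe_le_coe.2 hnorm) (dist_nonneg (x := x) (y := y))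
    linarith [le_supportFun hu y]
  map_smul r hr x _ := by
    obtain ⟨u, hu, hux⟩ := exists_eq_supportFun hA x
    refine (supportFun_eq_iff hA).2 ⟨fun v hv => ?_, u, hu, by simp [hux]⟩
    simpa using mul_le_mul_of_nonneg_left (le_supportFun hv x) hr.le

theorem continuous_supportFun (hA : A.Nonempty) : Continuous (supportFun A) :=
  let ⟨_, hK⟩ := (isConicLip_supportFun hA).lipschitz
  (lipschitzOnWith_univ.1 hK).continuous

theorem supportFun_add_smul (hA : A.Nonempty) {c : ℝ} (hc : ∀ u ∈ A, u x₀ = c) (x : E) (t : ℝ) :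
    supportFun A (x + t • x₀) = supportFun A x + t * c := by
  obtain ⟨u, hu, hux⟩ := exists_eq_supportFun hA x
  refine (supportFun_eq_iff hA).2 ⟨fun v hv => ?_, u, hu, by simp [hux, hc u hu]⟩
  simpa [hc v hv] using le_supportFun hv x

/-- The functionals of `A` attaining the maximum at `x₀`. -/
noncomputable def activeSet (A : Finset (E →L[ℝ] ℝ)) (x₀ : E) : Finset (E →L[ℝ] ℝ) :=
  {u ∈ A | u x₀ = supportFun A x₀}

theorem activeSet_subset (A : Finset (E →L[ℝ] ℝ)) (x₀ : E) : activeSet A x₀ ⊆ A :=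
  Finset.filter_subset _ _

theorem apply_of_mem_activeSet (hu : u ∈ activeSet A x₀) : u x₀ = supportFun A x₀ :=
  (Finset.mem_filter.1 hu).2

theorem activeSet_nonempty (hA : A.Nonempty) (x₀ : E) : (activeSet A x₀).Nonempty :=
  let ⟨u, hu, hux⟩ := exists_eq_supportFun hA x₀
  ⟨u, Finset.mem_filter.2 ⟨hu, hux⟩⟩

theorem eventually_supportFun_eq_activeSet (hA : A.Nonempty) (x₀ : E) :
    ∀ᶠ x in 𝓝 x₀, supportFun A x = supportFun (activeSet A x₀) x := by
  have hinactive : ∀ᶠ x in 𝓝 x₀, ∀ u ∈ A, u ∉ activeSet A x₀ → u x < supportFun A x := by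
    refine (eventually_all_finset A).2 fun u hu => ?_
    by_cases hact : u ∈ activeSet A x₀
    · simp [hact]
    · have hlt : u x₀ < supportFun A x₀ :=
        (le_supportFun hu x₀).lt_of_ne fun h => hact (Finset.mem_filter.2 ⟨hu, h⟩)
      filter_upwards [u.continuous.continuousAt.eventually_lt
        (continuous_supportFun hA).continuousAt hlt] with x hx _ using hx
  filter_upwards [hinactive] with x hx
  obtain ⟨u, hu, hux⟩ := exists_eq_supportFun hA x
  have hact : u ∈ activeSet A x₀ := by_contra fun h => (hx u hu h).ne hux
  exact ((supportFun_eq_iff (activeSet_nonempty hA x₀)).2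
    ⟨fun v hv => le_supportFun (activeSet_subset A x₀ hv) x, u, hact, hux⟩).symm

open scoped Classical in
/-- The family `A` shrunk towards the functional `a`: at `t = 0` only `a` remains. -/
noncomputable def homothetySet (a : E →L[ℝ] ℝ) (t : ℝ) (A : Finset (E →L[ℝ] ℝ)) :
    Finset (E →L[ℝ] ℝ) :=
  A.image (AffineMap.lineMap a · t)

theorem mem_homothetySet {t : ℝ} :
    u ∈ homothetySet a t A ↔ ∃ v ∈ A, AffineMap.lineMap a v t = u := by
  simp [homothetySet]

theorem homothetySet_subset_convexHull (ha : a ∈ A) {t : ℝ} (ht : t ∈ Icc (0 : ℝ) 1) :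
    (homothetySet a t A : Set (E →L[ℝ] ℝ)) ⊆ convexHull ℝ A := by
  intro v hv
  obtain ⟨u, hu, rfl⟩ := mem_homothetySet.1 (Finset.mem_coe.1 hv)
  exact (convex_convexHull ℝ _).lineMap_mem (subset_convexHull ℝ _ ha) (subset_convexHull ℝ _ hu) ht

theorem supportFun_homothetySet (hA : A.Nonempty) {t : ℝ} (ht : 0 ≤ t) (x : E) :
    supportFun (homothetySet a t A) x = a x + t * (supportFun A x - a x) := by
  obtain ⟨u, hu, hux⟩ := exists_eq_supportFun hA x
  have happly : ∀ v : E →L[ℝ] ℝ, AffineMap.lineMap a v t x = a x + t * (v x - a x) := fun v => by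
    simp [AffineMap.lineMap_apply, add_comm]
  refine (supportFun_eq_iff ⟨_, mem_homothetySet.2 ⟨u, hu, rfl⟩⟩).2 ⟨fun w hw => ?_, _,
    mem_homothetySet.2 ⟨u, hu, rfl⟩, by rw [happly, hux]⟩
  obtain ⟨v, hv, rfl⟩ := mem_homothetySet.1 hw
  rw [happly]
  gcongr
  exact le_supportFun hv x

end SupportFunctions

section Transversality

open Set Filter Topology

variable {E ι : Type*} [NormedAddCommGroup E] [NormedSpace ℝ E] {V W : Submodule ℝ E}
  {A A' : ι → Finset (E →L[ℝ] ℝ)} {J : Finset ι} {i l : ι} {x₀ : E}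

/-- The points of the subspace `W` at which all support functions of the families `A j`, `j ∈ J`,
vanish. -/
def supportZeros (W : Submodule ℝ E) (A : ι → Finset (E →L[ℝ] ℝ)) (J : Finset ι) : Set E :=
  {x | x ∈ W ∧ ∀ j ∈ J, supportFun (A j) x = 0}

theorem mem_supportZeros_insert [DecidableEq ι] {x : E} :
    x ∈ supportZeros W A (insert i J) ↔ supportFun (A i) x = 0 ∧ x ∈ supportZeros W A J := by
  simp only [supportZeros, mem_ofPred_eq, Finset.forall_mem_insert]
  tauto

theorem supportZeros_congr (h : ∀ j ∈ J, A j = A' j) :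
    supportZeros W A J = supportZeros W A' J := by
  ext x
  exact and_congr_right fun _ => forall₂_congr fun j hj => by rw [h j hj]

theorem isConic_supportZeros (hA : ∀ j ∈ J, (A j).Nonempty) : IsConic (supportZeros W A J) :=
  fun r hr x hx => ⟨W.smul_mem r hx.1, fun j hj => by
    rw [(isConicLip_supportFun (hA j hj)).map_smul hr x trivial, hx.2 j hj, smul_zero]⟩

theorem isClosed_supportZeros [FiniteDimensional ℝ E] (hA : ∀ j ∈ J, (A j).Nonempty) :
    IsClosed (supportZeros W A J) := by
  have hset : supportZeros W A J = (W : Set E) ∩ ⋂ j ∈ J, {x | supportFun (A j) x = 0} := by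
    ext x
    simp [supportZeros]
  rw [hset]
  exact W.closed_of_finiteDimensional.inter (isClosed_biInter fun j hj =>
    isClosed_eq (continuous_supportFun (hA j hj)) continuous_const)

/-- Any choice of one functional from the convex hull of each family `A j`, `j ∈ J`, restricts to
a linearly independent system on `V`. -/
def IsTransversal (V : Submodule ℝ E) (A : ι → Finset (E →L[ℝ] ℝ)) (J : Finset ι) : Prop :=
  ∀ u : ι → E →L[ℝ] ℝ, (∀ j ∈ J, u j ∈ convexHull ℝ (A j : Set (E →L[ℝ] ℝ))) →
    ∀ a : ι → ℝ, (∀ v ∈ V, ∑ j ∈ J, a j * u j v = 0) → ∀ j ∈ J, a j = 0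

theorem apply_eq_of_mem_convexHull {S : Set (E →L[ℝ] ℝ)} {c : ℝ} (hS : ∀ u ∈ S, u x₀ = c)
    {u : E →L[ℝ] ℝ} (hu : u ∈ convexHull ℝ S) : u x₀ = c :=
  convexHull_min (t := {u : E →L[ℝ] ℝ | u x₀ = c}) hS
    (convex_hyperplane (ContinuousLinearMap.apply ℝ ℝ x₀).isLinear c) hu

namespace IsTransversal

theorem mono (h : IsTransversal V A J)
    (hA : ∀ j ∈ J, (A' j : Set (E →L[ℝ] ℝ)) ⊆ convexHull ℝ (A j : Set (E →L[ℝ] ℝ))) :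
    IsTransversal V A' J :=
  fun u hu => h u fun j hj => convexHull_min (hA j hj) (convex_convexHull ℝ _) (hu j hj)

theorem exists_apply_ne_zero (h : IsTransversal V A J) (hA : ∀ j ∈ J, (A j).Nonempty)
    (hi : i ∈ J) {a : E →L[ℝ] ℝ} (ha : a ∈ A i) : ∃ v ∈ V, a v ≠ 0 := by
  classical
  by_contra! hzero
  choose! b hb using hA
  have hmem : ∀ j ∈ J, Function.update b i a j ∈ A j := fun j hj => by
    rcases eq_or_ne j i with rfl | hji
    · simpa using ha
    · simpa [hji] using hb j hj
  have := h _ (fun j hj => subset_convexHull ℝ _ (hmem j hj)) (Pi.single i 1) (fun v hv => by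
    simp [Pi.single_apply, hi, hzero v hv]) i hi
  simp at this

theorem inf_ker_of_mem [DecidableEq ι] (h : IsTransversal V A (insert i J)) (hi : i ∉ J)
    {a : E →L[ℝ] ℝ} (ha : a ∈ A i) {v₀ : E} (hv₀ : v₀ ∈ V) (hav₀ : a v₀ ≠ 0) :
    IsTransversal (V ⊓ a.ker) A J := by
  intro u hu c hc j hj
  have hne : ∀ k ∈ J, k ≠ i := fun k hk => ne_of_mem_of_not_mem hk hi
  let b : ℝ := -(∑ j ∈ J, c j * u j v₀) / a v₀
  have hind := h (Function.update u i a) ?_ (Function.update c i b) (fun v hv => ?_) j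
    (Finset.mem_insert_of_mem hj)
  · rwa [Function.update_of_ne (hne j hj)] at hind
  · simp only [Finset.forall_mem_insert, Function.update_self]
    exact ⟨subset_convexHull ℝ _ ha, fun k hk => by
      simpa [hne k hk] using hu k hk⟩
  · have hker : v - (a v / a v₀) • v₀ ∈ V ⊓ a.ker :=
      ⟨V.sub_mem hv (V.smul_mem _ hv₀), by simp [hav₀]⟩
    have hsum := hc _ hker
    simp only [map_sub, map_smul, smul_eq_mul, mul_sub, Finset.sum_sub_distrib,
      mul_left_comm (c _), ← Finset.mul_sum] at hsum
    have hcongr : ∑ k ∈ J, Function.update c i b k * Function.update u i a k v =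
        ∑ k ∈ J, c k * u k v := Finset.sum_congr rfl fun k hk => by simp [hne k hk]
    rw [Finset.sum_insert hi, Function.update_self, Function.update_self, hcongr]
    linear_combination hsum

theorem inf_ker_of_apply_eq_zero (h : IsTransversal V A J) (hx₀ : x₀ ∈ V)
    (hA : ∀ j ∈ J, ∀ u ∈ A j, u x₀ = 0) {ℓ : E →L[ℝ] ℝ} (hℓ : ℓ x₀ = 1) :
    IsTransversal (V ⊓ ℓ.ker) A J := by
  refine fun u hu a ha => h u hu a fun v hv => ?_
  rw [← ha (v - ℓ v • x₀) ⟨V.sub_mem hv (V.smul_mem _ hx₀), by simp [hℓ]⟩]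
  refine Finset.sum_congr rfl fun j hj => ?_
  simp [apply_eq_of_mem_convexHull (hA j hj) (hu j hj)]

end IsTransversal

/-- Solvability of the flow problem on `W`: each family of a transversal system has a flow raising
its support function inside the common zero set of the other families. -/
def HasTransversalFlows (ι : Type*) [DecidableEq ι] (W : Submodule ℝ E) : Prop :=
  ∀ ⦃V : Submodule ℝ E⦄ ⦃A : ι → Finset (E →L[ℝ] ℝ)⦄ ⦃J : Finset ι⦄ ⦃l : ι⦄, V ≤ W → l ∉ J →
    (∀ j ∈ insert l J, (A j).Nonempty) → IsTransversal V A (insert l J) →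
    ∃ γ, IsConicFlow V (supportZeros W A J) (supportFun (A l)) γ

theorem eventually_activeSet [DecidableEq ι] (hA : ∀ j ∈ insert l J, (A j).Nonempty) (x₀ : E) :
    ∀ᶠ x in 𝓝 x₀, (x ∈ supportZeros W A J ↔
        x ∈ supportZeros W (fun j => activeSet (A j) x₀) J) ∧
      (x ∈ supportZeros W A J → supportFun (A l) x = supportFun (activeSet (A l) x₀) x) := by
  filter_upwards [(eventually_all_finset (insert l J)).2 fun j hj =>
    eventually_supportFun_eq_activeSet (hA j hj) x₀] with x hx
  rw [Finset.forall_mem_insert] at hx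
  exact ⟨and_congr_right fun _ => forall₂_congr fun j hj => by rw [hx.2 j hj], fun _ => hx.1⟩

theorem exists_isTransversal_inf_ker [FiniteDimensional ℝ E] (h : IsTransversal V A J)
    (hx₀ : x₀ ≠ 0) (hA : x₀ ∈ V → ∀ j ∈ J, ∀ u ∈ A j, u x₀ = 0) :
    ∃ ℓ : E →L[ℝ] ℝ, ℓ x₀ = 1 ∧ IsTransversal (V ⊓ ℓ.ker) A J := by
  by_cases hV : x₀ ∈ V
  · obtain ⟨ℓ, hℓ⟩ := SeparatingDual.exists_eq_one (R := ℝ) hx₀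
    exact ⟨ℓ, hℓ, h.inf_ker_of_apply_eq_zero hV (hA hV) hℓ⟩
  · obtain ⟨f, hf, hfV⟩ := V.exists_le_ker_of_notMem hV
    let ℓ : E →L[ℝ] ℝ := (f x₀)⁻¹ • f.toContinuousLinearMap
    have hVℓ : V ⊓ ℓ.ker = V := inf_eq_left.2 fun v hv => by
      have : f v = 0 := hfV hv
      simp [ℓ, this]
    exact ⟨ℓ, by simp [ℓ, hf], hVℓ.symm ▸ h⟩

/-- Everything is invariant under translation by `x₀`: either `x₀` is itself a direction of the
flow, or a line splits off. -/
theorem IsTransversal.exists_isConicFlow_of_apply_eq [FiniteDimensional ℝ E] [DecidableEq ι]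
    (h : IsTransversal V A (insert l J)) (hVW : V ≤ W) (hl : l ∉ J)
    (hA : ∀ j ∈ insert l J, (A j).Nonempty) (hW : ∀ W' < W, HasTransversalFlows ι W')
    (hx₀ : x₀ ≠ 0) (hx₀W : x₀ ∈ W) (hJ : ∀ j ∈ J, ∀ u ∈ A j, u x₀ = 0) {c : ℝ}
    (hc : ∀ u ∈ A l, u x₀ = c) : ∃ γ, IsConicFlow V (supportZeros W A J) (supportFun (A l)) γ := by
  have hval : ∀ (t : ℝ) x, supportFun (A l) (x + t • x₀) = supportFun (A l) x + t * c :=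
    fun t x => supportFun_add_smul (hA l (J.mem_insert_self l)) hc x t
  have hshift : ∀ (t : ℝ) x, ∀ j ∈ J, supportFun (A j) (x + t • x₀) = supportFun (A j) x :=
    fun t x j hj => by
      simpa using supportFun_add_smul (hA j (Finset.mem_insert_of_mem hj)) (hJ j hj) x t
  by_cases hV : x₀ ∈ V ∧ c ≠ 0
  · exact ⟨_, isConicFlow_translation
      (isConic_supportZeros fun j hj => hA j (Finset.mem_insert_of_mem hj)) hV.1 hV.2
      (fun s x hx => ⟨W.add_mem hx.1 (W.smul_mem s hx₀W), fun j hj => by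
        rw [hshift s x j hj, hx.2 j hj]⟩) fun s x _ => hval s x⟩
  · obtain ⟨ℓ, hℓ, hℓtrans⟩ := exists_isTransversal_inf_ker h hx₀ fun hx₀V => by
      rw [Finset.forall_mem_insert]
      exact ⟨fun u hu => (hc u hu).trans (by_contra fun h0 => hV ⟨hx₀V, h0⟩), hJ⟩
    have hlt : W ⊓ ℓ.ker < W := inf_lt_left.2 fun hle => by simpa [hℓ] using hle hx₀W
    obtain ⟨γ, hγ⟩ := hW _ hlt (inf_le_inf_right _ hVW) hl hA hℓtrans
    refine ⟨_, (hγ.mono inf_le_left).extend hℓ (fun x hx => hx.1.2) (fun x => ?_)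
      fun x _ t => hval t x⟩
    have hmem : x - ℓ x • x₀ ∈ W ⊓ ℓ.ker ↔ x ∈ W := by
      have : ℓ (x - ℓ x • x₀) = 0 := by simp [hℓ]
      simp [this, W.sub_mem_iff_left (W.smul_mem (ℓ x) hx₀W)]
    refine and_congr hmem.symm (forall₂_congr fun j hj => ?_)
    rw [sub_eq_add_neg, ← neg_smul, hshift _ _ j hj]

theorem IsTransversal.hasLocalConicFlow [FiniteDimensional ℝ E] [DecidableEq ι]
    (h : IsTransversal V A (insert l J)) (hVW : V ≤ W) (hl : l ∉ J)
    (hA : ∀ j ∈ insert l J, (A j).Nonempty) (hW : ∀ W' < W, HasTransversalFlows ι W')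
    (hx₀ : x₀ ∈ supportZeros W A J) (hx₀0 : x₀ ≠ 0) :
    HasLocalConicFlow V (supportZeros W A J) (supportFun (A l)) x₀ := by
  have hactive : ∀ j ∈ insert l J, (activeSet (A j) x₀).Nonempty := fun j hj =>
    activeSet_nonempty (hA j hj) x₀
  have htrans : IsTransversal V (fun j => activeSet (A j) x₀) (insert l J) :=
    h.mono fun j _ => (Finset.coe_subset.2 (activeSet_subset _ _)).trans (subset_convexHull ℝ _)
  obtain ⟨γ, hγ⟩ := htrans.exists_isConicFlow_of_apply_eq hVW hl hactive hW hx₀0 hx₀.1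
    (fun j hj u hu => (apply_of_mem_activeSet hu).trans (hx₀.2 j hj))
    fun u hu => apply_of_mem_activeSet hu
  exact ⟨_, _, γ, hγ, fun r hr x _ =>
    (isConicLip_supportFun (hactive l (J.mem_insert_self l))).map_smul hr x trivial,
    eventually_activeSet hA x₀⟩

theorem IsTransversal.conicConjugate_of_forall_lt [FiniteDimensional ℝ E] [DecidableEq ι]
    (h : IsTransversal V A (insert l J)) (hVW : V ≤ W) (hl : l ∉ J)
    (hA : ∀ j ∈ insert l J, (A j).Nonempty) (hW : ∀ W' < W, HasTransversalFlows ι W')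
    {a : E →L[ℝ] ℝ} (ha : a ∈ A l) :
    ConicConjugate V (supportZeros W A J) a (supportFun (A l)) := by
  have hAJ : ∀ j ∈ J, (A j).Nonempty := fun j hj => hA j (Finset.mem_insert_of_mem hj)
  have haA : IsConicLip a univ univ := isConicLip_continuousLinearMap a (mapsTo_univ _ _)
  have hD := (isConicLip_supportFun (hA l (J.mem_insert_self l))).add (haA.const_mul (-1))
  have hconj := conicConjugate_add_of_local (V := V) (isConic_supportZeros hAJ)
    (isClosed_supportZeros (W := W) hAJ) haA hD
    (fun x => by linarith [le_supportFun ha x]) fun t ht x₀ hx₀ hnorm => ?_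
  · exact hconj.congr (fun _ _ => rfl) fun x _ => by ring
  · set A' := Function.update A l (homothetySet a t (A l))
    have hA'l : A' l = homothetySet a t (A l) := Function.update_self ..
    have hA' : ∀ j ∈ J, A' j = A j := fun j hj =>
      Function.update_of_ne (ne_of_mem_of_not_mem hj hl) _ _
    have hlocal := IsTransversal.hasLocalConicFlow (A := A') (x₀ := x₀) (V := V) (W := W)
      (l := l) (J := J) (h.mono ?_) hVW hl ?_ hW (supportZeros_congr hA' ▸ hx₀)
      (norm_ne_zero_iff.1 (by simp [hnorm]))
    · rw [supportZeros_congr hA', hA'l] at hlocal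
      convert hlocal using 2 with x
      rw [supportFun_homothetySet ⟨a, ha⟩ ht.1]
      ring
    · simp only [Finset.forall_mem_insert, hA'l]
      exact ⟨homothetySet_subset_convexHull ha ht, fun j hj => hA' j hj ▸ subset_convexHull ℝ _⟩
    · simp only [Finset.forall_mem_insert, hA'l]
      exact ⟨⟨_, mem_homothetySet.2 ⟨a, ha, rfl⟩⟩, fun j hj => hA' j hj ▸ hAJ j hj⟩

theorem ConicConjugate.exists_isConicEquiv_supportZeros [DecidableEq ι] {b : E →L[ℝ] ℝ}
    (h : ConicConjugate V (supportZeros W A J) b (supportFun (A i))) :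
    ∃ χ ψ, IsConicEquiv χ ψ (supportZeros (W ⊓ b.ker) A J) (supportZeros W A (insert i J)) ∧
      ∀ x ∈ supportZeros W A J, χ x - x ∈ V := by
  obtain ⟨χ, ψ, hχ, hb, hV⟩ := h
  have hker : ∀ {x}, x ∈ supportZeros (W ⊓ b.ker) A J ↔ b x = 0 ∧ x ∈ supportZeros W A J := by
    intro x
    simp only [supportZeros, mem_ofPred_eq, Submodule.mem_inf, LinearMap.mem_ker]
    tauto
  refine ⟨χ, ψ, hχ.restrict (fun x hx => (hker.1 hx).2)
    (fun x hx => (mem_supportZeros_insert.1 hx).2) (fun x hx => ?_) (fun x hx => ?_), hV⟩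
  · obtain ⟨hbx, hxZ⟩ := hker.1 hx
    exact mem_supportZeros_insert.2 ⟨(hb x hxZ).trans hbx, hχ.toFun.mapsTo hxZ⟩
  · obtain ⟨hx0, hxZ⟩ := mem_supportZeros_insert.1 hx
    have hψ := hχ.inv.mapsTo hxZ
    exact hker.2 ⟨by rw [← hb _ hψ, hχ.invOn.2 hxZ, hx0], hψ⟩

/-- The other zero conditions are removed one at a time, each at the cost of passing to a
hyperplane. -/
theorem IsTransversal.exists_isConicFlow_linear [FiniteDimensional ℝ E] [DecidableEq ι]
    {a : E →L[ℝ] ℝ} (h : IsTransversal V A (insert l J)) (hVW : V ≤ W) (hl : l ∉ J)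
    (hA : ∀ j ∈ insert l J, (A j).Nonempty) (hW : ∀ W' < W, HasTransversalFlows ι W')
    (ha : A l = {a}) : ∃ γ, IsConicFlow V (supportZeros W A J) a γ := by
  have hal : a ∈ A l := by simp [ha]
  obtain ⟨v₀, hv₀, hav₀⟩ := h.exists_apply_ne_zero hA (J.mem_insert_self l) hal
  induction J using Finset.induction_on with
  | empty =>
    exact ⟨_, isConicFlow_translation (isConic_supportZeros (by simp)) hv₀ hav₀
      (fun s x hx => ⟨W.add_mem hx.1 (W.smul_mem s (hVW hv₀)), by simp⟩) fun s x _ => by simp⟩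
  | insert i J hi _ =>
    obtain ⟨hli, hlJ⟩ : l ≠ i ∧ l ∉ J := by simpa using hl
    simp only [Finset.forall_mem_insert] at hA
    obtain ⟨hAl, ⟨b, hb⟩, hAJ⟩ := hA
    have hAiJ : ∀ j ∈ insert i J, (A j).Nonempty := by
      simpa only [Finset.forall_mem_insert] using ⟨⟨b, hb⟩, hAJ⟩
    have hcut : IsTransversal (V ⊓ a.ker) A (insert i J) := h.inf_ker_of_mem hl hal hv₀ hav₀
    obtain ⟨χ, ψ, hχ, hχa⟩ := (hcut.conicConjugate_of_forall_lt (inf_le_left.trans hVW) hi hAiJ hW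
      hb).exists_isConicEquiv_supportZeros
    rw [Finset.insert_comm] at h
    have hAiJl : ∀ j ∈ insert i (insert l J), (A j).Nonempty := by
      simpa only [Finset.forall_mem_insert] using ⟨⟨b, hb⟩, hAl, hAJ⟩
    obtain ⟨w, hw, hbw⟩ := h.exists_apply_ne_zero hAiJl (Finset.mem_insert_self i _) hb
    have hlt : W ⊓ b.ker < W := inf_lt_left.2 fun hle => hbw (hle (hVW hw))
    obtain ⟨γ, hγ⟩ := hW _ hlt (inf_le_inf_right _ hVW) hlJ
      (fun j hj => hAiJl j (Finset.mem_insert_of_mem hj))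
      (h.inf_ker_of_mem (by simp [hli.symm, hi]) hb hw hbw)
    have hsub : supportZeros (W ⊓ b.ker) A J ⊆ supportZeros W A J := fun x hx => ⟨hx.1.1, hx.2⟩
    refine ⟨_, hγ.transport hχ (fun x hx => ?_) fun x hx y hy hxy => ?_⟩
    · have : a (χ x - x) = 0 := (hχa x (hsub hx)).2
      rw [ha, supportFun_singleton, ← sub_eq_zero, ← map_sub, this]
    · have hmove := V.sub_mem (hχa x (hsub hx)).1 (hχa y (hsub hy)).1
      have := V.add_mem hmove (inf_le_left (α := Submodule ℝ E) hxy)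
      rwa [show χ x - x - (χ y - y) + (x - y) = χ x - χ y by abel] at this

theorem hasTransversalFlows [FiniteDimensional ℝ E] (ι : Type*) [DecidableEq ι]
    (W : Submodule ℝ E) :
    HasTransversalFlows ι W := by
  induction W using WellFoundedLT.induction with
  | ind W ih =>
    intro V A J l hVW hl hA h
    obtain ⟨a, ha⟩ := hA l (J.mem_insert_self l)
    set A' := Function.update A l {a}
    have hA'l : A' l = {a} := Function.update_self ..
    have hA' : ∀ j ∈ J, A' j = A j := fun j hj =>
      Function.update_of_ne (ne_of_mem_of_not_mem hj hl) _ _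
    have hsub : ∀ j ∈ insert l J, (A' j : Set (E →L[ℝ] ℝ)) ⊆ convexHull ℝ (A j : Set _) := by
      simp only [Finset.forall_mem_insert, hA'l, Finset.coe_singleton, singleton_subset_iff]
      exact ⟨subset_convexHull ℝ _ ha, fun j hj => hA' j hj ▸ subset_convexHull ℝ _⟩
    have hne : ∀ j ∈ insert l J, (A' j).Nonempty := by
      simp only [Finset.forall_mem_insert, hA'l, Finset.singleton_nonempty, true_and]
      exact fun j hj => hA' j hj ▸ hA j (Finset.mem_insert_of_mem hj)
    obtain ⟨γ, hγ⟩ := (h.mono hsub).exists_isConicFlow_linear hVW hl hne ih hA'l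
    rw [supportZeros_congr hA'] at hγ
    exact hγ.of_conjugate (h.conicConjugate_of_forall_lt hVW hl hA ih ha) le_rfl

theorem finrank_inf_ker_add_one {K X : Type*} [Field K] [AddCommGroup X] [Module K X]
    [FiniteDimensional K X] {W : Submodule K X} {f : X →ₗ[K] K} {v : X} (hv : v ∈ W)
    (hfv : f v ≠ 0) :
    Module.finrank K (W ⊓ f.ker : Submodule K X) + 1 = Module.finrank K W := by
  have hne : f ∘ₗ W.subtype ≠ 0 := fun h => hfv (LinearMap.congr_fun h ⟨v, hv⟩)
  rw [← Module.Dual.finrank_ker_add_one_of_ne_zero hne, LinearMap.ker_comp,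
    ← Submodule.map_comap_subtype, Submodule.finrank_map_subtype_eq]

theorem IsTransversal.exists_isConicEquiv [FiniteDimensional ℝ E] {F : Type*}
    [NormedAddCommGroup F] [NormedSpace ℝ F] [FiniteDimensional ℝ F]
    (h : IsTransversal W A J) (hA : ∀ j ∈ J, (A j).Nonempty)
    (hdim : Module.finrank ℝ W = Module.finrank ℝ F + J.card) :
    ∃ (χ : F → E) (ψ : E → F), IsConicEquiv χ ψ univ (supportZeros W A J) := by
  classical
  induction J using Finset.induction_on generalizing W with
  | empty =>
    let e : F ≃ₗ[ℝ] W := LinearEquiv.ofFinrankEq F W (by simpa using hdim.symm)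
    let χ := W.subtype ∘ₗ e.toLinearMap
    obtain ⟨ψ, hψ⟩ := χ.exists_leftInverse_of_injective (by simp [χ, LinearMap.ker_comp])
    have hleft : ∀ x, ψ (e x) = x := LinearMap.congr_fun hψ
    have hχ := isConicLip_continuousLinearMap (M := univ) (N := supportZeros W A ∅)
      χ.toContinuousLinearMap fun x _ => ⟨(e x).2, by simp⟩
    refine ⟨_, _, hχ, isConicLip_continuousLinearMap ψ.toContinuousLinearMap (mapsTo_univ _ _),
      fun x _ => hleft x, fun x hx => ?_⟩
    obtain ⟨y, hy⟩ := e.surjective ⟨x, hx.1⟩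
    have : x = e y := by rw [hy]
    simp [χ, this, hleft]
  | insert i J hi ih =>
    obtain ⟨b, hb⟩ := hA i (J.mem_insert_self i)
    obtain ⟨v, hv, hbv⟩ := h.exists_apply_ne_zero hA (J.mem_insert_self i) hb
    have hcut := finrank_inf_ker_add_one (f := (b : E →ₗ[ℝ] ℝ)) hv hbv
    obtain ⟨χ, ψ, hχ⟩ := ih (h.inf_ker_of_mem hi hb hv hbv)
      (fun j hj => hA j (Finset.mem_insert_of_mem hj)) (by
        rw [Finset.card_insert_of_notMem hi] at hdim; omega)
    obtain ⟨χ', ψ', hχ', -⟩ := (h.conicConjugate_of_forall_lt le_rfl hi hA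
      (fun W' _ => hasTransversalFlows ι W') hb).exists_isConicEquiv_supportZeros
    exact ⟨_, _, hχ.trans hχ'⟩

end Transversality

section Polytopes

open Set Filter Topology MeasureTheory

theorem convexHull_inter_setOf_eq {E : Type*} [AddCommGroup E] [Module ℝ E] {S : Set E}
    (f : E →ₗ[ℝ] ℝ) {α : ℝ} (hS : ∀ x ∈ S, f x ≤ α) :
    convexHull ℝ S ∩ {x | f x = α} = convexHull ℝ (S ∩ {x | f x = α}) := by
  have hface : convexHull ℝ (S ∩ {x | f x = α}) ⊆ {x | f x = α} :=
    convexHull_min inter_subset_right (convex_hyperplane f.isLinear α)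
  refine Subset.antisymm ?_ (subset_inter (convexHull_mono inter_subset_left) hface)
  -- The points strictly below the hyperplane together with the face form a convex set.
  have hconv : Convex ℝ ({x | f x < α} ∪ convexHull ℝ (S ∩ {x | f x = α})) := by
    rw [convex_iff_forall_pos]
    rintro x hx y hy a b ha hb hab
    have hle : ∀ z ∈ {x | f x < α} ∪ convexHull ℝ (S ∩ {x | f x = α}), f z ≤ α := by
      rintro z (hz | hz)
      exacts [le_of_lt hz, (hface hz).le]
    obtain hlt | hge := lt_or_ge (f (a • x + b • y)) α
    · exact Or.inl hlt
    rw [map_add, map_smul, map_smul, smul_eq_mul, smul_eq_mul] at hge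
    have hsum : a * (α - f x) + b * (α - f y) ≤ 0 := by linear_combination hge + α * hab
    have hxα : ¬ f x < α := fun h => by
      linarith [mul_pos ha (sub_pos.2 h), mul_nonneg hb.le (sub_nonneg.2 (hle y hy))]
    have hyα : ¬ f y < α := fun h => by
      linarith [mul_pos hb (sub_pos.2 h), mul_nonneg ha.le (sub_nonneg.2 (hle x hx))]
    exact Or.inr (convex_convexHull ℝ _ (hx.resolve_left hxα) (hy.resolve_left hyα) ha.le hb.le hab)
  have hsub : S ⊆ {x | f x < α} ∪ convexHull ℝ (S ∩ {x | f x = α}) := fun x hx =>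
    (hS x hx).lt_or_eq.imp id fun h => subset_convexHull ℝ _ ⟨hx, h⟩
  rintro x ⟨hx, hxα : f x = α⟩
  exact (convexHull_min hsub hconv hx).resolve_left hxα.not_lt

theorem exists_mem_forall_notMem_affineSubspace {E : Type*} [NormedAddCommGroup E]
    [NormedSpace ℝ E] [FiniteDimensional ℝ E] {U : Set E} (hU : IsOpen U) (hne : U.Nonempty)
    {T : Set (AffineSubspace ℝ E)} (hT : T.Finite) (htop : ∀ s ∈ T, s ≠ ⊤) :
    ∃ x ∈ U, ∀ s ∈ T, x ∉ s := by
  let _ : MeasurableSpace E := borel E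
  have : BorelSpace E := ⟨rfl⟩
  have hnull : Measure.addHaar (⋃ s ∈ T, (s : Set E)) = 0 :=
    (measure_biUnion_null_iff hT.countable).2 fun s hs =>
      Measure.addHaar_affineSubspace _ s (htop s hs)
  by_contra! hcover
  refine (hU.measure_pos Measure.addHaar hne).ne'
    (measure_mono_null (fun x hx => ?_) hnull)
  obtain ⟨s, hs, hxs⟩ := hcover x hx
  exact mem_biUnion hs hxs

variable {E : Type*} [NormedAddCommGroup E] [InnerProductSpace ℝ E] {P F : Set E} {u p x y : E}
  {α : ℝ}

theorem inner_lt_of_mem_interior (hu : u ≠ 0) (hle : ∀ x ∈ P, ⟪u, x⟫_ℝ ≤ α)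
    (hp : p ∈ interior P) : ⟪u, p⟫_ℝ < α := by
  have hopen : IsOpenMap (innerSL ℝ u) :=
    (innerSL ℝ u).isOpenMap_of_ne_zero fun h => hu ((inner_self_eq_zero (𝕜 := ℝ)).1 congr($h u))
  have himage : innerSL ℝ u '' interior P ⊆ Iio α := by
    rw [← interior_Iic]
    refine interior_maximal ?_ (hopen _ isOpen_interior)
    rintro _ ⟨x, hx, rfl⟩
    exact hle x (interior_subset hx)
  exact himage ⟨p, hp, rfl⟩

theorem exists_forall_inner_le_of_notMem_interior [CompleteSpace E] (hP : Convex ℝ P)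
    (hint : (interior P).Nonempty) (hy : y ∉ interior P) :
    ∃ u : E, u ≠ 0 ∧ ∀ x ∈ P, ⟪u, x⟫_ℝ ≤ ⟪u, y⟫_ℝ := by
  obtain ⟨f, hf⟩ := geometric_hahn_banach_open_point hP.interior isOpen_interior hy
  obtain ⟨u, rfl⟩ := (InnerProductSpace.toDual ℝ E).surjective f
  simp only [InnerProductSpace.toDual_apply_apply] at hf
  refine ⟨u, ?_, fun x hx => ?_⟩
  · rintro rfl
    obtain ⟨p, hp⟩ := hint
    simpa using hf p hp
  · have hclosure : closure (interior P) ⊆ {x | ⟪u, x⟫_ℝ ≤ ⟪u, y⟫_ℝ} :=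
      closure_minimal (fun x hx => (hf x hx).le) (isClosed_le (by fun_prop) continuous_const)
    rw [hP.closure_interior_eq_closure_of_nonempty_interior hint] at hclosure
    exact hclosure (subset_closure hx)

theorem vectorSpan_le_orthogonal_singleton (hF : ∀ x ∈ F, ⟪u, x⟫_ℝ = α) :
    vectorSpan ℝ F ≤ (ℝ ∙ u)ᗮ := by
  rw [vectorSpan_def, Submodule.span_le]
  rintro _ ⟨x, hx, y, hy, rfl⟩
  simp [Submodule.mem_orthogonal_singleton_iff_inner_right, inner_sub_right, hF x hx, hF y hy]

theorem vectorSpan_eq_orthogonal_singleton (hF : ∀ x ∈ F, ⟪u, x⟫_ℝ = α) (hy : y ∈ F)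
    (hx : ⟪u, x⟫_ℝ ≠ α) (htop : affineSpan ℝ (insert x F) = ⊤) :
    vectorSpan ℝ F = (ℝ ∙ u)ᗮ := by
  refine le_antisymm (vectorSpan_le_orthogonal_singleton hF) fun w hw => ?_
  have hw_mem : w ∈ Submodule.span ℝ {x -ᵥ y} ⊔ (affineSpan ℝ F).direction := by
    rw [← AffineSubspace.direction_affineSpan_insert (subset_affineSpan ℝ F hy),
      affineSpan_insert_affineSpan, htop, AffineSubspace.direction_top]
    trivial
  rw [direction_affineSpan] at hw_mem
  obtain ⟨_, hz, v, hv, rfl⟩ := Submodule.mem_sup.1 hw_mem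
  obtain ⟨t, rfl⟩ := Submodule.mem_span_singleton.1 hz
  have hvu := vectorSpan_le_orthogonal_singleton hF hv
  rw [Submodule.mem_orthogonal_singleton_iff_inner_right] at hw hvu
  rw [inner_add_right, hvu, add_zero, inner_smul_right, vsub_eq_sub, inner_sub_right, hF y hy]
    at hw
  rw [(mul_eq_zero.1 hw).resolve_right (sub_ne_zero.2 hx), zero_smul, zero_add]
  exact hv

/-- `F` is a facet of `P` with outer normal vector `u` and supporting hyperplane `⟪u, x⟫ = α`.
Codimension one is expressed by the direction of `F` being all of `uᗮ`, which makes sense in any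
inner product space. -/
structure IsFacetNormal (P F : Set E) (u : E) (α : ℝ) : Prop where
  nonempty : F.Nonempty
  ne_zero : u ≠ 0
  inner_le : ∀ x ∈ P, ⟪u, x⟫_ℝ ≤ α
  eq_inter : F = P ∩ {x | ⟪u, x⟫_ℝ = α}
  vectorSpan_eq : vectorSpan ℝ F = (ℝ ∙ u)ᗮ

namespace IsFacetNormal

theorem mem_iff (h : IsFacetNormal P F u α) : x ∈ F ↔ x ∈ P ∧ ⟪u, x⟫_ℝ = α := by
  rw [h.eq_inter]
  rfl

theorem convex (h : IsFacetNormal P F u α) (hP : Convex ℝ P) : Convex ℝ F := by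
  rw [h.eq_inter]
  exact hP.inter (convex_hyperplane (innerₗ E u).isLinear α)

theorem lt_inner_of_mem_segment (h : IsFacetNormal P F u α) (hp : p ∈ interior P)
    (hx : x ∉ P) (hy : y ∈ F) (hyp : y ∈ segment ℝ p x) : α < ⟪u, x⟫_ℝ := by
  have hpα := inner_lt_of_mem_interior h.ne_zero h.inner_le hp
  obtain ⟨s, t, hs, ht, hst, rfl⟩ := hyp
  obtain ⟨hyP, hyα⟩ := h.mem_iff.1 hy
  rw [inner_add_right, inner_smul_right, inner_smul_right] at hyα
  have hs_pos : 0 < s := by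
    refine hs.lt_of_ne fun hs0 => hx ?_
    obtain rfl : t = 1 := by linarith
    simpa [← hs0] using hyP
  by_contra! hle
  have hα : s * α + t * α = α := by rw [← add_mul, hst, one_mul]
  linarith [mul_lt_mul_of_pos_left hpα hs_pos, mul_le_mul_of_nonneg_left hle ht]

theorem eventually_add_smul_mem (h : IsFacetNormal P F u α) {q w : E}
    (hq : q ∈ intrinsicInterior ℝ F) (hw : ⟪u, w⟫_ℝ = 0) : ∀ᶠ t : ℝ in 𝓝 0, q + t • w ∈ F := by
  have hw_mem : w ∈ (affineSpan ℝ F).direction := by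
    rwa [direction_affineSpan, h.vectorSpan_eq,
      Submodule.mem_orthogonal_singleton_iff_inner_right]
  obtain ⟨q', hq', rfl⟩ := mem_intrinsicInterior.1 hq
  have hmem (t : ℝ) : (q' : E) + t • w ∈ affineSpan ℝ F := by
    rw [add_comm]
    exact AffineSubspace.vadd_mem_of_mem_direction (Submodule.smul_mem _ t hw_mem) q'.2
  let γ (t : ℝ) : affineSpan ℝ F := ⟨q' + t • w, hmem t⟩
  have hγ : Continuous γ := Continuous.subtype_mk (by fun_prop) hmem
  have hγ0 : γ 0 = q' := by ext; simp [γ]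
  have hev := hγ.tendsto 0
  rw [hγ0] at hev
  exact hev (mem_interior_iff_mem_nhds.1 hq')

theorem exists_mem_segment_of_inner_le (h : IsFacetNormal P F u α)
    (hP : Convex ℝ P) (hp : p ∈ interior P) {q : E} (hq : q ∈ intrinsicInterior ℝ F)
    (hx : ⟪u, x⟫_ℝ ≤ α) : ∃ t ∈ Ioo (0 : ℝ) 1, q + t • (x - q) ∈ P := by
  have hpα := inner_lt_of_mem_interior h.ne_zero h.inner_le hp
  obtain ⟨hqP, hqα⟩ := h.mem_iff.1 (intrinsicInterior_subset hq)
  -- `x - q` is a nonnegative multiple of `p - q` plus a direction `w` of the facet.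
  set l : ℝ := (α - ⟪u, x⟫_ℝ) / (α - ⟪u, p⟫_ℝ) with hl_def
  have hl : 0 ≤ l := div_nonneg (sub_nonneg.2 hx) (sub_pos.2 hpα).le
  set w : E := x - q - l • (p - q) with hw_def
  have hw : ⟪u, w⟫_ℝ = 0 := by
    rw [hw_def, inner_sub_right, inner_smul_right, inner_sub_right, inner_sub_right, hqα, hl_def]
    field_simp [(sub_pos.2 hpα).ne']
    ring
  have hsmall : ∀ᶠ t : ℝ in 𝓝 0, t * l < 1 ∧ t < 1 :=
    (((continuous_mul_const l).tendsto' 0 0 (zero_mul l)).eventually_lt_const one_pos).and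
      (eventually_lt_nhds one_pos)
  obtain ⟨t, ⟨htF, htl, ht1⟩, ht : 0 < t⟩ := (((h.eventually_add_smul_mem hq hw).and
    hsmall).filter_mono nhdsWithin_le_nhds |>.and (self_mem_nhdsWithin (s := Ioi 0))).exists
  refine ⟨t / 2, ⟨by linarith, by linarith⟩, ?_⟩
  have hpq : (1 - t * l) • q + (t * l) • p ∈ P :=
    hP hqP (interior_subset hp) (by linarith) (mul_nonneg ht.le hl) (by ring)
  have hmid := hP (h.mem_iff.1 htF).1 hpq (a := 1 / 2) (b := 1 / 2)
    (by norm_num) (by norm_num) (by norm_num)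
  convert hmid using 1
  rw [hw_def]
  module

end IsFacetNormal

theorem exists_mem_segment_notMem_interior (hP : IsClosed P) (hp : p ∈ interior P)
    (hx : x ∉ P) : ∃ y ∈ segment ℝ p x, y ∈ P ∧ y ∉ interior P := by
  by_contra! hint
  obtain ⟨y, -, hy, hyP⟩ := (convex_segment p x).isPreconnected (interior P) Pᶜ isOpen_interior
    hP.isOpen_compl (fun y hy => or_iff_not_imp_right.2 fun hyP => hint y hy (not_not.1 hyP))
    ⟨p, left_mem_segment ℝ p x, hp⟩ ⟨x, right_mem_segment ℝ p x, hx⟩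
  exact hyP (interior_subset hy)

theorem isFacetNormal_of_forall_notMem_affineSpan {V : Set E} (hu : u ≠ 0)
    (hp : p ∈ interior (convexHull ℝ V))
    (hle : ∀ x ∈ convexHull ℝ V, ⟪u, x⟫_ℝ ≤ ⟪u, y⟫_ℝ) (hy : y ∈ convexHull ℝ V)
    (hyp : y ∈ segment ℝ p x) (hx : x ∉ convexHull ℝ V)
    (hgen : ∀ S ⊆ V, affineSpan ℝ (insert x S) ≠ ⊤ → p ∉ affineSpan ℝ (insert x S)) :
    IsFacetNormal (convexHull ℝ V) (convexHull ℝ V ∩ {z | ⟪u, z⟫_ℝ = ⟪u, y⟫_ℝ}) u ⟪u, y⟫_ℝ := by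
  have hp_lt := inner_lt_of_mem_interior hu hle hp
  have hxy : x ≠ y := by
    rintro rfl
    exact hx hy
  have hp_line : p ∈ line[ℝ, x, y] :=
    (mem_segment_iff_wbtw.1 hyp).left_mem_affineSpan_of_right_ne hxy
  have hx_ne : ⟪u, x⟫_ℝ ≠ ⟪u, y⟫_ℝ := by
    intro hxu
    obtain ⟨r, rfl⟩ := mem_affineSpan_pair_iff_exists_lineMap_eq.1 hp_line
    simp [AffineMap.lineMap_apply, inner_add_right, inner_smul_right, inner_sub_right, hxu] at hp_lt
  have hface := convexHull_inter_setOf_eq (innerₗ E u) fun z hz =>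
    hle z (subset_convexHull ℝ V hz)
  have hy_face : y ∈ convexHull ℝ V ∩ {z | ⟪u, z⟫_ℝ = ⟪u, y⟫_ℝ} := ⟨hy, rfl⟩
  have hy_span : y ∈ affineSpan ℝ (insert x (V ∩ {z | ⟪u, z⟫_ℝ = ⟪u, y⟫_ℝ})) :=
    affineSpan_mono ℝ (subset_insert x _) (convexHull_subset_affineSpan _ (hface ▸ hy_face))
  have htop : affineSpan ℝ (insert x (V ∩ {z | ⟪u, z⟫_ℝ = ⟪u, y⟫_ℝ})) = ⊤ := by
    by_contra hne
    exact hgen _ inter_subset_left hne (affineSpan_pair_le_of_mem_of_mem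
      (subset_affineSpan ℝ _ (mem_insert x _)) hy_span hp_line)
  refine ⟨⟨y, hy_face⟩, hu, hle, rfl, ?_⟩
  refine vectorSpan_eq_orthogonal_singleton (fun z hz => hz.2) hy_face hx_ne (top_unique ?_)
  rw [← htop]
  exact affineSpan_mono ℝ (insert_subset_insert
    (inter_subset_inter_left _ (subset_convexHull ℝ V)))

theorem exists_isFacetNormal_lt_inner [FiniteDimensional ℝ E] {V : Set E} (hV : V.Finite)
    (hint : (interior (convexHull ℝ V)).Nonempty) (hx : x ∉ convexHull ℝ V) :
    ∃ F, (∃ u α, IsFacetNormal (convexHull ℝ V) F u α) ∧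
      ∀ u α, IsFacetNormal (convexHull ℝ V) F u α → α < ⟪u, x⟫_ℝ := by
  have hclosed := (hV.isCompact_convexHull ℝ).isClosed
  have hfin : {s | ∃ S ⊆ V, s = affineSpan ℝ (insert x S) ∧ s ≠ ⊤}.Finite :=
    (hV.finite_subsets.image fun S => affineSpan ℝ (insert x S)).subset
      fun s ⟨S, hS, hs, _⟩ => ⟨S, hS, hs.symm⟩
  obtain ⟨p, hp, hgen⟩ := exists_mem_forall_notMem_affineSubspace isOpen_interior hint hfin
    fun s ⟨_, _, _, hs⟩ => hs
  obtain ⟨y, hys, hy⟩ := exists_mem_segment_notMem_interior hclosed hp hx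
  obtain ⟨u, hu, hle⟩ := exists_forall_inner_le_of_notMem_interior (convex_convexHull ℝ V) hint hy.2
  refine ⟨_, ⟨u, _, isFacetNormal_of_forall_notMem_affineSpan hu hp hle hy.1 hys hx
    fun S hS hne => hgen _ ⟨S, hS, rfl, hne⟩⟩, fun v β h =>
      h.lt_inner_of_mem_segment hp hx ⟨hy.1, rfl⟩ hys⟩

theorem finite_setOf_isFacetNormal {V : Set E} (hV : V.Finite) :
    {F | ∃ u α, IsFacetNormal (convexHull ℝ V) F u α}.Finite := by
  refine (hV.finite_subsets.image (convexHull ℝ)).subset ?_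
  rintro F ⟨u, α, h⟩
  refine ⟨V ∩ {x | ⟪u, x⟫_ℝ = α}, inter_subset_left, ?_⟩
  rw [h.eq_inter]
  exact (convexHull_inter_setOf_eq (innerₗ E u) fun x hx =>
    h.inner_le x (subset_convexHull ℝ V hx)).symm

section EuclideanSpace

variable {d : ℕ} {P F : Set (EuclideanSpace ℝ (Fin d))} {u p x : EuclideanSpace ℝ (Fin d)}

theorem isFacet_iff_exists_isFacetNormal : IsFacet P F ↔ ∃ u α, IsFacetNormal P F u α := by
  have hrank {u : EuclideanSpace ℝ (Fin d)} (hu : u ≠ 0) :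
      Module.finrank ℝ (ℝ ∙ u)ᗮ = d - 1 := by
    have := Submodule.finrank_add_finrank_orthogonal (ℝ ∙ u)
    rw [finrank_span_singleton hu, finrank_euclideanSpace_fin] at this
    omega
  constructor
  · rintro ⟨hne, u, α, hu, hle, hF, hdim⟩
    have hsub : vectorSpan ℝ F ≤ (ℝ ∙ u)ᗮ :=
      vectorSpan_le_orthogonal_singleton fun x hx => (hF ▸ hx).2
    exact ⟨u, α, hne, hu, hle, hF,
      Submodule.eq_of_le_of_finrank_eq hsub (hdim.trans (hrank hu).symm)⟩
  · rintro ⟨u, α, h⟩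
    exact ⟨h.nonempty, u, α, h.ne_zero, h.inner_le, h.eq_inter,
      h.vectorSpan_eq ▸ hrank h.ne_zero⟩

theorem IsFacetNormal.facetVisibleFrom_of_lt_inner (h : IsFacetNormal P F u α)
    (hp : α < ⟪u, p⟫_ℝ) : FacetVisibleFrom P F p := by
  intro q hq
  obtain ⟨hqP, hqα⟩ := h.mem_iff.1 (intrinsicInterior_subset hq)
  refine Subset.antisymm ?_ (singleton_subset_iff.2 ⟨hqP, left_mem_segment ℝ q p⟩)
  rw [segment_eq_image']
  rintro _ ⟨hzP, t, ht, rfl⟩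
  have hle := h.inner_le _ hzP
  rw [inner_add_right, inner_smul_right, inner_sub_right, hqα] at hle
  have ht0 : t = 0 := le_antisymm (by nlinarith) ht.1
  simp [ht0]

theorem IsFacetNormal.facetVisibleFrom_iff (h : IsFacetNormal P F u α) (hP : Convex ℝ P)
    (hint : (interior P).Nonempty) (hp : p ∉ P) : FacetVisibleFrom P F p ↔ α < ⟪u, p⟫_ℝ := by
  refine ⟨fun hvis => ?_, h.facetVisibleFrom_of_lt_inner⟩
  by_contra! hle
  obtain ⟨p₀, hp₀⟩ := hint
  obtain ⟨q, hq⟩ := h.nonempty.intrinsicInterior (h.convex hP)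
  obtain ⟨t, ht, htP⟩ := h.exists_mem_segment_of_inner_le hP hp₀ hq hle
  have hmem : q + t • (p - q) ∈ P ∩ segment ℝ q p :=
    ⟨htP, segment_eq_image' ℝ q p ▸ mem_image_of_mem _ (Ioo_subset_Icc_self ht)⟩
  rw [hvis q hq, mem_singleton_iff, add_eq_left, smul_eq_zero, sub_eq_zero] at hmem
  obtain ht0 | rfl := hmem
  · exact ht.1.ne' ht0
  · exact hp (h.mem_iff.1 (intrinsicInterior_subset hq)).1

end EuclideanSpace

end Polytopes

section RadialProjection

open Set

variable {E F : Type*} [NormedAddCommGroup E] [NormedSpace ℝ E] [NormedAddCommGroup F]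
  [NormedSpace ℝ F] {χ : E → F} {ψ : F → E} {M : Set E} {N : Set F} {g : E → ℝ} {k : F → ℝ}

/-- A continuous positively homogeneous function that is positive on `M` away from the origin; its
level set `{x ∈ M | g x = 1}` is a base of the cone `M`. -/
structure IsConicGauge (g : E → ℝ) (M : Set E) : Prop where
  continuous : Continuous g
  map_smul : ∀ ⦃r : ℝ⦄, 0 < r → ∀ x, g (r • x) = r * g x
  pos : ∀ x ∈ M, x ≠ 0 → 0 < g x

theorem isConicGauge_norm (M : Set E) : IsConicGauge (‖·‖) M :=
  ⟨continuous_norm, fun _ hr x => norm_smul_of_nonneg hr.le x, fun _ _ => norm_pos_iff.2⟩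

theorem IsConicGauge.map_zero (hg : IsConicGauge g M) : g 0 = 0 := by
  have := hg.map_smul two_pos 0
  rw [smul_zero] at this
  linarith

theorem IsConicLip.continuousOn (h : IsConicLip χ M N) : ContinuousOn χ M :=
  let ⟨_, hK⟩ := h.lipschitz
  hK.continuousOn

namespace IsConicEquiv

theorem ne_zero (h : IsConicEquiv χ ψ M N) {x : E} (hx : x ∈ M) (hx0 : x ≠ 0) : χ x ≠ 0 := by
  intro h0
  have hy : (0 : F) ∈ N := h0 ▸ h.toFun.mapsTo hx
  have h2 := h.inv.map_smul two_pos 0 hy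
  rw [smul_zero, ← h0, h.invOn.1 hx, two_smul] at h2
  exact hx0 (left_eq_add.1 h2)

theorem pos_of_eq_one (h : IsConicEquiv χ ψ M N) (hg : IsConicGauge g M)
    (hk : IsConicGauge k N) {x : E} (hx : x ∈ M) (hgx : g x = 1) : 0 < k (χ x) := by
  refine hk.pos _ (h.toFun.mapsTo hx) (h.ne_zero hx ?_)
  rintro rfl
  exact one_ne_zero (hgx.symm.trans hg.map_zero)

/-- The map between the bases `g = 1` and `k = 1` of two cones that applies a conic equivalence and
then rescales. -/
noncomputable def radialMap (h : IsConicEquiv χ ψ M N) (hN : IsConic N) (hg : IsConicGauge g M)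
    (hk : IsConicGauge k N) (x : {x // x ∈ M ∧ g x = 1}) : {y // y ∈ N ∧ k y = 1} :=
  ⟨(k (χ x))⁻¹ • χ x,
    have hpos := h.pos_of_eq_one hg hk x.2.1 x.2.2
    ⟨hN (inv_pos.2 hpos) (h.toFun.mapsTo x.2.1), by
      rw [hk.map_smul (inv_pos.2 hpos), inv_mul_cancel₀ hpos.ne']⟩⟩

theorem radialMap_radialMap (h : IsConicEquiv χ ψ M N) (hM : IsConic M) (hN : IsConic N)
    (hg : IsConicGauge g M) (hk : IsConicGauge k N) (x : {x // x ∈ M ∧ g x = 1}) :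
    h.symm.radialMap hM hk hg (h.radialMap hN hg hk x) = x := by
  have hpos := h.pos_of_eq_one hg hk x.2.1 x.2.2
  have hψ : ψ ((k (χ x))⁻¹ • χ x) = (k (χ x))⁻¹ • (x : E) := by
    rw [h.inv.map_smul (inv_pos.2 hpos) _ (h.toFun.mapsTo x.2.1), h.invOn.1 x.2.1]
  ext
  simp only [radialMap, hψ, hg.map_smul (inv_pos.2 hpos), x.2.2, smul_smul]
  rw [mul_one, inv_inv, mul_inv_cancel₀ hpos.ne', one_smul]

theorem continuous_radialMap (h : IsConicEquiv χ ψ M N) (hN : IsConic N)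
    (hg : IsConicGauge g M) (hk : IsConicGauge k N) : Continuous (h.radialMap hN hg hk) := by
  have hχ : Continuous fun x : {x // x ∈ M ∧ g x = 1} => χ x :=
    h.toFun.continuousOn.comp_continuous continuous_subtype_val fun x => x.2.1
  refine Continuous.subtype_mk (((hk.continuous.comp hχ).inv₀ fun x => ?_).smul hχ) _
  exact (h.pos_of_eq_one hg hk x.2.1 x.2.2).ne'

/-- Radial projection identifies the bases of equivalent cones. -/
noncomputable def baseHomeomorph (h : IsConicEquiv χ ψ M N) (hM : IsConic M) (hN : IsConic N)
    (hg : IsConicGauge g M) (hk : IsConicGauge k N) :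
    {x // x ∈ M ∧ g x = 1} ≃ₜ {y // y ∈ N ∧ k y = 1} where
  toFun := h.radialMap hN hg hk
  invFun := h.symm.radialMap hM hk hg
  left_inv := h.radialMap_radialMap hM hN hg hk
  right_inv := h.symm.radialMap_radialMap hN hM hk hg
  continuous_toFun := h.continuous_radialMap hN hg hk
  continuous_invFun := h.symm.continuous_radialMap hM hk hg

end IsConicEquiv

/-- A slice `{x | (x, 1) ∈ M}` of a cone in a product, as the base of `M` cut out by the second
coordinate. -/
def sliceHomeomorph (M : Set (E × ℝ)) : {x : E // (x, (1 : ℝ)) ∈ M} ≃ₜ {z // z ∈ M ∧ z.2 = 1} where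
  toFun x := ⟨(x, 1), x.2, rfl⟩
  invFun z := ⟨z.1.1, by have := z.2.1; rwa [← Prod.mk.eta (p := z.1), z.2.2] at this⟩
  left_inv _ := rfl
  right_inv z := Subtype.ext (Prod.ext rfl z.2.2.symm)
  continuous_toFun := by fun_prop
  continuous_invFun := by fun_prop

theorem IsConicEquiv.nonempty_slice_homeomorph_sphere {M : Set (E × ℝ)} {χ : F → E × ℝ}
    {ψ : E × ℝ → F} (h : IsConicEquiv χ ψ univ M) (hM : IsConic M)
    (hpos : ∀ z ∈ M, z ≠ 0 → 0 < z.2) :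
    Nonempty ({x : E // (x, (1 : ℝ)) ∈ M} ≃ₜ Metric.sphere (0 : F) 1) := by
  have hgauge : IsConicGauge (Prod.snd : E × ℝ → ℝ) M := ⟨continuous_snd, fun _ _ _ => rfl, hpos⟩
  refine ⟨(sliceHomeomorph M).trans ((h.symm.baseHomeomorph hM (fun _ _ _ _ => trivial) hgauge
    (isConicGauge_norm univ)).trans ((Homeomorph.refl F).subtype fun y => ?_))⟩
  simp

end RadialProjection

section Separation

variable {E ι : Type*} [NormedAddCommGroup E] [NormedSpace ℝ E] {A : ι → Finset (E →L[ℝ] ℝ)}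
  {I : Set ι} {v : E} {S : Set (E →L[ℝ] ℝ)} {u : E →L[ℝ] ℝ}

theorem apply_pos_of_mem_convexHull (hS : ∀ u ∈ S, 0 < u v) (hu : u ∈ convexHull ℝ S) :
    0 < u v :=
  convexHull_min (t := {u : E →L[ℝ] ℝ | 0 < u v}) hS
    (convex_halfSpace_gt (ContinuousLinearMap.apply ℝ ℝ v).toLinearMap.isLinear 0) hu

theorem apply_nonpos_of_mem_convexHull (hS : ∀ u ∈ S, u v ≤ 0) (hu : u ∈ convexHull ℝ S) :
    u v ≤ 0 :=
  convexHull_min (t := {u : E →L[ℝ] ℝ | u v ≤ 0}) hS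
    (convex_halfSpace_le (ContinuousLinearMap.apply ℝ ℝ v).toLinearMap.isLinear 0) hu

/-- The families of functionals with index in `I` are separated from the remaining ones by the
value at a single vector: positive for the former, nonpositive for the latter. -/
def IsSeparated (A : ι → Finset (E →L[ℝ] ℝ)) (I : Set ι) : Prop :=
  ∃ v, (∀ j ∈ I, ∀ f ∈ A j, 0 < f v) ∧ ∀ j ∉ I, ∀ f ∈ A j, f v ≤ 0

theorem isSeparated_empty (A : ι → Finset (E →L[ℝ] ℝ)) : IsSeparated A ∅ :=
  ⟨0, by simp, by simp⟩

variable [Fintype ι]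

theorem IsSeparated.eq_zero_of_sum_eq_zero (h : IsSeparated A I) {u : ι → E →L[ℝ] ℝ}
    (hu : ∀ j, u j ∈ convexHull ℝ (A j : Set (E →L[ℝ] ℝ))) {a : ι → ℝ}
    (hsum : ∀ v, ∑ j, a j * u j v = 0) (hI : ∀ j ∈ I, 0 ≤ a j) (hIc : ∀ j ∉ I, a j ≤ 0) :
    ∀ j ∈ I, a j = 0 := by
  obtain ⟨v, hpos, hnonpos⟩ := h
  have hu_pos : ∀ j ∈ I, 0 < u j v := fun j hj => apply_pos_of_mem_convexHull (hpos j hj) (hu j)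
  have hterm : ∀ j ∈ Finset.univ, 0 ≤ a j * u j v := fun j _ => by
    by_cases hj : j ∈ I
    · exact mul_nonneg (hI j hj) (hu_pos j hj).le
    · exact mul_nonneg_of_nonpos_of_nonpos (hIc j hj)
        (apply_nonpos_of_mem_convexHull (hnonpos j hj) (hu j))
  intro j hj
  have hzero := (Finset.sum_eq_zero_iff_of_nonneg hterm).1 (hsum v) j (Finset.mem_univ j)
  exact (mul_eq_zero.1 hzero).resolve_right (hu_pos j hj).ne'

theorem isTransversal_of_isSeparated (huniv : IsSeparated A Set.univ)
    (h : ∀ I, IsSeparated A I ∨ IsSeparated A Iᶜ) : IsTransversal ⊤ A Finset.univ := by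
  intro u hu a ha j _
  replace hu : ∀ j, u j ∈ convexHull ℝ (A j : Set (E →L[ℝ] ℝ)) := fun j => hu j (Finset.mem_univ j)
  replace ha : ∀ v, ∑ j, a j * u j v = 0 := fun v => ha v trivial
  have hna : ∀ v, ∑ j, -a j * u j v = 0 := fun v => by
    simp only [neg_mul, Finset.sum_neg_distrib, ha v, neg_zero]
  -- A separation at the sign pattern of `a` shows that `a` has constant sign.
  obtain hI | hIc := h {j | 0 < a j}
  · have hpos := hI.eq_zero_of_sum_eq_zero hu ha (fun j hj => le_of_lt hj) fun j hj => not_lt.1 hj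
    have hle : ∀ j, a j ≤ 0 := fun j => not_lt.1 fun hj => hj.ne' (hpos j hj)
    simpa using huniv.eq_zero_of_sum_eq_zero hu hna (fun j _ => neg_nonneg.2 (hle j))
      (fun j hj => absurd trivial hj) j trivial
  · have hneg := hIc.eq_zero_of_sum_eq_zero hu hna (fun j hj => neg_nonneg.2 (not_lt.1 hj))
      fun j hj => neg_nonpos.2 (le_of_lt (not_not.1 hj))
    have hge : ∀ j, 0 ≤ a j := fun j => by
      by_contra! hj
      exact hj.ne (neg_eq_zero.1 (hneg j (not_lt.2 hj.le)))
    exact huniv.eq_zero_of_sum_eq_zero hu ha (fun j _ => hge j)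
      (fun j hj => absurd trivial hj) j trivial

end Separation

section HalfSpaces

open Set

variable {E ι κ : Type*} [NormedAddCommGroup E] [InnerProductSpace ℝ E] {P : Set E} {u : ι → E}
  {α : ι → ℝ} {p₀ p w : E} {z : E × ℝ}

theorem eq_zero_of_forall_inner_nonpos (hb : Bornology.IsBounded P)
    (hP : ∀ x, x ∈ P ↔ ∀ i, ⟪u i, x⟫_ℝ ≤ α i) (hp₀ : p₀ ∈ P) (hw : ∀ i, ⟪u i, w⟫_ℝ ≤ 0) :
    w = 0 := by
  by_contra hw0
  obtain ⟨C, hC⟩ := hb.subset_closedBall p₀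
  have hray : ∀ t : ℝ, 0 ≤ t → t * ‖w‖ ≤ C := fun t ht => by
    have hmem : p₀ + t • w ∈ P := (hP _).2 fun i => by
      rw [inner_add_right, inner_smul_right]
      linarith [(hP p₀).1 hp₀ i, mul_nonpos_of_nonneg_of_nonpos ht (hw i)]
    simpa [norm_smul, abs_of_nonneg ht] using hC hmem
  have hw_pos : 0 < ‖w‖ := norm_pos_iff.2 hw0
  have hC0 : 0 ≤ C := by simpa using hray 0 le_rfl
  have := hray ((C + 1) / ‖w‖) (by positivity)
  rw [div_mul_cancel₀ _ hw_pos.ne'] at this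
  linarith

theorem exists_inner_le_of_notMem (hb : Bornology.IsBounded P)
    (hP : ∀ x, x ∈ P ↔ ∀ i, ⟪u i, x⟫_ℝ ≤ α i) (hp₀ : p₀ ∈ P) (hp : p ∉ P) :
    ∃ i, ⟪u i, p⟫_ℝ ≤ α i := by
  by_contra! hlt
  have : p₀ - p = 0 := eq_zero_of_forall_inner_nonpos hb hP hp₀ fun i => by
    rw [inner_sub_right]
    linarith [(hP p₀).1 hp₀ i, hlt i]
  exact hp (sub_eq_zero.1 this ▸ hp₀)

theorem snd_pos_of_forall_inner_le [Nonempty ι] (hb : Bornology.IsBounded P)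
    (hP : ∀ x, x ∈ P ↔ ∀ i, ⟪u i, x⟫_ℝ ≤ α i) (hp₀ : ∀ i, ⟪u i, p₀⟫_ℝ < α i)
    (hz : ∀ i, ⟪u i, z.1⟫_ℝ ≤ α i * z.2) (hz0 : z ≠ 0) : 0 < z.2 := by
  by_contra! hneg
  have hfst : z.1 = z.2 • p₀ := sub_eq_zero.1 <|
    eq_zero_of_forall_inner_nonpos hb hP ((hP p₀).2 fun i => (hp₀ i).le) fun i => by
      rw [inner_sub_right, inner_smul_right]
      nlinarith [hz i, hp₀ i]
  obtain ⟨i⟩ := ‹Nonempty ι›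
  have hsnd : z.2 = 0 := by
    have := hz i
    rw [hfst, inner_smul_right] at this
    nlinarith [hp₀ i]
  exact hz0 (Prod.ext (by rw [hfst, hsnd, zero_smul]; rfl) hsnd)

/-- The linear functional on `E × ℝ` whose restriction to `E × {1}` is the affine function
`x ↦ ⟪u, x⟫ - α`. -/
noncomputable def homogenize (u : E) (α : ℝ) : E × ℝ →L[ℝ] ℝ :=
  innerSL ℝ u ∘L .fst ℝ E ℝ - α • .snd ℝ E ℝ

@[simp]
theorem homogenize_apply (u : E) (α : ℝ) (z : E × ℝ) :
    homogenize u α z = ⟪u, z.1⟫_ℝ - α * z.2 := rfl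

variable [Fintype ι] {c : ι → κ} {j : κ}

open scoped Classical in
/-- The homogenized inequalities `⟪u i, x⟫ ≤ α i` of color `j`. -/
noncomputable def colorFunctionals (u : ι → E) (α : ι → ℝ) (c : ι → κ) (j : κ) :
    Finset (E × ℝ →L[ℝ] ℝ) :=
  {i | c i = j}.toFinset.image fun i => homogenize (u i) (α i)

theorem mem_colorFunctionals {f : E × ℝ →L[ℝ] ℝ} :
    f ∈ colorFunctionals u α c j ↔ ∃ i, c i = j ∧ homogenize (u i) (α i) = f := by
  simp [colorFunctionals]

theorem colorFunctionals_nonempty (hc : Function.Surjective c) (j : κ) :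
    (colorFunctionals u α c j).Nonempty :=
  let ⟨i, hi⟩ := hc j
  ⟨_, mem_colorFunctionals.2 ⟨i, hi, rfl⟩⟩

theorem isSeparated_colorFunctionals_iff {I : Set κ} :
    IsSeparated (colorFunctionals u α c) I ↔
      ∃ z : E × ℝ, (∀ i, c i ∈ I → α i * z.2 < ⟪u i, z.1⟫_ℝ) ∧
        ∀ i, c i ∉ I → ⟪u i, z.1⟫_ℝ ≤ α i * z.2 := by
  simp only [IsSeparated, mem_colorFunctionals]
  refine exists_congr fun z => and_congr ⟨fun h i hi => ?_, ?_⟩ ⟨fun h i hi => ?_, ?_⟩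
  · exact sub_pos.1 (h _ hi _ ⟨i, rfl, rfl⟩)
  · rintro h _ hj _ ⟨i, rfl, rfl⟩
    exact sub_pos.2 (h i hj)
  · exact sub_nonpos.1 (h _ hi _ ⟨i, rfl, rfl⟩)
  · rintro h _ hj _ ⟨i, rfl, rfl⟩
    exact sub_nonpos.2 (h i hj)

theorem isSeparated_colorFunctionals_univ (hp₀ : ∀ i, ⟪u i, p₀⟫_ℝ < α i) :
    IsSeparated (colorFunctionals u α c) univ :=
  isSeparated_colorFunctionals_iff.2 ⟨-(p₀, 1), by simpa using hp₀, by simp⟩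

variable [Fintype κ]

theorem mem_supportZeros_colorFunctionals_iff (hc : Function.Surjective c) :
    z ∈ supportZeros ⊤ (colorFunctionals u α c) Finset.univ ↔
      (∀ i, ⟪u i, z.1⟫_ℝ ≤ α i * z.2) ∧ ∀ j, ∃ i, c i = j ∧ ⟪u i, z.1⟫_ℝ = α i * z.2 := by
  have hj : ∀ j, supportFun (colorFunctionals u α c j) z = 0 ↔
      (∀ i, c i = j → ⟪u i, z.1⟫_ℝ ≤ α i * z.2) ∧ ∃ i, c i = j ∧ ⟪u i, z.1⟫_ℝ = α i * z.2 := by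
    intro j
    rw [supportFun_eq_iff (colorFunctionals_nonempty hc j)]
    simp only [mem_colorFunctionals, forall_exists_index, and_imp, exists_exists_and_eq_and,
      forall_apply_eq_imp_iff₂, homogenize_apply, sub_nonpos, sub_eq_zero]
  simp only [supportZeros, mem_ofPred_eq, Submodule.mem_top, Finset.mem_univ, true_and,
    forall_const, hj, forall_and]
  exact and_congr_left' ⟨fun h i => h _ i rfl, fun h _ i _ => h i⟩

theorem nonempty_homeomorph_sphere_of_isTransversal [FiniteDimensional ℝ E] [Nonempty κ]
    {F : Type*} [NormedAddCommGroup F] [NormedSpace ℝ F] [FiniteDimensional ℝ F]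
    (hb : Bornology.IsBounded P) (hP : ∀ x, x ∈ P ↔ ∀ i, ⟪u i, x⟫_ℝ ≤ α i)
    (hp₀ : ∀ i, ⟪u i, p₀⟫_ℝ < α i) (hc : Function.Surjective c)
    (h : IsTransversal ⊤ (colorFunctionals u α c) Finset.univ)
    (hdim : Module.finrank ℝ E + 1 = Module.finrank ℝ F + Fintype.card κ) :
    Nonempty ({x // x ∈ P ∧ ∀ j, ∃ i, c i = j ∧ ⟪u i, x⟫_ℝ = α i} ≃ₜ Metric.sphere (0 : F) 1) := by
  have hne : ∀ j ∈ Finset.univ, (colorFunctionals u α c j).Nonempty :=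
    fun j _ => colorFunctionals_nonempty hc j
  obtain ⟨χ, ψ, hχ⟩ := h.exists_isConicEquiv (F := F) hne (by simpa using hdim)
  have : Nonempty ι := (hc (Classical.arbitrary κ)).nonempty
  have hpos : ∀ z ∈ supportZeros ⊤ (colorFunctionals u α c) Finset.univ, z ≠ 0 → 0 < z.2 :=
    fun z hz => snd_pos_of_forall_inner_le hb hP hp₀
      ((mem_supportZeros_colorFunctionals_iff hc).1 hz).1
  obtain ⟨e⟩ := hχ.nonempty_slice_homeomorph_sphere (isConic_supportZeros hne) hpos
  refine ⟨((Homeomorph.refl E).subtype fun x => ?_).trans e⟩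
  simp only [mem_supportZeros_colorFunctionals_iff hc, mul_one, hP, Homeomorph.refl_apply, id]

end HalfSpaces

section FacetColorings

open Set

variable {d : ℕ} {κ : Type*} {P : Set (EuclideanSpace ℝ (Fin d))}
  {u : {F // IsFacet P F} → EuclideanSpace ℝ (Fin d)} {α : {F // IsFacet P F} → ℝ}
  {c : Set (EuclideanSpace ℝ (Fin d)) → κ} {x p₀ : EuclideanSpace ℝ (Fin d)} {I : Set κ}

theorem finite_setOf_isFacet {V : Set (EuclideanSpace ℝ (Fin d))} (hV : V.Finite) :
    {F | IsFacet (convexHull ℝ V) F}.Finite := by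
  simpa only [isFacet_iff_exists_isFacetNormal] using finite_setOf_isFacetNormal hV

theorem mem_convexHull_iff_forall_inner_le {V : Set (EuclideanSpace ℝ (Fin d))} (hV : V.Finite)
    (hint : (interior (convexHull ℝ V)).Nonempty)
    {u : {F // IsFacet (convexHull ℝ V) F} → EuclideanSpace ℝ (Fin d)}
    {α : {F // IsFacet (convexHull ℝ V) F} → ℝ}
    (h : ∀ F, IsFacetNormal (convexHull ℝ V) F.1 (u F) (α F)) :
    x ∈ convexHull ℝ V ↔ ∀ F, ⟪u F, x⟫_ℝ ≤ α F := by
  refine ⟨fun hx F => (h F).inner_le x hx, fun hx => ?_⟩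
  by_contra hxV
  obtain ⟨F, hF, hlt⟩ := exists_isFacetNormal_lt_inner hV hint hxV
  exact (hlt _ _ (h ⟨F, isFacet_iff_exists_isFacetNormal.2 hF⟩)).not_ge (hx _)

theorem mem_frontier_and_forall_mem_facet_iff [Nonempty κ]
    (h : ∀ F, IsFacetNormal P F.1 (u F) (α F)) :
    (x ∈ frontier P ∧ ∀ j, ∃ F, IsFacet P F ∧ c F = j ∧ x ∈ F) ↔
      x ∈ P ∧ ∀ j, ∃ F : {F // IsFacet P F}, c F = j ∧ ⟪u F, x⟫_ℝ = α F := by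
  constructor
  · rintro ⟨-, hx⟩
    obtain ⟨F, hF, -, hxF⟩ := hx (Classical.arbitrary κ)
    refine ⟨((h ⟨F, hF⟩).mem_iff.1 hxF).1, fun j => ?_⟩
    obtain ⟨G, hG, hGj, hxG⟩ := hx j
    exact ⟨⟨G, hG⟩, hGj, ((h ⟨G, hG⟩).mem_iff.1 hxG).2⟩
  · rintro ⟨hxP, hx⟩
    obtain ⟨F, -, hxF⟩ := hx (Classical.arbitrary κ)
    refine ⟨⟨subset_closure hxP, fun hint => ?_⟩, fun j => ?_⟩
    · exact (inner_lt_of_mem_interior (h F).ne_zero (h F).inner_le hint).ne hxF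
    · obtain ⟨G, hGj, hxG⟩ := hx j
      exact ⟨G, G.2, hGj, (h G).mem_iff.2 ⟨hxP, hxG⟩⟩

theorem surjective_color_of_visible_or_covisible [Nontrivial κ]
    (h : ∀ F, IsFacetNormal P F.1 (u F) (α F)) (hb : Bornology.IsBounded P)
    (hP : ∀ x, x ∈ P ↔ ∀ F, ⟪u F, x⟫_ℝ ≤ α F) (hconv : Convex ℝ P) (hint : (interior P).Nonempty)
    (hvis : ∀ I : Set κ, I.Nonempty → I ≠ univ → VisibleFacetSet P {F | IsFacet P F ∧ c F ∈ I} ∨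
      CovisibleFacetSet P {F | IsFacet P F ∧ c F ∈ I}) :
    Function.Surjective fun F : {F // IsFacet P F} => c F := by
  intro j
  obtain ⟨⟨F, hF, hFj⟩, -⟩ | ⟨-, p, hp, hsees⟩ :=
    hvis {j} (singleton_nonempty j) (singleton_ne_univ j)
  · exact ⟨⟨F, hF⟩, hFj⟩
  · obtain ⟨p₀, hp₀⟩ := hint
    obtain ⟨F, hF⟩ := exists_inner_le_of_notMem hb hP (interior_subset hp₀) hp
    have hunseen := mt ((h F).facetVisibleFrom_iff hconv ⟨p₀, hp₀⟩ hp).1 hF.not_gt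
    by_contra! hne
    exact hunseen ((hsees F F.2).2 ⟨F.2, fun hFj => hne F hFj.2⟩)

variable [Fintype {F // IsFacet P F}]

theorem VisibleFacetSet.isSeparated (hvis : VisibleFacetSet P {F | IsFacet P F ∧ c F ∈ I})
    (h : ∀ F, IsFacetNormal P F.1 (u F) (α F)) (hconv : Convex ℝ P)
    (hint : (interior P).Nonempty) :
    IsSeparated (colorFunctionals u α fun F => c F) I := by
  obtain ⟨-, p, hp, hsees⟩ := hvis
  have hiff : ∀ F : {F // IsFacet P F}, α F < ⟪u F, p⟫_ℝ ↔ c F ∈ I := fun F => by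
    rw [← (h F).facetVisibleFrom_iff hconv hint hp, hsees F F.2]
    exact and_iff_right F.2
  refine isSeparated_colorFunctionals_iff.2 ⟨(p, 1), fun F hF => ?_, fun F hF => ?_⟩
  · simpa using (hiff F).2 hF
  · simpa using not_lt.1 (mt (hiff F).1 hF)

theorem CovisibleFacetSet.isSeparated_compl
    (hvis : CovisibleFacetSet P {F | IsFacet P F ∧ c F ∈ I})
    (h : ∀ F, IsFacetNormal P F.1 (u F) (α F)) (hconv : Convex ℝ P)
    (hint : (interior P).Nonempty) :
    IsSeparated (colorFunctionals u α fun F => c F) Iᶜ := by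
  refine VisibleFacetSet.isSeparated ?_ h hconv hint
  have : {F | IsFacet P F ∧ c F ∈ Iᶜ} = {F | IsFacet P F ∧ F ∉ {F | IsFacet P F ∧ c F ∈ I}} := by
    ext F
    simp +contextual
  rwa [this]

theorem isTransversal_of_visible_or_covisible [Fintype κ]
    (h : ∀ F, IsFacetNormal P F.1 (u F) (α F)) (hconv : Convex ℝ P) (hp₀ : p₀ ∈ interior P)
    (hvis : ∀ I : Set κ, I.Nonempty → I ≠ univ → VisibleFacetSet P {F | IsFacet P F ∧ c F ∈ I} ∨
      CovisibleFacetSet P {F | IsFacet P F ∧ c F ∈ I}) :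
    IsTransversal ⊤ (colorFunctionals u α fun F => c F) Finset.univ := by
  have huniv : IsSeparated (colorFunctionals u α fun F => c F) univ :=
    isSeparated_colorFunctionals_univ fun F =>
      inner_lt_of_mem_interior (h F).ne_zero (h F).inner_le hp₀
  refine isTransversal_of_isSeparated huniv fun I => ?_
  obtain rfl | hI := I.eq_empty_or_nonempty
  · exact .inl (isSeparated_empty _)
  obtain rfl | hIuniv := eq_or_ne I univ
  · exact .inl huniv
  exact (hvis I hI hIuniv).imp (fun hv => hv.isSeparated h hconv ⟨p₀, hp₀⟩)
    fun hv => hv.isSeparated_compl h hconv ⟨p₀, hp₀⟩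

end FacetColorings

/-- Dual Main Theorem: if the facets of a full-dimensional polytope `P ⊆ ℝ^d` are colored
with `m` colors (`2 ≤ m ≤ d`) so that every nonempty proper subset of colors is visible or
covisible, then the set of rainbow points of `∂P` is homeomorphic to `S^{d-m}`. -/
theorem rainbow_points_homeomorphic_sphere {d m : ℕ} (hd : 2 ≤ d)
    (hm : 2 ≤ m) (hmd : m ≤ d)
    (P : Set (EuclideanSpace ℝ (Fin d)))
    (hpoly : ∃ V : Finset (EuclideanSpace ℝ (Fin d)), P = convexHull ℝ (V : Set _))
    (hfull : (interior P).Nonempty)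
    (c : Set (EuclideanSpace ℝ (Fin d)) → Fin m)
    (hvis : ∀ I : Finset (Fin m), I.Nonempty → I ≠ Finset.univ →
      VisibleFacetSet P {F | IsFacet P F ∧ c F ∈ I} ∨
      CovisibleFacetSet P {F | IsFacet P F ∧ c F ∈ I}) :
    Nonempty (
      {x : EuclideanSpace ℝ (Fin d) // x ∈ frontier P ∧
          ∀ j : Fin m, ∃ F, IsFacet P F ∧ c F = j ∧ x ∈ F}
        ≃ₜ Metric.sphere (0 : EuclideanSpace ℝ (Fin (d - m + 1))) 1) := by
  obtain ⟨V, hV⟩ := hpoly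
  have ⟨p₀, hp₀⟩ := hfull
  have : Nontrivial (Fin m) := Fin.nontrivial_iff_two_le.2 hm
  have : Fintype {F // IsFacet P F} := (hV ▸ finite_setOf_isFacet V.finite_toSet).fintype
  have hconv : Convex ℝ P := hV ▸ convex_convexHull ℝ _
  have hb : Bornology.IsBounded P := hV ▸ (V.finite_toSet.isCompact_convexHull ℝ).isBounded
  choose u α h using fun F : {F // IsFacet P F} => isFacet_iff_exists_isFacetNormal.1 F.2
  have hP : ∀ x, x ∈ P ↔ ∀ F, ⟪u F, x⟫_ℝ ≤ α F := by
    subst hV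
    exact fun x => mem_convexHull_iff_forall_inner_le V.finite_toSet hfull h
  have hvis_set : ∀ I : Set (Fin m), I.Nonempty → I ≠ Set.univ →
      VisibleFacetSet P {F | IsFacet P F ∧ c F ∈ I} ∨
        CovisibleFacetSet P {F | IsFacet P F ∧ c F ∈ I} := fun I hI hIuniv => by
    classical simpa using hvis I.toFinset (by simpa using hI) (by simpa using hIuniv)
  obtain ⟨e⟩ := nonempty_homeomorph_sphere_of_isTransversal
    (F := EuclideanSpace ℝ (Fin (d - m + 1))) hb hP
    (fun F => inner_lt_of_mem_interior (h F).ne_zero (h F).inner_le hp₀)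
    (surjective_color_of_visible_or_covisible h hb hP hconv hfull hvis_set)
    (isTransversal_of_visible_or_covisible h hconv hp₀ hvis_set) (by simp; omega)
  exact ⟨((Homeomorph.refl _).subtype fun x => mem_frontier_and_forall_mem_facet_iff h).trans e⟩
end

section
/- Let P₁,…,P_d be a strongly separated family of polytopes in ℝ^d whose union is affinely spanning (the affine span of P₁ ∪ ⋯ ∪ P_d is all of ℝ^d), and let A ⊔ B = {1,…,d} be a partition. Then there exist exactly two pairs (u,α) with ‖u‖ = 1 such that the hyperplane H_{u,α} = {x : ⟨u,x⟩ = α} is tangent to every Pᵢ (H_{u,α} ∩ Pᵢ ≠ ∅ for every i), P_a ⊆ {x : ⟨u,x⟩ ≥ α} for every a ∈ A, and P_b ⊆ {x : ⟨u,x⟩ ≤ α} for every b ∈ B. Furthermore, if each Pᵢ has nonempty interior, then the 2^d hyperplanes obtained as the partition (A,B) ranges over all partitions of {1,…,d} are pairwise distinct as subsets of ℝ^d. -/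
open scoped InnerProductSpace

/-- A family of sets in `ℝ^d` is strongly separated if every subset of indices can be
strictly separated from its complement by an affine hyperplane. -/
def StronglySeparated {d m : ℕ} (S : Fin m → Set (EuclideanSpace ℝ (Fin d))) : Prop :=
  ∀ I : Finset (Fin m), ∃ (u : EuclideanSpace ℝ (Fin d)) (α : ℝ), u ≠ 0 ∧
    (∀ i ∈ I, ∀ x ∈ S i, ⟪u, x⟫_ℝ < α) ∧ (∀ i, i ∉ I → ∀ x ∈ S i, α < ⟪u, x⟫_ℝ)

/-!
Homogenize: the pair `(u, α)` is the linear functional `(x, t) ↦ ⟪u, x⟫ - α t` on `ℝ^d × ℝ`, and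
after reflecting the lifts `P b × {1}`, `b ∈ B`, in the origin, a common tangent becomes a normal
`φ` such that `φᗮ` supports `d` compact convex sets from the same side. Strong separation says that
any transversal of these sets is linearly independent, so that the sign of the volume form on `φ`
followed by a transversal inside `φᗮ` is a well-defined orientation of `φ`.

There is exactly one supporting unit normal of each orientation. For uniqueness, let `φ` and `ψ` be
two of them; all hyperplanes between `φᗮ` and `(-ψ)ᗮ` meet all the sets, so by continuity `φ` and
`-ψ` have the same orientation unless the path passes through `0`, that is, unless `φ = ψ`.
Existence is by induction on the number of sets that are supported rather than met in a prescribed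
point: as the prescribed point varies in one set, the hyperplanes cut that set into linearly ordered
slices, and the lowest one supports it.

If the sets have interior points, no hyperplane contains one of them, so a pair `(u, α)` belongs to
only one partition. Since a hyperplane has exactly two unit normals, the `2 * 2^d` pairs give `2^d`
hyperplanes.
-/

open Module Set Matrix

section Sweep

variable {V : Type*} [AddCommGroup V] [Module ℝ V]

lemma exists_mem_segment_apply_eq_zero (f : V →ₗ[ℝ] ℝ) {x y : V} (h : f x * f y ≤ 0) :
    ∃ z ∈ segment ℝ x y, f z = 0 := by
  have h0 : (0 : ℝ) ∈ f.toAffineMap '' segment ℝ x y := by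
    rw [image_segment, segment_eq_uIcc, mem_uIcc]
    rcases mul_nonpos_iff.1 h with ⟨hx, hy⟩ | ⟨hx, hy⟩
    · exact .inr ⟨hy, hx⟩
    · exact .inl ⟨hx, hy⟩
  exact h0

lemma apply_nonneg_of_mem_segment (f : V →ₗ[ℝ] ℝ) {x y z : V} (hx : 0 ≤ f x) (hy : 0 ≤ f y)
    (hz : z ∈ segment ℝ x y) : 0 ≤ f z :=
  (convex_halfSpace_ge f.isLinear 0).segment_subset hx hy hz

/-- A field of hyperplanes `ψ x = 0` through the points `x` of a convex set `C`, in which `ψ x` and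
`ψ y` can only differ if `y` lies strictly on one side of `ψ x = 0` and `x` strictly on the other
side of `ψ y = 0`. Such hyperplanes cut `C` into disjoint, linearly ordered slices. -/
structure IsSweep (C : Set V) (ψ : V → Dual ℝ V) : Prop where
  convex : Convex ℝ C
  apply_self : ∀ x ∈ C, ψ x x = 0
  eq_of_mul_nonneg : ∀ x ∈ C, ∀ y ∈ C, 0 ≤ ψ x y * ψ y x → ψ x = ψ y

namespace IsSweep

variable {C : Set V} {ψ : V → Dual ℝ V} (h : IsSweep C ψ)
include h

lemma nonneg_total {x y : V} (hx : x ∈ C) (hy : y ∈ C) : 0 ≤ ψ x y ∨ 0 ≤ ψ y x := by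
  by_contra! ⟨hxy, hyx⟩
  have heq := h.eq_of_mul_nonneg x hx y hy (mul_nonneg_of_nonpos_of_nonpos hxy.le hyx.le)
  exact hxy.ne (heq ▸ h.apply_self y hy)

/-- If `z` were strictly below the slice of `x`, that slice would meet `[y, z]` in a point `w` whose
slice is at the same time that of `y`. -/
lemma nonneg_trans {x y z : V} (hx : x ∈ C) (hy : y ∈ C) (hz : z ∈ C) (hxy : 0 ≤ ψ x y)
    (hyz : 0 ≤ ψ y z) : 0 ≤ ψ x z := by
  by_contra! hxz
  obtain ⟨w, hw, hxw⟩ :=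
    exists_mem_segment_apply_eq_zero (ψ x) (mul_nonpos_of_nonneg_of_nonpos hxy hxz.le)
  have hwC : w ∈ C := h.convex.segment_subset hy hz hw
  have hyw : 0 ≤ ψ y w := apply_nonneg_of_mem_segment _ (h.apply_self y hy).ge hyz hw
  have hxw_eq : ψ x = ψ w := h.eq_of_mul_nonneg x hx w hwC (by simp [hxw])
  have hyw_eq : ψ y = ψ w :=
    h.eq_of_mul_nonneg y hy w hwC (mul_nonneg hyw (hxw_eq ▸ hxy))
  exact hxz.not_ge (hxw_eq ▸ hyw_eq ▸ hyz)

lemma exists_forall_nonneg [TopologicalSpace V] [T2Space V] (hne : C.Nonempty)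
    (hcomp : ∀ x ∈ C, IsCompact {m ∈ C | 0 ≤ ψ m x}) : ∃ m ∈ C, ∀ x ∈ C, 0 ≤ ψ m x := by
  have : Nonempty C := hne.to_subtype
  have hdir : Directed (· ⊇ ·) fun x : C ↦ {m ∈ C | 0 ≤ ψ m x} := by
    intro x y
    rcases h.nonneg_total x.2 y.2 with hxy | hyx
    · exact ⟨x, subset_rfl, fun m hm ↦ ⟨hm.1, h.nonneg_trans hm.1 x.2 y.2 hm.2 hxy⟩⟩
    · exact ⟨y, fun m hm ↦ ⟨hm.1, h.nonneg_trans hm.1 y.2 x.2 hm.2 hyx⟩, subset_rfl⟩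
  obtain ⟨m, hm⟩ := IsCompact.nonempty_iInter_of_directed_nonempty_isCompact_isClosed _ hdir
    (fun x ↦ ⟨x, x.2, (h.apply_self x x.2).ge⟩) (fun x ↦ hcomp x x.2)
    fun x ↦ (hcomp x x.2).isClosed
  rw [mem_iInter] at hm
  exact ⟨m, (hm (Classical.arbitrary C)).1, fun x hx ↦ (hm ⟨x, hx⟩).2⟩

end IsSweep

end Sweep

section Contacts

variable {ι W : Type*} [NormedAddCommGroup W] [InnerProductSpace ℝ W]

/-- A family of sets all of whose transversals (choices of one point per set) are linearly
independent. -/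
def IndependentTransversals (C : ι → Set W) : Prop :=
  ∀ z ∈ univ.pi C, LinearIndependent ℝ z

/-- The transversals of `C` that lie in the linear hyperplane with normal `φ`. -/
def contacts (C : ι → Set W) (φ : W) : Set (ι → W) :=
  {z ∈ univ.pi C | ∀ i, ⟪φ, z i⟫_ℝ = 0}

lemma contacts_nonempty_iff {C : ι → Set W} {φ : W} :
    (contacts C φ).Nonempty ↔ ∀ i, ∃ x ∈ C i, ⟪φ, x⟫_ℝ = 0 := by
  refine ⟨fun ⟨z, hz⟩ i ↦ ⟨z i, hz.1 i trivial, hz.2 i⟩, fun h ↦ ?_⟩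
  choose z hz using h
  exact ⟨z, fun i _ ↦ (hz i).1, fun i ↦ (hz i).2⟩

lemma convex_contacts {C : ι → Set W} (hC : ∀ i, Convex ℝ (C i)) (φ : W) :
    Convex ℝ (contacts C φ) := by
  refine fun z hz y hy a b ha hb hab ↦ ⟨convex_pi (fun i _ ↦ hC i) hz.1 hy.1 ha hb hab, fun i ↦ ?_⟩
  simp [inner_add_right, inner_smul_right, hz.2 i, hy.2 i]

lemma isCompact_setOf_mem_contacts {C : ι → Set W} {X : Type*} [TopologicalSpace X] {K : Set X}
    {θ : X → W} (hK : IsCompact K) (hC : ∀ i, IsCompact (C i)) (hθ : Continuous θ) :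
    IsCompact {p : X × (ι → W) | p.1 ∈ K ∧ p.2 ∈ contacts C (θ p.1)} := by
  have horth : IsClosed {p : X × (ι → W) | ∀ i, ⟪θ p.1, p.2 i⟫_ℝ = 0} := by
    simp only [ofPred_forall]
    exact isClosed_iInter fun i ↦ isClosed_eq (by fun_prop) continuous_const
  have hinter : {p : X × (ι → W) | p.1 ∈ K ∧ p.2 ∈ contacts C (θ p.1)} =
      K ×ˢ univ.pi C ∩ {p | ∀ i, ⟪θ p.1, p.2 i⟫_ℝ = 0} := by
    ext p
    simp [contacts, and_assoc]
  rw [hinter]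
  exact (hK.prod (isCompact_univ_pi hC)).inter_right horth

lemma contacts_smul (C : ι → Set W) (φ : W) {c : ℝ} (hc : c ≠ 0) :
    contacts C (c • φ) = contacts C φ := by
  simp [contacts, inner_smul_left, hc]

/-- The cone of all `φ` whose hyperplane `φᗮ` meets every `C i` and leaves all of them in
`{x | 0 ≤ ⟪φ, x⟫}`. -/
def supportNormals (C : ι → Set W) : Set W :=
  {φ | (contacts C φ).Nonempty ∧ ∀ i, ∀ x ∈ C i, 0 ≤ ⟪φ, x⟫_ℝ}

lemma smul_mem_supportNormals {C : ι → Set W} {φ : W} (hφ : φ ∈ supportNormals C)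
    {c : ℝ} (hc : 0 < c) : c • φ ∈ supportNormals C := by
  refine ⟨contacts_smul C φ hc.ne' ▸ hφ.1, fun i x hx ↦ ?_⟩
  rw [real_inner_smul_left]
  exact mul_nonneg hc.le (hφ.2 i x hx)

lemma linearIndependent_vecCons_of_inner_eq_zero {n : ℕ} {φ : W} {z : Fin n → W} (hφ : φ ≠ 0)
    (hz : LinearIndependent ℝ z) (h : ∀ i, ⟪φ, z i⟫_ℝ = 0) :
    LinearIndependent ℝ (vecCons φ z) := by
  refine linearIndependent_finCons.2 ⟨hz, fun hmem ↦ hφ ?_⟩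
  have hspan : Submodule.span ℝ (range z) ≤ (ℝ ∙ φ)ᗮ :=
    Submodule.span_le.2 <| range_subset_iff.2 fun i ↦
      Submodule.mem_orthogonal_singleton_iff_inner_right.2 (h i)
  exact inner_self_eq_zero.1 (Submodule.mem_orthogonal_singleton_iff_inner_right.1 (hspan hmem))

lemma exists_norm_eq_one_forall_inner_eq_zero {n : ℕ} (hn : n < finrank ℝ W) (z : Fin n → W) :
    ∃ φ : W, ‖φ‖ = 1 ∧ ∀ i, ⟪φ, z i⟫_ℝ = 0 := by
  have : FiniteDimensional ℝ W := .of_finrank_pos (by lia)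
  have hspan : Submodule.span ℝ (range z) ≠ ⊤ := fun htop ↦ by
    have := finrank_range_le_card (R := ℝ) z
    rw [Set.finrank, htop, finrank_top, Fintype.card_fin] at this
    lia
  obtain ⟨φ, hφ, hφ0⟩ := Submodule.exists_mem_ne_zero_of_ne_bot
    (mt Submodule.orthogonal_eq_bot_iff.1 hspan)
  refine ⟨NormedSpace.normalize φ, NormedSpace.norm_normalize_eq_one_iff.2 hφ0, fun i ↦ ?_⟩
  have := Submodule.inner_left_of_mem_orthogonal (Submodule.subset_span (mem_range_self i)) hφ
  rw [NormedSpace.normalize, inner_smul_left, this, mul_zero]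

end Contacts

section Orientation

variable {W : Type*} [NormedAddCommGroup W] [InnerProductSpace ℝ W] {n : ℕ}

lemma continuous_volumeForm [Fact (finrank ℝ W = n)] (o : Orientation ℝ W (Fin n)) :
    Continuous o.volumeForm :=
  MultilinearMap.continuous_of_bound o.volumeForm.toMultilinearMap 1 fun v ↦ by
    simpa using o.abs_volumeForm_apply_le v

variable [Fact (finrank ℝ W = n + 1)] (o : Orientation ℝ W (Fin (n + 1))) {C : Fin n → Set W}

lemma volumeForm_ne_zero_of_linearIndependent {v : Fin (n + 1) → W} (hv : LinearIndependent ℝ v) :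
    o.volumeForm v ≠ 0 := by
  let b := o.finOrthonormalBasis n.succ_pos Fact.out
  let e := basisOfLinearIndependentOfCardEqFinrank hv
    ((Fintype.card_fin _).trans (Fact.out : finrank ℝ W = n + 1).symm)
  have he : b.toBasis.det v ≠ 0 := by
    simpa [e] using (b.toBasis.isUnit_det e).ne_zero
  rwa [← abs_ne_zero, o.volumeForm_robust' b, abs_ne_zero]

lemma volumeForm_vecCons_ne_zero (hI : IndependentTransversals C) {φ : W} (hφ : φ ≠ 0)
    {z : Fin n → W} (hz : z ∈ contacts C φ) : o.volumeForm (vecCons φ z) ≠ 0 :=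
  volumeForm_ne_zero_of_linearIndependent o
    (linearIndependent_vecCons_of_inner_eq_zero hφ (hI z hz.1) hz.2)

lemma volumeForm_pos_of_mem_contacts (hC : ∀ i, Convex ℝ (C i)) (hI : IndependentTransversals C)
    {φ : W} (hφ : φ ≠ 0) {z y : Fin n → W} (hz : z ∈ contacts C φ) (hy : y ∈ contacts C φ)
    (hpos : 0 < o.volumeForm (vecCons φ z)) : 0 < o.volumeForm (vecCons φ y) := by
  by_contra! hneg
  have hcont : Continuous fun x : Fin n → W ↦ o.volumeForm (vecCons φ x) :=
    (continuous_volumeForm o).comp (continuous_const.matrixVecCons continuous_id)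
  obtain ⟨x, hx, hx0⟩ := (convex_contacts hC φ).isPreconnected.intermediate_value hy hz
    hcont.continuousOn ⟨hneg, hpos.le⟩
  exact volumeForm_vecCons_ne_zero o hI hφ hx hx0

/-- No continuous selection of contacts along `θ` is needed: the parameters admitting a contact of
a given sign form a closed set, by compactness of the `C i`. -/
lemma volumeForm_pos_of_continuous (hC : ∀ i, Convex ℝ (C i)) (hK : ∀ i, IsCompact (C i))
    (hI : IndependentTransversals C) {X : Type*} [TopologicalSpace X] [T2Space X] [CompactSpace X]
    [PreconnectedSpace X] {θ : X → W} (hθ : Continuous θ) (hθ0 : ∀ t, θ t ≠ 0)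
    (hne : ∀ t, (contacts C (θ t)).Nonempty) {s t : X} {z y : Fin n → W}
    (hz : z ∈ contacts C (θ s)) (hy : y ∈ contacts C (θ t))
    (hpos : 0 < o.volumeForm (vecCons (θ s) z)) : 0 < o.volumeForm (vecCons (θ t) y) := by
  have hvol : Continuous fun p : X × (Fin n → W) ↦ o.volumeForm (vecCons (θ p.1) p.2) :=
    (continuous_volumeForm o).comp ((hθ.comp continuous_fst).matrixVecCons continuous_snd)
  let signed (S : Set ℝ) : Set (X × (Fin n → W)) :=
    {p | p.1 ∈ univ ∧ p.2 ∈ contacts C (θ p.1)} ∩ {p | o.volumeForm (vecCons (θ p.1) p.2) ∈ S}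
  have hclosed (S : Set ℝ) (hS : IsClosed S) : IsClosed (Prod.fst '' signed S) :=
    ((isCompact_setOf_mem_contacts isCompact_univ hK hθ).inter_right
      (hS.preimage hvol)).image continuous_fst |>.isClosed
  by_contra! hneg
  obtain ⟨-, -, ⟨⟨_, a⟩, ⟨⟨-, ha⟩, ha_pos⟩, rfl⟩, ⟨⟨r, b⟩, ⟨⟨-, hb⟩, hb_neg⟩, rfl⟩⟩ :=
    isPreconnected_closed_iff.1 isPreconnected_univ _ _ (hclosed (Ici 0) isClosed_Ici)
      (hclosed (Iic 0) isClosed_Iic)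
      (fun r _ ↦ (hne r).elim fun x hx ↦ (le_total 0 (o.volumeForm (vecCons (θ r) x))).imp
        (fun h ↦ ⟨(r, x), ⟨⟨trivial, hx⟩, h⟩, rfl⟩) fun h ↦ ⟨(r, x), ⟨⟨trivial, hx⟩, h⟩, rfl⟩)
      ⟨s, trivial, (s, z), ⟨⟨trivial, hz⟩, hpos.le⟩, rfl⟩
      ⟨t, trivial, (t, y), ⟨⟨trivial, hy⟩, hneg⟩, rfl⟩
  have ha_pos : 0 < o.volumeForm (vecCons (θ r) a) :=
    ha_pos.lt_of_ne' (volumeForm_vecCons_ne_zero o hI (hθ0 r) ha)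
  exact hb_neg.not_gt (volumeForm_pos_of_mem_contacts o hC hI (hθ0 r) ha hb ha_pos)

/-- Along the segment from `φ` to `-ψ` every functional has opposite signs at `y i` and `z i`, so
its hyperplane keeps meeting `[y i, z i]`; hence the transversals of `φ` and of `-ψ` have the same
orientation. -/
lemma sameRay_of_volumeForm_pos (hC : ∀ i, Convex ℝ (C i)) (hK : ∀ i, IsCompact (C i))
    (hI : IndependentTransversals C) {φ ψ : W} {z y : Fin n → W}
    (hz : z ∈ contacts C φ) (hy : y ∈ contacts C ψ) (hφ : 0 < o.volumeForm (vecCons φ z))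
    (hψ : 0 < o.volumeForm (vecCons ψ y)) (hsign : ∀ i, 0 ≤ ⟪φ, y i⟫_ℝ * ⟪ψ, z i⟫_ℝ) :
    SameRay ℝ φ ψ := by
  by_contra hray
  let θ (t : unitInterval) : W := (1 - t : ℝ) • φ - (t : ℝ) • ψ
  have hθ0 (t) : θ t ≠ 0 := fun h ↦ hray <| by
    have heq : (1 - t : ℝ) • φ = (t : ℝ) • ψ := sub_eq_zero.1 h
    rcases (unitInterval.nonneg t).eq_or_lt with ht0 | ht0
    · exact .inl (by simpa [← ht0] using heq)
    · rcases (unitInterval.le_one t).eq_or_lt with ht1 | ht1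
      · exact .inr (.inl (by simpa [ht1] using heq.symm))
      · exact .inr (.inr ⟨1 - t, t, sub_pos.2 ht1, ht0, heq⟩)
  have hθ : Continuous θ := by fun_prop
  have hne (t) : (contacts C (θ t)).Nonempty := by
    refine contacts_nonempty_iff.2 fun i ↦ ?_
    have hprod : ⟪θ t, y i⟫_ℝ * ⟪θ t, z i⟫_ℝ =
        -((1 - t) * t * (⟪φ, y i⟫_ℝ * ⟪ψ, z i⟫_ℝ)) := by
      simp only [θ, inner_sub_left, real_inner_smul_left, hy.2 i, hz.2 i]
      ring
    obtain ⟨x, hx, hx0⟩ := exists_mem_segment_apply_eq_zero (innerₛₗ ℝ (θ t))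
      (hprod.trans_le <| neg_nonpos.2 <| mul_nonneg
        (mul_nonneg (unitInterval.one_minus_nonneg t) (unitInterval.nonneg t)) (hsign i))
    exact ⟨x, (hC i).segment_subset (hy.1 i trivial) (hz.1 i trivial) hx, hx0⟩
  have hneg : 0 < o.volumeForm (vecCons (θ 1) y) :=
    volumeForm_pos_of_continuous o hC hK hI hθ hθ0 hne (s := 0) (t := 1) (z := z)
      (by simpa [θ] using hz) (by simpa [θ, contacts] using hy) (by simpa [θ] using hφ)
  have hθ1 : θ 1 = (-1 : ℝ) • ψ := by simp [θ]
  rw [hθ1, AlternatingMap.map_vecCons_smul, neg_one_smul] at hneg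
  linarith

/-- The unit normals `φ`, each paired with a transversal in `φᗮ` of nonnegative orientation, such
that `φ` is nonnegative on `C j` for `j ∈ J` and the transversal agrees with `z` outside `K`. The
induction on `J` that constructs supporting hyperplanes needs `K = J` and `K = insert i J`. -/
def orientedSupports (C : Fin n → Set W) (z : Fin n → W) (J K : Finset (Fin n)) :
    Set (W × (Fin n → W)) :=
  {p | ‖p.1‖ = 1 ∧ p.2 ∈ contacts C p.1 ∧ 0 ≤ o.volumeForm (vecCons p.1 p.2) ∧
    (∀ j ∈ J, ∀ x ∈ C j, 0 ≤ ⟪p.1, x⟫_ℝ) ∧ ∀ k ∉ K, p.2 k = z k}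

section OrientedSupports

variable {o}
variable (hC : ∀ i, Convex ℝ (C i)) (hK : ∀ i, IsCompact (C i)) (hI : IndependentTransversals C)
  {z : Fin n → W} {J : Finset (Fin n)} {i : Fin n}

include hC hK hI in
lemma orientedSupports_fst_eq {K : Finset (Fin n)} {p q : W × (Fin n → W)}
    (hp : p ∈ orientedSupports o C z J K) (hq : q ∈ orientedSupports o C z J K)
    (hsign : ∀ k ∈ K, k ∉ J → 0 ≤ ⟪p.1, q.2 k⟫_ℝ * ⟪q.1, p.2 k⟫_ℝ) : p.1 = q.1 := by
  obtain ⟨hp1, hpc, hpv, hpJ, hpz⟩ := hp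
  obtain ⟨hq1, hqc, hqv, hqJ, hqz⟩ := hq
  have hp0 : p.1 ≠ 0 := norm_ne_zero_iff.1 (hp1 ▸ one_ne_zero)
  have hq0 : q.1 ≠ 0 := norm_ne_zero_iff.1 (hq1 ▸ one_ne_zero)
  refine (sameRay_iff_of_norm_eq (hp1.trans hq1.symm)).1 <|
    sameRay_of_volumeForm_pos o hC hK hI hpc hqc
      (hpv.lt_of_ne' (volumeForm_vecCons_ne_zero o hI hp0 hpc))
      (hqv.lt_of_ne' (volumeForm_vecCons_ne_zero o hI hq0 hqc)) fun k ↦ ?_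
  by_cases hkJ : k ∈ J
  · exact mul_nonneg (hpJ k hkJ _ (hqc.1 k trivial)) (hqJ k hkJ _ (hpc.1 k trivial))
  by_cases hkK : k ∈ K
  · exact hsign k hkK hkJ
  · simp [hqz k hkK, ← hpz k hkK, hpc.2 k]

include hK in
variable (o z J) in
lemma isCompact_orientedSupports (K : Finset (Fin n)) :
    IsCompact (orientedSupports o C z J K) := by
  have : FiniteDimensional ℝ W := .of_fact_finrank_eq_succ n
  have hvol : Continuous fun p : W × (Fin n → W) ↦ o.volumeForm (vecCons p.1 p.2) :=
    (continuous_volumeForm o).comp (continuous_fst.matrixVecCons continuous_snd)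
  have hsupp : IsClosed {p : W × (Fin n → W) | ∀ j ∈ J, ∀ x ∈ C j, 0 ≤ ⟪p.1, x⟫_ℝ} := by
    simp only [ofPred_forall]
    exact isClosed_biInter fun j _ ↦ isClosed_biInter fun x _ ↦
      isClosed_le continuous_const (by fun_prop)
  have hfree : IsClosed {p : W × (Fin n → W) | ∀ k ∉ K, p.2 k = z k} := by
    simp only [ofPred_forall]
    exact isClosed_biInter fun k _ ↦ isClosed_eq (by fun_prop) continuous_const
  have heq : orientedSupports o C z J K =
      {p | p.1 ∈ Metric.sphere 0 1 ∧ p.2 ∈ contacts C p.1} ∩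
        ({p | 0 ≤ o.volumeForm (vecCons p.1 p.2)} ∩
          ({p | ∀ j ∈ J, ∀ x ∈ C j, 0 ≤ ⟪p.1, x⟫_ℝ} ∩ {p | ∀ k ∉ K, p.2 k = z k})) := by
    ext p
    simp [orientedSupports, and_assoc]
  rw [heq]
  exact (isCompact_setOf_mem_contacts (isCompact_sphere 0 1) hK continuous_id).inter_right
    ((isClosed_le continuous_const hvol).inter (hsupp.inter hfree))

variable (o) in
lemma orientedSupports_empty_nonempty (hz : z ∈ univ.pi C) :
    (orientedSupports o C z ∅ ∅).Nonempty := by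
  obtain ⟨φ, hφ, horth⟩ := exists_norm_eq_one_forall_inner_eq_zero
    (by simp [(Fact.out : finrank ℝ W = n + 1)]) z
  rcases le_total 0 (o.volumeForm (vecCons φ z)) with h | h
  · exact ⟨(φ, z), hφ, ⟨hz, horth⟩, h, by simp⟩
  · refine ⟨(-φ, z), by simpa, ⟨hz, by simpa⟩, ?_, by simp⟩
    rw [← neg_one_smul ℝ φ, AlternatingMap.map_vecCons_smul]
    simpa using h

section Selection

variable {p : W → W × (Fin n → W)}
  (hp : ∀ m ∈ C i, p m ∈ orientedSupports o C z J (insert i J) ∧ (p m).2 i = m)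
include hC hK hI hp

lemma orientedSupports_selection_fst_eq {m : W} (hm : m ∈ C i) {q : W × (Fin n → W)}
    (hq : q ∈ orientedSupports o C z J (insert i J))
    (h : 0 ≤ ⟪(p m).1, q.2 i⟫_ℝ * ⟪q.1, m⟫_ℝ) : (p m).1 = q.1 := by
  refine orientedSupports_fst_eq hC hK hI (hp m hm).1 hq fun k hk hkJ ↦ ?_
  rwa [(Finset.mem_insert.1 hk).resolve_right hkJ, (hp m hm).2]

lemma isSweep_orientedSupports_selection : IsSweep (C i) fun m ↦ innerₛₗ ℝ (p m).1 where
  convex := hC i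
  apply_self m hm := by simpa [(hp m hm).2] using (hp m hm).1.2.1.2 i
  eq_of_mul_nonneg x hx y hy hxy := congrArg _ <|
    orientedSupports_selection_fst_eq hC hK hI hp hx (hp y hy).1 <| by
      simpa only [(hp y hy).2, innerₛₗ_apply_apply] using hxy

lemma isCompact_orientedSupports_selection (x : W) :
    IsCompact {m ∈ C i | 0 ≤ ⟪(p m).1, x⟫_ℝ} := by
  have himage : {m ∈ C i | 0 ≤ ⟪(p m).1, x⟫_ℝ} =
      (fun q ↦ q.2 i) '' (orientedSupports o C z J (insert i J) ∩ {q | 0 ≤ ⟪q.1, x⟫_ℝ}) := by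
    ext m
    refine ⟨fun ⟨hm, hmx⟩ ↦ ⟨p m, ⟨(hp m hm).1, hmx⟩, (hp m hm).2⟩, ?_⟩
    rintro ⟨q, ⟨hq, hqx⟩, rfl⟩
    have hm : q.2 i ∈ C i := hq.2.1.1 i trivial
    have heq : (p (q.2 i)).1 = q.1 :=
      orientedSupports_selection_fst_eq hC hK hI hp hm hq (by simp [hq.2.1.2 i])
    exact ⟨hm, heq ▸ hqx⟩
  rw [himage]
  exact ((isCompact_orientedSupports o hK z J _).inter_right
    (isClosed_le continuous_const (by fun_prop))).image (by fun_prop)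

end Selection

include hC hK hI

/-- Moving the contact point `m` in `C i` and keeping the free coordinates fixed, the supports of
`C j` for `j ∈ J` sweep `C i` by hyperplanes; the lowest of them supports `C i` too. -/
lemma orientedSupports_insert_nonempty
    (ih : ∀ z ∈ univ.pi C, (orientedSupports o C z J J).Nonempty) (hi : i ∉ J)
    (hz : z ∈ univ.pi C) : (orientedSupports o C z (insert i J) (insert i J)).Nonempty := by
  have hselection (m : W) : ∃ p : W × (Fin n → W),
      m ∈ C i → p ∈ orientedSupports o C z J (insert i J) ∧ p.2 i = m := by
    by_cases hm : m ∈ C i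
    · obtain ⟨p, hp1, hpc, hpv, hpJ, hpz⟩ := ih (Function.update z i m)
        ((update_mem_pi_iff_of_mem hz).2 fun _ ↦ hm)
      refine ⟨p, fun _ ↦ ⟨⟨hp1, hpc, hpv, hpJ, fun k hk ↦ ?_⟩, by simpa using hpz i hi⟩⟩
      rw [Finset.mem_insert, not_or] at hk
      simpa [hk.1] using hpz k hk.2
    · exact ⟨0, fun h ↦ absurd h hm⟩
  choose p hp using hselection
  obtain ⟨m, hm, hmin⟩ := (isSweep_orientedSupports_selection hC hK hI hp).exists_forall_nonneg
    ⟨z i, hz i trivial⟩ fun x _ ↦ isCompact_orientedSupports_selection hC hK hI hp x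
  obtain ⟨⟨hp1, hpc, hpv, hpJ, hpz⟩, -⟩ := hp m hm
  refine ⟨p m, hp1, hpc, hpv, fun j hj ↦ ?_, hpz⟩
  rcases Finset.mem_insert.1 hj with rfl | hj
  · exact hmin
  · exact hpJ j hj

variable (o J) in
lemma orientedSupports_nonempty : ∀ z ∈ univ.pi C, (orientedSupports o C z J J).Nonempty := by
  induction J using Finset.induction_on with
  | empty => exact fun z hz ↦ orientedSupports_empty_nonempty o hz
  | insert i J hi ih => exact fun z hz ↦ orientedSupports_insert_nonempty hC hK hI ih hi hz

end OrientedSupports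

lemma existsUnique_orientedSupport (hC : ∀ i, Convex ℝ (C i)) (hK : ∀ i, IsCompact (C i))
    (hne : ∀ i, (C i).Nonempty) (hI : IndependentTransversals C) :
    ∃! φ, (‖φ‖ = 1 ∧ φ ∈ supportNormals C) ∧
      ∃ z ∈ contacts C φ, 0 ≤ o.volumeForm (vecCons φ z) := by
  obtain ⟨z₀, hz₀⟩ := univ_pi_nonempty_iff.2 hne
  have hiff (φ z) : (φ, z) ∈ orientedSupports o C z₀ .univ .univ ↔
      (‖φ‖ = 1 ∧ φ ∈ supportNormals C) ∧ z ∈ contacts C φ ∧ 0 ≤ o.volumeForm (vecCons φ z) :=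
    ⟨fun ⟨hφ, hz, hvol, hsupp, _⟩ ↦
        ⟨⟨hφ, ⟨z, hz⟩, fun i ↦ hsupp i (Finset.mem_univ i)⟩, hz, hvol⟩,
      fun ⟨⟨hφ, _, hsupp⟩, hz, hvol⟩ ↦ ⟨hφ, hz, hvol, fun i _ ↦ hsupp i, by simp⟩⟩
  obtain ⟨⟨φ, z⟩, hφ⟩ := orientedSupports_nonempty o hC hK hI .univ z₀ hz₀
  obtain ⟨hφ_mem, hz⟩ := (hiff φ z).1 hφ
  refine ⟨φ, ⟨hφ_mem, z, hz⟩, ?_⟩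
  rintro ψ ⟨hψ, y, hy, hvol⟩
  exact orientedSupports_fst_eq hC hK hI ((hiff ψ y).2 ⟨hψ, hy, hvol⟩) hφ (by simp)

lemma encard_supportNormals (hC : ∀ i, Convex ℝ (C i)) (hK : ∀ i, IsCompact (C i))
    (hne : ∀ i, (C i).Nonempty) (hI : IndependentTransversals C) :
    {φ | ‖φ‖ = 1 ∧ φ ∈ supportNormals C}.encard = 2 := by
  have : FiniteDimensional ℝ W := .of_fact_finrank_eq_succ n
  let o : Orientation ℝ W (Fin (n + 1)) :=
    ((stdOrthonormalBasis ℝ W).reindex (finCongr Fact.out)).toBasis.orientation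
  obtain ⟨φ, ⟨hφ, z, hz, hz_nonneg⟩, hφ_unique⟩ := existsUnique_orientedSupport o hC hK hne hI
  obtain ⟨ψ, ⟨hψ, y, hy, hy_nonneg⟩, hψ_unique⟩ :=
    existsUnique_orientedSupport (-o) hC hK hne hI
  have hφ0 : φ ≠ 0 := norm_ne_zero_iff.1 (hφ.1 ▸ one_ne_zero)
  have hφψ : φ ≠ ψ := by
    rintro rfl
    have hz_pos : 0 < o.volumeForm (vecCons φ z) :=
      hz_nonneg.lt_of_ne' (volumeForm_vecCons_ne_zero o hI hφ0 hz)
    have hy_pos := volumeForm_pos_of_mem_contacts o hC hI hφ0 hz hy hz_pos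
    rw [o.volumeForm_neg_orientation] at hy_nonneg
    exact (neg_nonneg.1 hy_nonneg).not_gt hy_pos
  rw [← encard_pair hφψ]
  congr 1
  ext χ
  rw [mem_insert_iff, mem_singleton_iff]
  refine ⟨fun hχ ↦ ?_, ?_⟩
  · obtain ⟨x, hx⟩ := hχ.2.1
    rcases le_total 0 (o.volumeForm (vecCons χ x)) with h | h
    · exact .inl (hφ_unique χ ⟨hχ, x, hx, h⟩)
    · refine .inr (hψ_unique χ ⟨hχ, x, hx, ?_⟩)
      simpa [o.volumeForm_neg_orientation] using h
  · rintro (rfl | rfl)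
    exacts [hφ, hψ]

end Orientation

section CommonTangents

variable {ι E : Type*} [NormedAddCommGroup E] [InnerProductSpace ℝ E]

/-- The pairs `(u, α)` with `‖u‖ = 1` whose hyperplane `⟪u, x⟫ = α` is tangent to every `P i`, with
`P a` above it for `a ∈ A` and `P b` below it for `b ∈ B`. -/
def commonTangents (P : ι → Set E) (A B : Finset ι) : Set (E × ℝ) :=
  {p | ‖p.1‖ = 1 ∧ (∀ i, ({x | ⟪p.1, x⟫_ℝ = p.2} ∩ P i).Nonempty) ∧
    (∀ a ∈ A, P a ⊆ {x | p.2 ≤ ⟪p.1, x⟫_ℝ}) ∧ (∀ b ∈ B, P b ⊆ {x | ⟪p.1, x⟫_ℝ ≤ p.2})}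

section Homogenization

/-- The normal of the linear hyperplane in `E × ℝ` spanned by `H × {1}`, where `H` is the affine
hyperplane `⟪p.1, x⟫ = p.2`. -/
def coneNormal : (E × ℝ) ≃ₗ[ℝ] WithLp 2 (E × ℝ) :=
  (LinearEquiv.refl ℝ E).prodCongr (LinearEquiv.neg ℝ) ≪≫ₗ (WithLp.linearEquiv 2 ℝ (E × ℝ)).symm

/-- The homogenization `(x, 1)` of `x`, with sign `s`. -/
def signedLift (s : ℝ) (x : E) : WithLp 2 (E × ℝ) :=
  s • WithLp.toLp 2 (x, 1)

lemma inner_coneNormal_signedLift (p : E × ℝ) (s : ℝ) (x : E) :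
    ⟪coneNormal p, signedLift s x⟫_ℝ = s * (⟪p.1, x⟫_ℝ - p.2) := by
  rw [signedLift, real_inner_smul_right]
  simp [coneNormal, WithLp.prod_inner_apply, sub_eq_add_neg]

lemma convex_image_signedLift {S : Set E} (hS : Convex ℝ S) (s : ℝ) :
    Convex ℝ (signedLift s '' S) := by
  have himage : signedLift s '' S =
      (s • (WithLp.linearEquiv 2 ℝ (E × ℝ)).symm.toLinearMap) '' S ×ˢ {(1 : ℝ)} := by
    rw [prod_singleton, image_image]
    rfl
  rw [himage]
  exact (hS.prod (convex_singleton 1)).linear_image _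

lemma continuous_signedLift (s : ℝ) : Continuous (signedLift s : E → WithLp 2 (E × ℝ)) := by
  unfold signedLift
  fun_prop

/-- The homogenizations of the sets `P i`, reflected in the origin for `i ∉ A`, so that the
hyperplanes separating `A` from its complement have all of them on the same side. -/
def signedLifts [DecidableEq ι] (P : ι → Set E) (A : Finset ι) (i : ι) : Set (WithLp 2 (E × ℝ)) :=
  signedLift (if i ∈ A then 1 else -1) '' P i

lemma contacts_signedLifts_nonempty_iff [DecidableEq ι] {P : ι → Set E} {A : Finset ι}
    {p : E × ℝ} : (contacts (signedLifts P A) (coneNormal p)).Nonempty ↔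
      ∀ i, ({x | ⟪p.1, x⟫_ℝ = p.2} ∩ P i).Nonempty := by
  have hsign (i) : (if i ∈ A then 1 else -1 : ℝ) ≠ 0 := by split_ifs <;> simp
  simp only [contacts_nonempty_iff, signedLifts, exists_mem_image,
    inner_coneNormal_signedLift, mul_eq_zero, hsign, false_or, sub_eq_zero]
  exact forall_congr' fun i ↦ exists_congr fun x ↦ and_comm

lemma mem_commonTangents_compl_iff [Fintype ι] [DecidableEq ι] {P : ι → Set E} {A : Finset ι}
    {p : E × ℝ} : p ∈ commonTangents P A Aᶜ ↔
      ‖p.1‖ = 1 ∧ coneNormal p ∈ supportNormals (signedLifts P A) := by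
  refine and_congr_right fun _ ↦ and_congr contacts_signedLifts_nonempty_iff.symm ?_
  simp only [signedLifts, forall_mem_image, inner_coneNormal_signedLift]
  refine ⟨fun ⟨hA, hB⟩ i x hx ↦ ?_, fun h ↦ ⟨fun i hi x hx ↦ ?_, fun i hi x hx ↦ ?_⟩⟩
  · split_ifs with hi
    · simpa using hA i hi hx
    · simpa using hB i (by simpa) hx
  · simpa [hi] using h i hx
  · simpa [Finset.mem_compl.1 hi] using h i hx

lemma linearIndependent_of_forall_exists_sign {ι V : Type*} [Finite ι] [AddCommGroup V]
    [Module ℝ V] {y : ι → V} (h : ∀ I : Finset ι, ∃ f : Dual ℝ V,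
      (∀ i ∈ I, f (y i) < 0) ∧ ∀ i ∉ I, 0 < f (y i)) : LinearIndependent ℝ y := by
  cases nonempty_fintype ι
  refine Fintype.linearIndependent_iff.2 fun c hc ↦ ?_
  obtain ⟨f, hneg, hpos⟩ := h {i | c i < 0}
  simp only [Finset.mem_filter_univ, not_lt] at hneg hpos
  have hsum : ∑ i, c i * f (y i) = 0 := by simpa using congrArg f hc
  have hnonneg (i) : 0 ≤ c i * f (y i) := by
    rcases lt_or_ge (c i) 0 with hi | hi
    · exact mul_nonneg_of_nonpos_of_nonpos hi.le (hneg i hi).le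
    · exact mul_nonneg hi (hpos i hi).le
  intro i
  have hi := (Finset.sum_eq_zero_iff_of_nonneg fun i _ ↦ hnonneg i).1 hsum i (Finset.mem_univ i)
  refine (mul_eq_zero.1 hi).resolve_right ?_
  rcases lt_or_ge (c i) 0 with hi | hi
  · exact (hneg i hi).ne
  · exact (hpos i hi).ne'

lemma encard_setOf_eq_one_of_homogeneous {V : Type*} [AddCommGroup V] [Module ℝ V] {S : Set V}
    (hS : ∀ c : ℝ, 0 < c → ∀ v ∈ S, c • v ∈ S) {f g : V → ℝ}
    (hf : ∀ c : ℝ, 0 < c → ∀ v, f (c • v) = c * f v)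
    (hg : ∀ c : ℝ, 0 < c → ∀ v, g (c • v) = c * g v) (hf_pos : ∀ v ∈ S, 0 < f v)
    (hg_pos : ∀ v ∈ S, 0 < g v) : {v ∈ S | f v = 1}.encard = {v ∈ S | g v = 1}.encard := by
  wlog hle : {v ∈ S | g v = 1}.encard ≤ {v ∈ S | f v = 1}.encard generalizing f g
  · exact (this hg hf hg_pos hf_pos (le_of_not_ge hle)).symm
  refine hle.antisymm' <| encard_le_encard_of_injOn (f := fun v ↦ (g v)⁻¹ • v) ?_ ?_
  · intro v ⟨hv, _⟩
    have hgv := hg_pos v hv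
    exact ⟨hS _ (inv_pos.2 hgv) v hv, by rw [hg _ (inv_pos.2 hgv), inv_mul_cancel₀ hgv.ne']⟩
  · intro v ⟨hv, hfv⟩ w ⟨hw, hfw⟩ (hvw : (g v)⁻¹ • v = (g w)⁻¹ • w)
    have hgv := inv_pos.2 (hg_pos v hv)
    have hgvw : (g v)⁻¹ = (g w)⁻¹ := by
      simpa [hf _ hgv, hf _ (inv_pos.2 (hg_pos w hw)), hfv, hfw] using congrArg f hvw
    rw [← hgvw] at hvw
    exact smul_right_injective V hgv.ne' hvw

lemma StronglySeparated.independentTransversals {d m : ℕ}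
    {P : Fin m → Set (EuclideanSpace ℝ (Fin d))} (h : StronglySeparated P) (A : Finset (Fin m)) :
    IndependentTransversals (signedLifts P A) := by
  intro y hy
  choose x hx hxy using fun i ↦ hy i trivial
  refine linearIndependent_of_forall_exists_sign fun I ↦ ?_
  obtain ⟨u, α, -, hlt, hgt⟩ := h {i | i ∈ I ↔ i ∈ A}
  simp only [Finset.mem_filter_univ] at hlt hgt
  refine ⟨innerₛₗ ℝ (coneNormal (u, α)), fun i hi ↦ ?_, fun i hi ↦ ?_⟩ <;>
    rw [← hxy i, innerₛₗ_apply_apply, inner_coneNormal_signedLift] <;> split_ifs with hiA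
  · linarith [hlt i (by tauto) _ (hx i)]
  · linarith [hgt i (by tauto) _ (hx i)]
  · linarith [hgt i (by tauto) _ (hx i)]
  · linarith [hlt i (by tauto) _ (hx i)]

lemma fst_ne_zero_of_coneNormal_mem [Nonempty ι] [DecidableEq ι] {P : ι → Set E} {A : Finset ι}
    {p : E × ℝ} (hp : p ≠ 0) (h : coneNormal p ∈ supportNormals (signedLifts P A)) : p.1 ≠ 0 := by
  intro h0
  obtain ⟨x, hx, -⟩ := contacts_signedLifts_nonempty_iff.1 h.1 (Classical.arbitrary ι)
  rw [mem_ofPred_eq, h0, inner_zero_left] at hx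
  exact hp (Prod.ext h0 hx.symm)

lemma encard_commonTangents_compl {d : ℕ} (hd : 0 < d) {P : Fin d → Set (EuclideanSpace ℝ (Fin d))}
    (hne : ∀ i, (P i).Nonempty) (hconv : ∀ i, Convex ℝ (P i)) (hcomp : ∀ i, IsCompact (P i))
    (hsep : StronglySeparated P) (A : Finset (Fin d)) : (commonTangents P A Aᶜ).encard = 2 := by
  have : Nonempty (Fin d) := ⟨⟨0, hd⟩⟩
  have : Fact (finrank ℝ (WithLp 2 (EuclideanSpace ℝ (Fin d) × ℝ)) = d + 1) :=
    ⟨by simp [← coneNormal.finrank_eq]⟩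
  let S : Set (EuclideanSpace ℝ (Fin d) × ℝ) :=
    {p | coneNormal p ∈ supportNormals (signedLifts P A) ∧ p ≠ 0}
  have hS (c : ℝ) (hc : 0 < c) (p) (hp : p ∈ S) : c • p ∈ S :=
    ⟨map_smul coneNormal c p ▸ smul_mem_supportNormals hp.1 hc, smul_ne_zero hc.ne' hp.2⟩
  calc (commonTangents P A Aᶜ).encard
    _ = {p ∈ S | ‖p.1‖ = 1}.encard := by
      congr 1
      ext p
      rw [mem_commonTangents_compl_iff]
      exact ⟨fun ⟨hp, hcone⟩ ↦ ⟨⟨hcone, by rintro rfl; simp at hp⟩, hp⟩,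
        fun ⟨⟨hcone, _⟩, hp⟩ ↦ ⟨hp, hcone⟩⟩
    _ = {p ∈ S | ‖coneNormal p‖ = 1}.encard :=
      encard_setOf_eq_one_of_homogeneous hS
        (fun c hc p ↦ by rw [Prod.smul_fst, norm_smul, Real.norm_of_nonneg hc.le])
        (fun c hc p ↦ by rw [map_smul, norm_smul, Real.norm_of_nonneg hc.le])
        (fun p hp ↦ norm_pos_iff.2 (fst_ne_zero_of_coneNormal_mem hp.2 hp.1))
        (fun p hp ↦ norm_pos_iff.2 (coneNormal.map_ne_zero_iff.2 hp.2))
    _ = (coneNormal ⁻¹' {φ | ‖φ‖ = 1 ∧ φ ∈ supportNormals (signedLifts P A)}).encard := by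
      congr 1
      ext p
      exact ⟨fun ⟨⟨hcone, _⟩, hp⟩ ↦ ⟨hp, hcone⟩,
        fun ⟨hp, hcone⟩ ↦ ⟨⟨hcone, by rintro rfl; simp at hp⟩, hp⟩⟩
    _ = 2 := by
      rw [encard_preimage_of_bijective coneNormal.bijective]
      exact encard_supportNormals (fun i ↦ convex_image_signedLift (hconv i) _)
        (fun i ↦ (hcomp i).image (continuous_signedLift _)) (fun i ↦ (hne i).image _)
        (hsep.independentTransversals A)

end Homogenization

section Hyperplanes

/-- The affine hyperplane `⟪u, x⟫ = α` of the pair `p = (u, α)`. -/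
def hyperplane (p : E × ℝ) : Set E :=
  {x | ⟪p.1, x⟫_ℝ = p.2}

lemma interior_hyperplane {p : E × ℝ} (hp : p.1 ≠ 0) : interior (hyperplane p) = ∅ := by
  have hopen : IsOpenMap (innerSL ℝ p.1) :=
    (innerSL ℝ p.1).isOpenMap_of_ne_zero fun h ↦
      hp (inner_self_eq_zero.1 (congrArg (· p.1) h))
  have := hopen.preimage_interior_eq_interior_preimage (innerSL ℝ p.1).continuous {p.2}
  rw [interior_singleton, preimage_empty] at this
  exact this.symm

lemma hyperplane_eq_iff {p q : E × ℝ} (hp : ‖p.1‖ = 1) (hq : ‖q.1‖ = 1) :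
    hyperplane p = hyperplane q ↔ p = q ∨ p = -q := by
  refine ⟨fun h ↦ ?_, ?_⟩
  · have hmem (v : E) : v + (p.2 - ⟪p.1, v⟫_ℝ) • p.1 ∈ hyperplane q := by
      rw [← h]
      simp [hyperplane, inner_add_right, real_inner_smul_right, hp]
    set k := ⟪q.1, p.1⟫_ℝ
    have h2 : q.2 = p.2 * k := by simpa [hyperplane, real_inner_smul_right] using (hmem 0).symm
    have h1 : q.1 = k • p.1 := ext_inner_right ℝ fun v ↦ by
      have hv : ⟪q.1, v⟫_ℝ + (p.2 - ⟪p.1, v⟫_ℝ) * k = q.2 := by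
        simpa [hyperplane, inner_add_right, real_inner_smul_right] using hmem v
      rw [real_inner_smul_left]
      linarith
    have hk1 : |k| = 1 := by simpa [h1, norm_smul, hp] using hq
    rcases eq_or_eq_neg_of_abs_eq hk1 with hk | hk
    · exact .inl (Prod.ext (by simp [h1, hk]) (by simp [h2, hk]))
    · exact .inr (Prod.ext (by simp [h1, hk]) (by simp [h2, hk]))
  · rintro (rfl | rfl)
    · rfl
    · simp [hyperplane]

lemma neg_mem_commonTangents_iff {P : ι → Set E} {A B : Finset ι} {p : E × ℝ} :
    -p ∈ commonTangents P B A ↔ p ∈ commonTangents P A B := by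
  simp [commonTangents, and_comm]

lemma subset_hyperplane_of_mem_commonTangents {P : ι → Set E} {A B A' B' : Finset ι} {p : E × ℝ}
    (h : p ∈ commonTangents P A B) (h' : p ∈ commonTangents P A' B') {i : ι} (hA : i ∈ A)
    (hB' : i ∈ B') : P i ⊆ hyperplane p :=
  fun _ hx ↦ (h'.2.2.2 i hB' hx).antisymm (h.2.2.1 i hA hx)

lemma pairwise_disjoint_commonTangents_compl [Fintype ι] [DecidableEq ι] {P : ι → Set E}
    (hint : ∀ i, (interior (P i)).Nonempty) :
    Pairwise (Function.onFun Disjoint fun A : Finset ι ↦ commonTangents P A Aᶜ) := by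
  intro A A' hne
  refine disjoint_left.2 fun p hp hp' ↦ hne ?_
  have hnot (i) : ¬ P i ⊆ hyperplane p := fun hsub ↦ by
    have hp0 : p.1 ≠ 0 := norm_ne_zero_iff.1 (hp.1 ▸ one_ne_zero)
    exact (hint i).ne_empty (subset_eq_empty (interior_mono hsub) (interior_hyperplane hp0))
  ext i
  by_contra! hi
  rcases hi with ⟨hi, hi'⟩ | ⟨hi, hi'⟩
  · exact hnot i (subset_hyperplane_of_mem_commonTangents hp hp' hi (Finset.mem_compl.2 hi'))
  · exact hnot i (subset_hyperplane_of_mem_commonTangents hp' hp hi' (Finset.mem_compl.2 hi))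

lemma encard_eq_encard_image_mul {α β : Type*} {f : α → β} {s : Set α} {k : ℕ∞} (hs : s.Finite)
    (hk : ∀ a ∈ s, {b ∈ s | f b = f a}.encard = k) : s.encard = (f '' s).encard * k := by
  classical
  lift s to Finset α using hs
  rw [← Finset.coe_image, encard_coe_eq_coe_finsetCard, encard_coe_eq_coe_finsetCard,
    Finset.card_eq_sum_card_image f s, Nat.cast_sum, ← nsmul_eq_mul, ← Finset.sum_const]
  refine Finset.sum_congr rfl ?_
  simp only [Finset.forall_mem_image]
  intro a ha
  rw [← hk a ha, ← encard_coe_eq_coe_finsetCard, Finset.coe_filter]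
  rfl

lemma encard_hyperplane_image [Fintype ι] [DecidableEq ι] {P : ι → Set E}
    (hint : ∀ i, (interior (P i)).Nonempty) (h : ∀ A, (commonTangents P A Aᶜ).encard = 2) :
    (hyperplane '' ⋃ A, commonTangents P A Aᶜ).encard = 2 ^ Fintype.card ι := by
  set U := ⋃ A, commonTangents P A Aᶜ with hU
  have hcard : U.encard = 2 ^ Fintype.card ι * 2 := by
    rw [hU, encard_iUnion_of_finite (pairwise_disjoint_commonTangents_compl hint)]
    simp [h, finsum_eq_sum_of_fintype]
  have hneg {p} (hp : p ∈ U) : -p ∈ U := by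
    obtain ⟨A, hA⟩ := mem_iUnion.1 hp
    exact mem_iUnion.2 ⟨Aᶜ, by simpa [neg_mem_commonTangents_iff] using hA⟩
  have hnorm {p} (hp : p ∈ U) : ‖p.1‖ = 1 := by
    obtain ⟨A, hA⟩ := mem_iUnion.1 hp
    exact hA.1
  have hfiber (p) (hp : p ∈ U) : {q ∈ U | hyperplane q = hyperplane p}.encard = 2 := by
    have : IsAddTorsionFree E := .of_isTorsionFree ℝ E
    have hp0 : p.1 ≠ 0 := norm_ne_zero_iff.1 (hnorm hp ▸ one_ne_zero)
    have hpair : {q ∈ U | hyperplane q = hyperplane p} = {p, -p} := by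
      ext q
      refine ⟨fun ⟨hq, hqp⟩ ↦ (hyperplane_eq_iff (hnorm hq) (hnorm hp)).1 hqp, ?_⟩
      have hnp := hneg hp
      rintro (rfl | rfl)
      · exact ⟨hp, rfl⟩
      · exact ⟨hnp, (hyperplane_eq_iff (hnorm hnp) (hnorm hp)).2 (.inr rfl)⟩
    rw [hpair, encard_pair fun h ↦ hp0 (self_eq_neg.1 (congrArg Prod.fst h))]
  have hfin : U.Finite :=
    encard_ne_top_iff.1 <| hcard ▸ ENat.natCast_ne_top (2 ^ Fintype.card ι * 2)
  have hcount := encard_eq_encard_image_mul hfin hfiber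
  rw [hcard] at hcount
  exact (ENat.mul_left_strictMono two_ne_zero (by simp)).injective hcount.symm

end Hyperplanes

end CommonTangents

lemma pos_of_affineSpan_iUnion_eq_top {d : ℕ} {P : Fin d → Set (EuclideanSpace ℝ (Fin d))}
    (h : affineSpan ℝ (⋃ i, P i) = ⊤) : 0 < d := by
  rcases d.eq_zero_or_pos with rfl | hd
  · rw [iUnion_of_empty, AffineSubspace.span_empty] at h
    exact absurd h (AffineSubspace.bot_ne_top ℝ _ _)
  · exact hd

theorem polytope_tangents_per_partition_and_distinct_general {d : ℕ} (hd : 0 < d)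
    (P : Fin d → Set (EuclideanSpace ℝ (Fin d)))
    (hne : ∀ i, (P i).Nonempty) (hconv : ∀ i, Convex ℝ (P i)) (hcomp : ∀ i, IsCompact (P i))
    (hsep : StronglySeparated P) :
    (∀ A B : Finset (Fin d), Disjoint A B → A ∪ B = Finset.univ →
      {p : EuclideanSpace ℝ (Fin d) × ℝ | ‖p.1‖ = 1 ∧
          (∀ i : Fin d, ({x | ⟪p.1, x⟫_ℝ = p.2} ∩ P i).Nonempty) ∧
          (∀ a ∈ A, P a ⊆ {x | p.2 ≤ ⟪p.1, x⟫_ℝ}) ∧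
          (∀ b ∈ B, P b ⊆ {x | ⟪p.1, x⟫_ℝ ≤ p.2})}.encard = 2) ∧
    ((∀ i, (interior (P i)).Nonempty) →
      {H : Set (EuclideanSpace ℝ (Fin d)) |
          ∃ (A B : Finset (Fin d)) (u : EuclideanSpace ℝ (Fin d)) (α : ℝ),
            Disjoint A B ∧ A ∪ B = Finset.univ ∧ ‖u‖ = 1 ∧ H = {x | ⟪u, x⟫_ℝ = α} ∧
            (∀ i : Fin d, (H ∩ P i).Nonempty) ∧
            (∀ a ∈ A, P a ⊆ {x | α ≤ ⟪u, x⟫_ℝ}) ∧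
            (∀ b ∈ B, P b ⊆ {x | ⟪u, x⟫_ℝ ≤ α})}.encard = 2 ^ d) := by
  have hcompl {A B : Finset (Fin d)} (hAB : Disjoint A B) (hU : A ∪ B = Finset.univ) : B = Aᶜ :=
    (IsCompl.compl_eq ⟨hAB, codisjoint_iff.2 hU⟩).symm
  have htwo (A : Finset (Fin d)) : (commonTangents P A Aᶜ).encard = 2 :=
    encard_commonTangents_compl hd hne hconv hcomp hsep A
  refine ⟨fun A B hAB hU ↦ hcompl hAB hU ▸ htwo A, fun hint ↦ ?_⟩
  refine (congrArg encard ?_).trans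
    ((encard_hyperplane_image hint htwo).trans (by rw [Fintype.card_fin]))
  ext H
  constructor
  · rintro ⟨A, B, u, α, hAB, hU, hu, rfl, hmeet, hA, hB⟩
    obtain rfl := hcompl hAB hU
    exact ⟨(u, α), mem_iUnion.2 ⟨A, hu, hmeet, hA, hB⟩, rfl⟩
  · rintro ⟨⟨u, α⟩, hp, rfl⟩
    obtain ⟨A, hu, hmeet, hA, hB⟩ := mem_iUnion.1 hp
    exact ⟨A, Aᶜ, u, α, disjoint_compl_right, Finset.union_compl A, hu, rfl, hmeet, hA, hB⟩

/-- For a strongly separated, affinely spanning family of `d` polytopes in `ℝ^d` and each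
partition `A ⊔ B = [d]`, there are exactly two oriented tangent hyperplanes separating `A`
from `B`; and if every polytope is full-dimensional, the `2^d` hyperplanes obtained from
all partitions are pairwise distinct as subsets of `ℝ^d`. -/
theorem polytope_tangents_per_partition_and_distinct {d : ℕ}
    (P : Fin d → Set (EuclideanSpace ℝ (Fin d)))
    (hpoly : ∀ i, ∃ V : Finset (EuclideanSpace ℝ (Fin d)),
      V.Nonempty ∧ P i = convexHull ℝ (V : Set _))
    (hspan : affineSpan ℝ (⋃ i, P i) = ⊤)
    (hsep : StronglySeparated P) :
    (∀ A B : Finset (Fin d), Disjoint A B → A ∪ B = Finset.univ →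
      {p : EuclideanSpace ℝ (Fin d) × ℝ | ‖p.1‖ = 1 ∧
          (∀ i : Fin d, ({x | ⟪p.1, x⟫_ℝ = p.2} ∩ P i).Nonempty) ∧
          (∀ a ∈ A, P a ⊆ {x | p.2 ≤ ⟪p.1, x⟫_ℝ}) ∧
          (∀ b ∈ B, P b ⊆ {x | ⟪p.1, x⟫_ℝ ≤ p.2})}.encard = 2) ∧
    ((∀ i, (interior (P i)).Nonempty) →
      {H : Set (EuclideanSpace ℝ (Fin d)) |
          ∃ (A B : Finset (Fin d)) (u : EuclideanSpace ℝ (Fin d)) (α : ℝ),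
            Disjoint A B ∧ A ∪ B = Finset.univ ∧ ‖u‖ = 1 ∧ H = {x | ⟪u, x⟫_ℝ = α} ∧
            (∀ i : Fin d, (H ∩ P i).Nonempty) ∧
            (∀ a ∈ A, P a ⊆ {x | α ≤ ⟪u, x⟫_ℝ}) ∧
            (∀ b ∈ B, P b ⊆ {x | ⟪u, x⟫_ℝ ≤ α})}.encard = 2 ^ d) := by
  choose V hV hP using hpoly
  refine polytope_tangents_per_partition_and_distinct_general
    (pos_of_affineSpan_iUnion_eq_top hspan) P (fun i ↦ ?_) (fun i ↦ ?_) (fun i ↦ ?_) hsep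
  all_goals rw [hP i]
  exacts [(hV i).to_set.convexHull, convex_convexHull ℝ _,
    (V i).finite_toSet.isCompact_convexHull ℝ]
end
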